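/- arXiv:2112.06526 — 4 statements merged into one kernel-verified Lean document; each statement's English description precedes it below -/
import Mathlib

section
/- Fix λ > 0, set p_n = λ/n, and fix a > 0. There exists a constant C' > 0 such that for every δ > 0 and all sequences (k_n), (w_n) of positive reals with w_n → 0, (log n)/(w_n² k_n^{1/3}) → 0 and (log w_n)/log(1/p_n) → 0, there exist a constant C > 0 and n₀ such that for all n ≥ n₀: P(G_{n,p_n} contains no (C(ψ_n + w_n), m_n)-near-clique | T ≥ a k_n) ≤ δ, where ψ_n := C' (log n)/(w_n² k_n^{1/3}) + log(C' w_n^{−5} (log(1/p_n))³)/log(1/p_n) and m_n := (1/2)·[6(a − 2w_n) k_n (1 − C k_n^{−1/3})]^{2/3}. -/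
open scoped BigOperators Classical
open Finset Filter

noncomputable section

/-- Number of edges of a finite simple graph. -/
def edgeCount {V : Type*} [Fintype V] (G : SimpleGraph V) : ℕ :=
  (Finset.univ.filter (fun e : Sym2 V => e ∈ G.edgeSet)).card

/-- Number of triangles (3-cliques) of a finite simple graph. -/
def triangleCount {V : Type*} [Fintype V] (G : SimpleGraph V) : ℕ :=
  (Finset.univ.filter (fun s : Finset V => G.IsNClique 3 s)).card

/-- Number of vertices lying in at least one triangle. -/
def vT {V : Type*} [Fintype V] (G : SimpleGraph V) : ℕ :=
  (Finset.univ.filter (fun v : V => ∃ u w : V, G.Adj v u ∧ G.Adj v w ∧ G.Adj u w)).card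

/-- Degree of a vertex. -/
def deg {V : Type*} [Fintype V] (G : SimpleGraph V) (v : V) : ℕ :=
  (Finset.univ.filter (fun u => G.Adj v u)).card

/-- Probability that the Erdős–Rényi random graph `G_{n,p}` equals the graph `G`. -/
def graphProb (n : ℕ) (p : ℝ) (G : SimpleGraph (Fin n)) : ℝ :=
  p ^ edgeCount G * (1 - p) ^ (n.choose 2 - edgeCount G)

/-- Probability of an event under the Erdős–Rényi measure. -/
def prob (n : ℕ) (p : ℝ) (A : Set (SimpleGraph (Fin n))) : ℝ :=
  ∑ G : SimpleGraph (Fin n), if G ∈ A then graphProb n p G else 0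

/-- Conditional probability `P(A | B)` (with the convention `0` when `P(B) = 0`). -/
def condProb (n : ℕ) (p : ℝ) (A B : Set (SimpleGraph (Fin n))) : ℝ :=
  prob n p (A ∩ B) / prob n p B

/-- Conditional expectation `E_G[f]` given that every edge of `G` is present. -/
def condExpect (n : ℕ) (p : ℝ) (G : SimpleGraph (Fin n)) (f : SimpleGraph (Fin n) → ℝ) : ℝ :=
  (∑ H : SimpleGraph (Fin n), if G ≤ H then graphProb n p H * f H else 0) /
    prob n p {H | G ≤ H}

/-- `E_G(T)`: conditional expectation of the number of triangles. -/
def condTri (n : ℕ) (p : ℝ) (G : SimpleGraph (Fin n)) : ℝ :=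
  condExpect n p G (fun H => (triangleCount H : ℝ))

/-- The variational quantity `Φ_{n,p,k}(a)`. -/
def Phi (n : ℕ) (p k a : ℝ) : ℝ :=
  sInf {x : ℝ | ∃ G : SimpleGraph (Fin n),
    a * k ≤ condTri n p G ∧ x = (edgeCount G : ℝ) * Real.log (1 / p)}

/-- A seed, with parameters `a, w, C, k` and edge probability `p`. -/
def IsSeed (n : ℕ) (p a w C k : ℝ) (G : SimpleGraph (Fin n)) : Prop :=
  (a - w) * k ≤ condTri n p G ∧
  (edgeCount G : ℝ) ≤ C * a * w⁻¹ * k ^ ((2 : ℝ) / 3) * Real.log (1 / p)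

/-- A core, with parameters `a, w, C, k` and edge probability `p`. -/
def IsCore (n : ℕ) (p a w C k : ℝ) (G : SimpleGraph (Fin n)) : Prop :=
  (a - 2 * w) * k ≤ condTri n p G ∧
  (edgeCount G : ℝ) ≤ C * a * w⁻¹ * k ^ ((2 : ℝ) / 3) * Real.log (1 / p) ∧
  ∀ e ∈ G.edgeSet,
    w ^ 2 * k ^ ((1 : ℝ) / 3) / (C * a * Real.log (1 / p)) ≤
      condTri n p G - condTri n p (G.deleteEdges {e})

/-- A `q`-basic graph. -/
def qBasic {V : Type*} [Fintype V] (q : ℕ) (G : SimpleGraph V) : Prop :=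
  vT G = q ∧ ∀ e ∈ G.edgeSet, vT (G.deleteEdges {e}) < q

/-- Containment of a `(δ, m)`-near-clique. -/
def containsNearClique {n : ℕ} (H : SimpleGraph (Fin n)) (δ m : ℝ) : Prop :=
  ∃ H' : SimpleGraph (Fin n), H' ≤ H ∧ 0 < edgeCount H' ∧
    ∀ v : Fin n, (∃ u, H'.Adj v u) →
      (1 - 4 * δ ^ ((1 : ℝ) / 2)) * (2 * m) ^ ((1 : ℝ) / 2) ≤ (deg H' v : ℝ)

/-- Partition function of the exponential random graph model tilted by `exp(b · V_T)`. -/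
def ergmZ (n : ℕ) (p b : ℝ) : ℝ :=
  ∑ G : SimpleGraph (Fin n), graphProb n p G * Real.exp (b * vT G)

/-- Probability of an event under the exponential random graph measure. -/
def ergmProb (n : ℕ) (p b : ℝ) (A : Set (SimpleGraph (Fin n))) : ℝ :=
  (∑ G : SimpleGraph (Fin n),
    if G ∈ A then graphProb n p G * Real.exp (b * vT G) else 0) / ergmZ n p b

theorem edgeCount_eq {V : Type*} [Fintype V] (G : SimpleGraph V) :
    edgeCount G = G.edgeFinset.card := by
  unfold edgeCount
  congr 1
  ext e
  simp

theorem edgeCount_mono {V : Type*} [Fintype V] {G H : SimpleGraph V} (h : G ≤ H) :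
    edgeCount G ≤ edgeCount H := by
  rw [edgeCount_eq, edgeCount_eq]
  exact Finset.card_le_card (SimpleGraph.edgeFinset_mono h)

theorem edgeCount_lt {V : Type*} [Fintype V] {G H : SimpleGraph V} (h : G < H) :
    edgeCount G < edgeCount H := by
  rw [edgeCount_eq, edgeCount_eq]
  exact Finset.card_lt_card (SimpleGraph.edgeFinset_ssubset_edgeFinset.2 h)

theorem edgeCount_le_choose {n : ℕ} (G : SimpleGraph (Fin n)) :
    edgeCount G ≤ n.choose 2 := by
  have h := edgeCount_mono (le_top : G ≤ ⊤)
  have h2 : edgeCount (⊤ : SimpleGraph (Fin n)) = n.choose 2 := by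
    have h3 := SimpleGraph.card_edgeFinset_top_eq_card_choose_two (V := Fin n)
    rw [Fintype.card_fin] at h3
    rw [edgeCount_eq, ← h3]
    congr!
  omega

theorem deg_eq {V : Type*} [Fintype V] (G : SimpleGraph V) (v : V) :
    deg G v = G.degree v := by
  unfold deg
  rw [← SimpleGraph.card_neighborFinset_eq_degree]
  congr 1
  ext e
  simp

theorem sum_deg {V : Type*} [Fintype V] (G : SimpleGraph V) :
    ∑ v, deg G v = 2 * edgeCount G := by
  rw [edgeCount_eq, ← SimpleGraph.sum_degrees_eq_twice_card_edges]
  exact Finset.sum_congr rfl fun v _ => deg_eq G v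

theorem graphProb_nonneg {n : ℕ} {p : ℝ} (h0 : 0 ≤ p) (h1 : p ≤ 1) (G : SimpleGraph (Fin n)) :
    0 ≤ graphProb n p G := by
  unfold graphProb
  have : 0 ≤ 1 - p := by linarith
  positivity

theorem prob_superset {n : ℕ} (p : ℝ) (G : SimpleGraph (Fin n)) :
    prob n p {H | G ≤ H} = p ^ edgeCount G := by
  unfold prob
  simp only [Set.mem_ofPred_eq]
  rw [← Finset.sum_filter]
  have hU : (⊤ : SimpleGraph (Fin n)).edgeFinset.card = n.choose 2 := by
    rw [SimpleGraph.card_edgeFinset_top_eq_card_choose_two]; simp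
  have hsub : ∀ H : SimpleGraph (Fin n), H.edgeFinset ⊆ (⊤ : SimpleGraph (Fin n)).edgeFinset :=
    fun H => SimpleGraph.edgeFinset_mono le_top
  set U := (⊤ : SimpleGraph (Fin n)).edgeFinset with hUdef
  have hUmem : ∀ e, e ∈ U ↔ ¬ e.IsDiag := by
    intro e; simp [hUdef]
  have key : ∑ H ∈ Finset.univ.filter (fun H : SimpleGraph (Fin n) => G ≤ H), graphProb n p H
      = ∑ S ∈ (U \ G.edgeFinset).powerset,
        p ^ edgeCount G * (p ^ S.card * (1 - p) ^ ((U \ G.edgeFinset).card - S.card)) := by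
    refine Finset.sum_nbij' (fun H => H.edgeFinset \ G.edgeFinset)
      (fun S => SimpleGraph.fromEdgeSet ((G.edgeFinset ∪ S : Finset (Sym2 (Fin n))) : Set (Sym2 (Fin n))))
      ?_ ?_ ?_ ?_ ?_
    · intro H hH
      rw [Finset.mem_powerset]
      exact Finset.sdiff_subset_sdiff (hsub H) le_rfl
    · intro S hS
      rw [Finset.mem_filter]
      refine ⟨Finset.mem_univ _, ?_⟩
      intro u v huv
      rw [SimpleGraph.fromEdgeSet_adj]
      refine ⟨?_, huv.ne⟩
      simp [huv]
    · intro H hH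
      rw [Finset.mem_filter] at hH
      have h2 := SimpleGraph.edgeFinset_mono hH.2
      rw [Finset.union_sdiff_of_subset h2]
      simp
    · intro S hS
      rw [Finset.mem_powerset] at hS
      ext e
      have : e ∈ S → e ∈ U \ G.edgeFinset := fun h => hS h
      simp only [Finset.mem_sdiff, hUmem, SimpleGraph.mem_edgeFinset,
        SimpleGraph.edgeSet_fromEdgeSet, Set.mem_sdiff, Finset.mem_coe, Finset.mem_union] at this ⊢
      simp only [Sym2.mem_diagSet]
      tauto
    · intro H hH
      rw [Finset.mem_filter] at hH
      have h2 := SimpleGraph.edgeFinset_mono hH.2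
      have h3 := Finset.card_sdiff_add_card_eq_card h2
      have h4 := Finset.card_sdiff_add_card_eq_card (hsub G)
      unfold graphProb
      rw [edgeCount_eq, edgeCount_eq, ← mul_assoc, ← pow_add]
      have := Finset.card_le_card (hsub H)
      congr 2 <;> omega
  rw [key, ← Finset.mul_sum, Finset.sum_pow_mul_eq_add_pow]
  simp

theorem tri_mem {V : Type*} (G : SimpleGraph V) (s : Finset V) :
    G.IsNClique 3 s ↔ s.card = 3 ∧ (∀ u ∈ s, ∀ v ∈ s, u ≠ v → G.Adj u v) := by
  rw [SimpleGraph.isNClique_iff, SimpleGraph.isClique_iff, and_comm]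
  rfl

theorem triangleCount_mono {V : Type*} [Fintype V] {G H : SimpleGraph V} (h : G ≤ H) :
    triangleCount G ≤ triangleCount H := by
  unfold triangleCount
  apply Finset.card_le_card
  intro s hs
  simp only [Finset.mem_filter, Finset.mem_univ, true_and] at hs ⊢
  exact hs.mono h

/-- triangles at a vertex -/
def triAt {V : Type*} [Fintype V] (G : SimpleGraph V) (v : V) : Finset (Finset V) :=
  Finset.univ.filter (fun s : Finset V => G.IsNClique 3 s ∧ v ∈ s)

theorem sum_triAt {V : Type*} [Fintype V] (G : SimpleGraph V) :
    ∑ v, (triAt G v).card = 3 * triangleCount G := by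
  unfold triAt triangleCount
  simp only [Finset.card_filter]
  rw [Finset.sum_comm, Finset.mul_sum]
  refine Finset.sum_congr rfl fun s _ => ?_
  by_cases h : G.IsNClique 3 s
  · simp [h, h.card_eq]
  · simp [h]

theorem triAt_le_choose {V : Type*} [Fintype V] (G : SimpleGraph V) (v : V) :
    (triAt G v).card ≤ (deg G v).choose 2 := by
  unfold deg
  rw [← Finset.card_powersetCard]
  refine Finset.card_le_card_of_injOn (fun s => s.erase v) ?_ ?_
  · intro s hs
    simp only [triAt, Finset.coe_filter, Finset.mem_univ, true_and, Set.mem_ofPred_eq] at hs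
    obtain ⟨h1, h2⟩ := hs
    rw [tri_mem] at h1
    rw [Finset.mem_coe, Finset.mem_powersetCard]
    refine ⟨?_, by rw [Finset.card_erase_of_mem h2, h1.1]⟩
    intro u hu
    rw [Finset.mem_erase] at hu
    simp only [Finset.mem_filter, Finset.mem_univ, true_and]
    exact h1.2 v h2 u hu.2 hu.1.symm
  · intro s hs t ht hst
    simp only [triAt, Finset.coe_filter, Finset.mem_univ, true_and, Set.mem_ofPred_eq] at hs ht
    simp only at hst
    rw [← Finset.insert_erase hs.2, ← Finset.insert_erase ht.2, hst]

theorem triAt_le_edge {V : Type*} [Fintype V] (G : SimpleGraph V) (v : V) :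
    (triAt G v).card ≤ edgeCount G := by
  rw [edgeCount_eq]
  refine le_trans ?_ (Finset.card_image_le (s := G.edgeFinset) (f := fun e => e.toFinset))
  refine Finset.card_le_card_of_injOn (fun s => s.erase v) ?_ ?_
  · intro s hs
    simp only [triAt, Finset.coe_filter, Finset.mem_univ, true_and, Set.mem_ofPred_eq] at hs
    obtain ⟨h1, h2⟩ := hs
    rw [tri_mem] at h1
    have h3 : (s.erase v).card = 2 := by rw [Finset.card_erase_of_mem h2, h1.1]
    obtain ⟨x, y, hxy, he⟩ := Finset.card_eq_two.1 h3
    have hx : x ∈ s.erase v := by rw [he]; simp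
    have hy : y ∈ s.erase v := by rw [he]; simp
    rw [Finset.mem_coe, Finset.mem_image]
    refine ⟨s(x, y), ?_, ?_⟩
    · rw [SimpleGraph.mem_edgeFinset, SimpleGraph.mem_edgeSet]
      exact h1.2 x (Finset.mem_of_mem_erase hx) y (Finset.mem_of_mem_erase hy) hxy
    · ext z; simp [he]
  · intro s hs t ht hst
    simp only [triAt, Finset.coe_filter, Finset.mem_univ, true_and, Set.mem_ofPred_eq] at hs ht
    simp only at hst
    rw [← Finset.insert_erase hs.2, ← Finset.insert_erase ht.2, hst]

theorem choose_two_le (d : ℕ) : ((d.choose 2 : ℕ) : ℝ) ≤ (d : ℝ) ^ 2 / 2 := by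
  rw [Nat.cast_choose_two]
  have : (0 : ℝ) ≤ d := Nat.cast_nonneg d
  nlinarith

/-- sharp edge-triangle inequality -/
theorem tri_le_edges {V : Type*} [Fintype V] (G : SimpleGraph V) :
    6 * (triangleCount G : ℝ) ≤ (2 * edgeCount G : ℝ) * Real.sqrt (2 * edgeCount G) := by
  have h1 : ∀ v, 2 * ((triAt G v).card : ℝ) ≤ (deg G v : ℝ) * Real.sqrt (2 * edgeCount G) := by
    intro v
    have ha : ((triAt G v).card : ℝ) ≤ (deg G v : ℝ) ^ 2 / 2 :=
      le_trans (by exact_mod_cast triAt_le_choose G v) (choose_two_le _)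
    have hb : ((triAt G v).card : ℝ) ≤ edgeCount G := by exact_mod_cast triAt_le_edge G v
    have hs := Real.sq_sqrt (show (0 : ℝ) ≤ 2 * edgeCount G by positivity)
    have hs0 := Real.sqrt_nonneg (2 * edgeCount G : ℝ)
    have hc : (0 : ℝ) ≤ (triAt G v).card := by positivity
    refine abs_le_of_sq_le_sq' ?_ (by positivity) |>.2
    rw [mul_pow, mul_pow, hs]
    nlinarith [mul_le_mul ha hb hc (by positivity)]
  have h2 := Finset.sum_le_sum (fun v (_ : v ∈ Finset.univ) => h1 v)
  rw [← Finset.mul_sum, ← Finset.sum_mul] at h2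
  have h3 : (∑ v, ((triAt G v).card : ℝ)) = 3 * triangleCount G := by exact_mod_cast sum_triAt G
  have h4 : (∑ v, (deg G v : ℝ)) = 2 * edgeCount G := by exact_mod_cast sum_deg G
  rw [h3, h4] at h2
  linarith

theorem del_edge {V : Type*} [Fintype V] (G : SimpleGraph V) (v : V) :
    edgeCount (G.deleteIncidenceSet v) + deg G v = edgeCount G := by
  have h := SimpleGraph.card_edgeFinset_deleteIncidenceSet G v
  have h2 : G.degree v ≤ G.edgeFinset.card := by
    rw [← SimpleGraph.card_incidenceFinset_eq_degree]
    exact Finset.card_le_card (SimpleGraph.incidenceFinset_subset G v)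
  have h3 : edgeCount (G.deleteIncidenceSet v) = G.edgeFinset.card - G.degree v := by
    rw [edgeCount_eq, ← h]
    congr!
  rw [h3, edgeCount_eq G, deg_eq]
  omega

theorem del_tri {V : Type*} [Fintype V] (G : SimpleGraph V) (v : V) :
    (triangleCount G : ℝ) ≤ triangleCount (G.deleteIncidenceSet v) + (deg G v : ℝ) ^ 2 / 2 := by
  have h : triangleCount G ≤ triangleCount (G.deleteIncidenceSet v) + (triAt G v).card := by
    unfold triangleCount triAt
    refine le_trans (Finset.card_le_card ?_) (Finset.card_union_le _ _)
    intro s hs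
    simp only [Finset.mem_filter, Finset.mem_univ, true_and, Finset.mem_union] at hs ⊢
    by_cases hv : v ∈ s
    · exact Or.inr ⟨hs, hv⟩
    · left
      rw [tri_mem] at hs ⊢
      refine ⟨hs.1, fun x hx y hy hxy => ?_⟩
      rw [SimpleGraph.deleteIncidenceSet_adj]
      exact ⟨hs.2 x hx y hy hxy, fun h => hv (h ▸ hx), fun h => hv (h ▸ hy)⟩
  have h2 : ((triAt G v).card : ℝ) ≤ (deg G v : ℝ) ^ 2 / 2 :=
      le_trans (by exact_mod_cast triAt_le_choose G v) (choose_two_le _)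
  have h3 : (triangleCount G : ℝ) ≤ triangleCount (G.deleteIncidenceSet v) + (triAt G v).card := by
    exact_mod_cast h
  linarith

/-- optimal subgraph: either large min degree, or the removal hits the barrier -/
theorem exists_opt {V : Type*} [Fintype V] (G : SimpleGraph V) (θ b : ℝ) (hb : b ≤ edgeCount G) :
    ∃ H ≤ G, b ≤ edgeCount H ∧
      (triangleCount G : ℝ) - θ * edgeCount G ≤ triangleCount H - θ * edgeCount H ∧
      ∀ v, 0 < deg H v → 2 * θ ≤ deg H v ∨ (edgeCount H : ℝ) < b + deg H v := by
  obtain ⟨H, hH, hmax⟩ := Finset.exists_max_image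
    (Finset.univ.filter (fun H : SimpleGraph V => H ≤ G ∧ b ≤ edgeCount H))
    (fun H => (triangleCount H : ℝ) - θ * edgeCount H) ⟨G, by simp [hb]⟩
  simp only [Finset.mem_filter, Finset.mem_univ, true_and] at hH hmax
  refine ⟨H, hH.1, hH.2, hmax G ⟨le_rfl, hb⟩, fun v hv => ?_⟩
  by_contra hcon
  push Not at hcon
  have e1 : (edgeCount (H.deleteIncidenceSet v) : ℝ) + deg H v = edgeCount H := by
    exact_mod_cast del_edge H v
  have e2 := del_tri H v
  have := hmax (H.deleteIncidenceSet v)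
    ⟨(SimpleGraph.deleteIncidenceSet_le H v).trans hH.1, by linarith⟩
  have hv' : (0 : ℝ) < deg H v := by exact_mod_cast hv
  rw [← e1] at this
  nlinarith [mul_pos hv' (sub_pos.2 hcon.1)]

/-- The complete graph on a vertex subset. -/
def cliqueOn {V : Type*} (s : Finset V) : SimpleGraph V where
  Adj u v := u ≠ v ∧ u ∈ s ∧ v ∈ s
  symm := ⟨fun _ _ h => ⟨h.1.symm, h.2.2, h.2.1⟩⟩
  loopless := ⟨fun _ h => h.1 rfl⟩

theorem cliqueOn_le {V : Type*} (G : SimpleGraph V) (s : Finset V) :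
    cliqueOn s ≤ G ↔ ∀ u ∈ s, ∀ v ∈ s, u ≠ v → G.Adj u v := by
  constructor
  · intro h u hu v hv huv
    exact h ⟨huv, hu, hv⟩
  · intro h u v huv
    exact h u huv.2.1 v huv.2.2 huv.1

theorem triangleCount_eq {V : Type*} [Fintype V] (G : SimpleGraph V) :
    triangleCount G =
      ((Finset.powersetCard 3 (Finset.univ : Finset V)).filter (fun s => cliqueOn s ≤ G)).card := by
  unfold triangleCount
  congr 1
  ext s
  simp [tri_mem, cliqueOn_le, Finset.mem_powersetCard]

theorem edgeCount_cliqueOn {V : Type*} [Fintype V] (s : Finset V) :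
    edgeCount (cliqueOn s) = s.card.choose 2 := by
  have h : edgeCount (cliqueOn s) = (s.sym2.filter (fun e => ¬ e.IsDiag)).card := by
    unfold edgeCount
    congr 1
    ext e
    induction e with | _ u v => 
    have h1 : s(u, v) ∈ (cliqueOn s).edgeSet ↔ u ≠ v ∧ u ∈ s ∧ v ∈ s := Iff.rfl
    rw [Finset.mem_filter, Finset.mem_filter, h1, Finset.mk_mem_sym2_iff, Sym2.mk_isDiag_iff]
    simp only [Finset.mem_univ, true_and]
    tauto
  rw [h, Finset.sym2_eq_image]
  rw [← Sym2.card_image_offDiag]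
  congr 1
  ext e
  induction e with | _ u v => 
  simp only [Finset.mem_filter, Finset.mem_image, Finset.mem_offDiag, Finset.mem_product, Prod.exists]
  constructor
  · rintro ⟨⟨x, y, h1, h2⟩, h3⟩
    refine ⟨x, y, ⟨h1.1, h1.2, ?_⟩, h2⟩
    rintro rfl
    rw [← h2] at h3
    exact h3 rfl
  · rintro ⟨x, y, h1, h2⟩
    refine ⟨⟨x, y, ⟨h1.1, h1.2.1⟩, h2⟩, ?_⟩
    rw [← h2]
    exact h1.2.2

theorem triangle_cost {n : ℕ} {p : ℝ} (h0 : 0 ≤ p) (h1 : p ≤ 1) (G : SimpleGraph (Fin n)) :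
    ∑ s ∈ Finset.powersetCard 3 (Finset.univ : Finset (Fin n)), p ^ edgeCount (G ⊔ cliqueOn s)
      ≤ p ^ edgeCount G * (triangleCount G + p * (edgeCount G * n) + (p * n) ^ 3) := by
  set P := Finset.powersetCard 3 (Finset.univ : Finset (Fin n)) with hP
  have hterm : ∀ s ∈ P, p ^ edgeCount (G ⊔ cliqueOn s) ≤
      p ^ edgeCount G * ((if cliqueOn s ≤ G then 1 else 0) +
        p * (if ∃ u ∈ s, ∃ v ∈ s, G.Adj u v then 1 else 0) + p ^ 3) := by
    intro s hs
    have hs3 : s.card = 3 := (Finset.mem_powersetCard.1 hs).2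
    have hpe : 0 ≤ p ^ edgeCount G := by positivity
    have hp3 : 0 ≤ p ^ 3 := by positivity
    by_cases c1 : cliqueOn s ≤ G
    · rw [sup_eq_left.2 c1, if_pos c1]
      have : 0 ≤ p * (if ∃ u ∈ s, ∃ v ∈ s, G.Adj u v then 1 else 0) := by
        split_ifs <;> simp [h0]
      nlinarith
    · rw [if_neg c1]
      by_cases c2 : ∃ u ∈ s, ∃ v ∈ s, G.Adj u v
      · rw [if_pos c2]
        have hlt : edgeCount G < edgeCount (G ⊔ cliqueOn s) := by
          apply edgeCount_lt
          exact left_lt_sup.2 c1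
        have := pow_le_pow_of_le_one h0 h1 (Nat.succ_le_of_lt hlt)
        rw [pow_succ] at this
        nlinarith
      · rw [if_neg c2]
        have hd : Disjoint (Finset.univ.filter (fun e => e ∈ G.edgeSet))
            (Finset.univ.filter (fun e => e ∈ (cliqueOn s).edgeSet)) := by
          rw [Finset.disjoint_left]
          intro e
          induction e with | _ u v => 
          intro he1 he2
          rw [Finset.mem_filter, SimpleGraph.mem_edgeSet] at he1 he2
          exact c2 ⟨u, he2.2.2.1, v, he2.2.2.2, he1.2⟩
        have hle : edgeCount G + 3 ≤ edgeCount (G ⊔ cliqueOn s) := by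
          have h3 : edgeCount (cliqueOn s) = 3 := by rw [edgeCount_cliqueOn, hs3]; rfl
          have hK : ∀ K : SimpleGraph (Fin n), G ≤ K → cliqueOn s ≤ K →
              edgeCount G + edgeCount (cliqueOn s) ≤ edgeCount K := by
            intro K hK1 hK2
            unfold edgeCount
            rw [← Finset.card_union_of_disjoint hd]
            apply Finset.card_le_card
            intro e he
            rw [Finset.mem_union, Finset.mem_filter, Finset.mem_filter] at he
            rw [Finset.mem_filter]
            refine ⟨Finset.mem_univ _, ?_⟩
            rcases he with he | he
            · exact SimpleGraph.edgeSet_mono hK1 he.2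
            · exact SimpleGraph.edgeSet_mono hK2 he.2
          have := hK _ (le_sup_left : G ≤ G ⊔ cliqueOn s) le_sup_right
          rwa [h3] at this
        have := pow_le_pow_of_le_one h0 h1 hle
        rw [pow_add] at this
        nlinarith
  refine (Finset.sum_le_sum hterm).trans ?_
  rw [← Finset.mul_sum, Finset.sum_add_distrib, Finset.sum_add_distrib, ← Finset.mul_sum,
    Finset.sum_boole, Finset.sum_boole, ← triangleCount_eq, Finset.sum_const, nsmul_eq_mul]
  have hA : (((P.filter (fun s => ∃ u ∈ s, ∃ v ∈ s, G.Adj u v)).card : ℕ) : ℝ) ≤ edgeCount G * n := by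
    have : (P.filter (fun s => ∃ u ∈ s, ∃ v ∈ s, G.Adj u v)).card ≤ edgeCount G * n := by
      rw [edgeCount_eq]
      have hc : (G.edgeFinset ×ˢ (Finset.univ : Finset (Fin n))).card = G.edgeFinset.card * n := by
        rw [Finset.card_product]; simp
      rw [← hc]
      refine le_trans (Finset.card_le_card ?_) (Finset.card_image_le
        (f := fun q : Sym2 (Fin n) × Fin n => insert q.2 q.1.toFinset))
      intro s hs
      obtain ⟨hs, u, hu, v, hv, huv⟩ := Finset.mem_filter.1 hs
      have hs3 : s.card = 3 := (Finset.mem_powersetCard.1 hs).2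
      have h4 : ((s.erase u).erase v).card = 1 := by
        rw [Finset.card_erase_of_mem (Finset.mem_erase.2 ⟨huv.ne.symm, hv⟩),
          Finset.card_erase_of_mem hu, hs3]
      obtain ⟨x, hx⟩ := Finset.card_eq_one.1 h4
      rw [Finset.mem_image]
      refine ⟨(s(u, v), x), ?_, ?_⟩
      · simp [huv]
      · ext z
        have hz : z ∈ ((s.erase u).erase v) ↔ z = x := by rw [hx]; simp
        simp only [Finset.mem_erase] at hz
        simp only [Finset.mem_insert, Sym2.mem_toFinset, Sym2.mem_iff]
        constructor
        · rintro (h | h | h)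
          · exact (hz.2 h).2.2
          · exact h ▸ hu
          · exact h ▸ hv
        · intro h
          by_cases h5 : z = u
          · tauto
          · by_cases h6 : z = v
            · tauto
            · exact Or.inl (hz.1 ⟨h6, h5, h⟩)
    exact_mod_cast this
  have hB : ((P.card : ℕ) : ℝ) ≤ (n : ℝ) ^ 3 := by
    rw [hP, Finset.card_powersetCard, Finset.card_univ, Fintype.card_fin]
    exact_mod_cast Nat.choose_le_pow n 3
  have hpe : 0 ≤ p ^ edgeCount G := by positivity
  apply mul_le_mul_of_nonneg_left _ hpe
  have := mul_le_mul_of_nonneg_left hA h0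
  have := mul_le_mul_of_nonneg_right hB (show 0 ≤ p ^ 3 by positivity)
  rw [mul_pow]
  linarith

/-- truncated moment -/
def mom (n : ℕ) (p : ℝ) (A : Set (SimpleGraph (Fin n))) (j : ℕ) (G : SimpleGraph (Fin n)) : ℝ :=
  ∑ H : SimpleGraph (Fin n), if G ≤ H ∧ H ∈ A then graphProb n p H * (triangleCount H : ℝ) ^ j else 0

theorem mom_succ {n : ℕ} (p : ℝ) (A : Set (SimpleGraph (Fin n))) (j : ℕ) (G : SimpleGraph (Fin n)) :
    mom n p A (j + 1) G =
      ∑ s ∈ Finset.powersetCard 3 (Finset.univ : Finset (Fin n)), mom n p A j (G ⊔ cliqueOn s) := by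
  unfold mom
  rw [Finset.sum_comm]
  refine Finset.sum_congr rfl fun H _ => ?_
  by_cases h : G ≤ H ∧ H ∈ A
  · rw [if_pos h]
    have : ∀ s, (G ⊔ cliqueOn s ≤ H ∧ H ∈ A) ↔ cliqueOn s ≤ H := by
      intro s; rw [sup_le_iff]; tauto
    simp only [this]
    rw [← Finset.sum_filter, Finset.sum_const, ← triangleCount_eq, nsmul_eq_mul, pow_succ]
    ring
  · rw [if_neg h]
    symm
    apply Finset.sum_eq_zero
    intro s _
    rw [if_neg]
    rw [sup_le_iff]
    tauto

theorem mom_le {n : ℕ} {p : ℝ} (h0 : 0 ≤ p) (h1 : p ≤ 1) (A : Set (SimpleGraph (Fin n)))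
    (E : ℕ) (τ X : ℝ) (hX : 0 ≤ X)
    (hA : ∀ H ∈ A, ∀ G ≤ H, edgeCount G ≤ E → (triangleCount G : ℝ) < τ)
    (hτ : τ + p * (E * n) + (p * n) ^ 3 ≤ X) (j : ℕ) :
    ∀ G : SimpleGraph (Fin n), edgeCount G + 3 * j ≤ E → mom n p A j G ≤ p ^ edgeCount G * X ^ j := by
  induction j with
  | zero =>
    intro G _
    rw [← prob_superset]
    unfold mom prob
    simp only [pow_zero, mul_one]
    apply Finset.sum_le_sum
    intro H _
    have := graphProb_nonneg h0 h1 H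
    by_cases c : G ≤ H
    · by_cases d : H ∈ A <;> simp [c, d, this]
    · simp [c]
  | succ j ih =>
    intro G hG
    by_cases hT : (triangleCount G : ℝ) < τ
    · rw [mom_succ]
      have hle : ∀ s ∈ Finset.powersetCard 3 (Finset.univ : Finset (Fin n)),
          mom n p A j (G ⊔ cliqueOn s) ≤ p ^ edgeCount (G ⊔ cliqueOn s) * X ^ j := by
        intro s hs
        apply ih
        have hs3 : s.card = 3 := (Finset.mem_powersetCard.1 hs).2
        have h3 : edgeCount (cliqueOn s) = 3 := by rw [edgeCount_cliqueOn, hs3]; rfl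
        have : edgeCount (G ⊔ cliqueOn s) ≤ edgeCount G + 3 := by
          rw [← h3]
          unfold edgeCount
          refine le_trans (Finset.card_le_card ?_) (Finset.card_union_le _ _)
          intro e
          simp
        omega
      refine (Finset.sum_le_sum hle).trans ?_
      rw [← Finset.sum_mul]
      have hc := triangle_cost h0 h1 G
      have hE : (edgeCount G : ℝ) ≤ E := by
        have : edgeCount G ≤ E := by omega
        exact_mod_cast this
      have hE2 : p * (edgeCount G * n) ≤ p * (E * n) := by gcongr
      rw [pow_succ, mul_comm (X ^ j), ← mul_assoc]
      apply mul_le_mul_of_nonneg_right _ (by positivity)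
      refine hc.trans ?_
      apply mul_le_mul_of_nonneg_left _ (by positivity)
      linarith
    · have hz : mom n p A (j + 1) G = 0 := by
        unfold mom
        apply Finset.sum_eq_zero
        intro H _
        rw [if_neg]
        rintro ⟨h3, h4⟩
        exact hT (hA H h4 G h3 (by omega))
      rw [hz]
      positivity

theorem prob_mono {n : ℕ} {p : ℝ} (h0 : 0 ≤ p) (h1 : p ≤ 1) {A B : Set (SimpleGraph (Fin n))}
    (h : A ⊆ B) : prob n p A ≤ prob n p B := by
  unfold prob
  apply Finset.sum_le_sum
  intro H _
  have := graphProb_nonneg h0 h1 H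
  by_cases c : H ∈ A
  · simp [c, h c]
  · by_cases d : H ∈ B <;> simp [c, d, this]

theorem prob_union {n : ℕ} {p : ℝ} (h0 : 0 ≤ p) (h1 : p ≤ 1) (A B : Set (SimpleGraph (Fin n))) :
    prob n p (A ∪ B) ≤ prob n p A + prob n p B := by
  unfold prob
  rw [← Finset.sum_add_distrib]
  apply Finset.sum_le_sum
  intro H _
  have := graphProb_nonneg h0 h1 H
  by_cases c : H ∈ A <;> by_cases d : H ∈ B <;> simp [c, d, this]

theorem prob_markov {n : ℕ} {p : ℝ} (h0 : 0 ≤ p) (h1 : p ≤ 1) (A : Set (SimpleGraph (Fin n)))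
    (j E : ℕ) (τ X t : ℝ) (hX : 0 ≤ X) (ht : 0 < t)
    (hA : ∀ H ∈ A, ∀ G ≤ H, edgeCount G ≤ E → (triangleCount G : ℝ) < τ)
    (hτ : τ + p * (E * n) + (p * n) ^ 3 ≤ X) (hj : 3 * j ≤ E) :
    prob n p (A ∩ {H | t ≤ (triangleCount H : ℝ)}) ≤ (X / t) ^ j := by
  have hb : edgeCount (⊥ : SimpleGraph (Fin n)) = 0 := by
    unfold edgeCount; simp
  have h2 := mom_le h0 h1 A E τ X hX hA hτ j ⊥ (by omega)
  rw [hb, pow_zero, one_mul] at h2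
  rw [div_pow, le_div_iff₀ (by positivity)]
  refine le_trans ?_ h2
  unfold prob mom
  rw [Finset.sum_mul]
  apply Finset.sum_le_sum
  intro H _
  have hg := graphProb_nonneg h0 h1 H
  by_cases c : H ∈ A
  · by_cases d : t ≤ (triangleCount H : ℝ)
    · simp only [Set.mem_inter_iff, c, Set.mem_ofPred_eq, d, and_self, if_true, bot_le]
      gcongr
    · simp only [Set.mem_inter_iff, c, Set.mem_ofPred_eq, d, and_false, if_false, bot_le, and_self, if_true]
      rw [zero_mul]
      positivity
  · simp [c]

theorem prob_exists_le {n : ℕ} {p : ℝ} (h0 : 0 ≤ p) (h1 : p ≤ 1) (S : Finset (SimpleGraph (Fin n))) :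
    prob n p {H | ∃ G ∈ S, G ≤ H} ≤ ∑ G ∈ S, p ^ edgeCount G := by
  simp only [← prob_superset]
  unfold prob
  rw [Finset.sum_comm]
  apply Finset.sum_le_sum
  intro H _
  have hg := graphProb_nonneg h0 h1 H
  simp only [Set.mem_ofPred_eq]
  have hnn : ∀ G ∈ S, 0 ≤ (if G ≤ H then graphProb n p H else 0) := by
    intro G _; split_ifs <;> simp [hg]
  by_cases c : ∃ G ∈ S, G ≤ H
  · rw [if_pos c]
    obtain ⟨G, hG, hGH⟩ := c
    refine le_trans ?_ (Finset.single_le_sum hnn hG)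
    rw [if_pos hGH]
  · rw [if_neg c]
    exact Finset.sum_nonneg hnn

theorem prob_lower {n : ℕ} {p : ℝ} (h0 : 0 ≤ p) (h1 : p ≤ 1) (r : ℕ) (hr : r ≤ n) (t : ℝ)
    (ht : t ≤ (r.choose 3 : ℕ)) :
    p ^ (r.choose 2) ≤ prob n p {H | t ≤ (triangleCount H : ℝ)} := by
  obtain ⟨s, hs, hsr⟩ := Finset.exists_subset_card_eq
    (show r ≤ (Finset.univ : Finset (Fin n)).card by simpa using hr)
  rw [← hsr, ← edgeCount_cliqueOn, ← prob_superset]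
  apply prob_mono h0 h1
  intro H hH
  simp only [Set.mem_ofPred_eq] at hH ⊢
  refine ht.trans ?_
  have : r.choose 3 ≤ triangleCount H := by
    rw [← hsr, ← Finset.card_powersetCard, triangleCount_eq]
    apply Finset.card_le_card
    intro x hx
    rw [Finset.mem_powersetCard] at hx
    rw [Finset.mem_filter, Finset.mem_powersetCard]
    refine ⟨⟨Finset.subset_univ _, hx.2⟩, le_trans ?_ hH⟩
    intro u v huv
    exact ⟨huv.1, hx.1 huv.2.1, hx.1 huv.2.2⟩
  exact_mod_cast this

theorem triangleCount_le_choose {n : ℕ} (H : SimpleGraph (Fin n)) :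
    triangleCount H ≤ n.choose 3 := by
  rw [triangleCount_eq]
  refine (Finset.card_filter_le _ _).trans ?_
  simp

theorem supp_card {n : ℕ} (G : SimpleGraph (Fin n)) (D : ℝ) (hD : 0 < D)
    (h : ∀ v, 0 < deg G v → D ≤ deg G v) :
    (Finset.univ.filter (fun v => 0 < deg G v)).card ≤ ⌊2 * (edgeCount G : ℝ) / D⌋₊ := by
  apply Nat.le_floor
  rw [le_div_iff₀ hD]
  have h1 : (∑ v, (deg G v : ℝ)) = 2 * edgeCount G := by exact_mod_cast sum_deg G
  rw [← h1, ← nsmul_eq_mul]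
  refine le_trans (Finset.card_nsmul_le_sum _ (fun v => (deg G v : ℝ)) _ ?_)
    (Finset.sum_le_sum_of_subset_of_nonneg (Finset.filter_subset _ _) ?_)
  · intro v hv
    exact h v (Finset.mem_filter.1 hv).2
  · intros; positivity

theorem adj_deg_pos {V : Type*} [Fintype V] {G : SimpleGraph V} {u v : V} (h : G.Adj u v) :
    0 < deg G u := by
  unfold deg
  exact Finset.card_pos.2 ⟨v, by simp [h]⟩

theorem count_aux {n m v : ℕ} (f : Fin v → Fin n) :
    (Finset.univ.filter (fun G : SimpleGraph (Fin n) => edgeCount G = m ∧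
      ∀ x, 0 < deg G x → ∃ i, f i = x)).card ≤ (v ^ 2).choose m := by
  let P : Finset (Sym2 (Fin n)) := (Finset.univ : Finset (Fin v × Fin v)).image (fun q => s(f q.1, f q.2))
  have hP : P.card ≤ v ^ 2 := by
    refine Finset.card_image_le.trans ?_
    simp [sq]
  refine le_trans ?_ (Nat.choose_le_choose m hP)
  rw [← Finset.card_powersetCard]
  refine Finset.card_le_card_of_injOn (fun G => G.edgeFinset) ?_ ?_
  · intro G hG
    simp only [Finset.coe_filter, Finset.mem_univ, true_and, Set.mem_ofPred_eq] at hG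
    rw [Finset.mem_coe, Finset.mem_powersetCard]
    refine ⟨?_, by rw [← hG.1, edgeCount_eq]⟩
    intro e
    induction e with | _ x y => 
    intro he
    rw [SimpleGraph.mem_edgeFinset, SimpleGraph.mem_edgeSet] at he
    obtain ⟨i, hi⟩ := hG.2 x (adj_deg_pos he)
    obtain ⟨j, hj⟩ := hG.2 y (adj_deg_pos he.symm)
    exact Finset.mem_image.2 ⟨(i, j), Finset.mem_univ _, by simp [hi, hj]⟩
  · intro G _ H _ h
    exact SimpleGraph.edgeFinset_inj.1 h

theorem count_nat {n m : ℕ} (hm : 0 < m) (D : ℝ) (hD : 0 < D) :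
    (Finset.univ.filter (fun G : SimpleGraph (Fin n) => edgeCount G = m ∧
      ∀ x, 0 < deg G x → D ≤ deg G x)).card ≤
      n ^ ⌊2 * (m : ℝ) / D⌋₊ * ((⌊2 * (m : ℝ) / D⌋₊) ^ 2).choose m := by
  set v := ⌊2 * (m : ℝ) / D⌋₊ with hv
  have hsub : (Finset.univ.filter (fun G : SimpleGraph (Fin n) => edgeCount G = m ∧
      ∀ x, 0 < deg G x → D ≤ deg G x)) ⊆
      (Finset.univ : Finset (Fin v → Fin n)).biUnion (fun f =>
        Finset.univ.filter (fun G : SimpleGraph (Fin n) => edgeCount G = m ∧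
      ∀ x, 0 < deg G x → ∃ i, f i = x)) := by
    intro G hG
    simp only [Finset.mem_filter, Finset.mem_univ, true_and] at hG
    simp only [Finset.mem_biUnion, Finset.mem_filter, Finset.mem_univ, true_and]
    have hs := supp_card G D hD hG.2
    rw [hG.1, ← hv] at hs
    have hc : Fintype.card {x // 0 < deg G x} ≤ Fintype.card (Fin v) := by
      rw [Fintype.card_subtype, Fintype.card_fin]; exact hs
    obtain ⟨e⟩ := Function.Embedding.nonempty_of_card_le hc
    have hne : Nonempty {x // 0 < deg G x} := by
      by_contra hno
      have : ∑ x, deg G x = 0 := by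
        apply Finset.sum_eq_zero
        intro x _
        by_contra hx
        exact hno ⟨⟨x, Nat.pos_of_ne_zero hx⟩⟩
      rw [sum_deg] at this
      omega
    refine ⟨fun i => (Function.invFun e i).1, hG.1, fun x hx => ?_⟩
    obtain ⟨i, hi⟩ := Function.invFun_surjective e.injective ⟨x, hx⟩
    exact ⟨i, congrArg Subtype.val hi⟩
  refine (Finset.card_le_card hsub).trans (Finset.card_biUnion_le.trans ?_)
  refine (Finset.sum_le_card_nsmul _ _ _ (fun f _ => count_aux f)).trans ?_
  simp

theorem count_real {n m : ℕ} (hn : 0 < n) (hm : 0 < m) (D E : ℝ) (hD : 0 < D) (hE : (m : ℝ) ≤ E) :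
    ((Finset.univ.filter (fun G : SimpleGraph (Fin n) => edgeCount G = m ∧
      ∀ x, 0 < deg G x → D ≤ deg G x)).card : ℝ) ≤
      Real.exp (m * (2 * Real.log n / D + 1 + Real.log (4 * E / D ^ 2))) := by
  have h1 := count_nat (n := n) hm D hD
  have h1' : ((Finset.univ.filter (fun G : SimpleGraph (Fin n) => edgeCount G = m ∧
      ∀ x, 0 < deg G x → D ≤ deg G x)).card : ℝ) ≤
      (n : ℝ) ^ ⌊2 * (m : ℝ) / D⌋₊ * (((⌊2 * (m : ℝ) / D⌋₊) ^ 2).choose m : ℕ) := by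
    exact_mod_cast h1
  refine h1'.trans ?_
  have hm' : (0 : ℝ) < m := by exact_mod_cast hm
  have hfl : ((⌊2 * (m : ℝ) / D⌋₊ : ℕ) : ℝ) ≤ 2 * m / D := Nat.floor_le (by positivity)
  have hn1 : (1 : ℝ) ≤ n := by exact_mod_cast hn
  have hlog : 0 ≤ Real.log n := Real.log_nonneg hn1
  have hA : (n : ℝ) ^ ⌊2 * (m : ℝ) / D⌋₊ ≤ Real.exp (m * (2 * Real.log n / D)) := by
    rw [← Real.exp_log (show (0 : ℝ) < n by linarith), ← Real.exp_nat_mul, Real.exp_le_exp,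
      Real.log_exp]
    calc _ ≤ 2 * m / D * Real.log n := by gcongr
      _ = _ := by ring
  have hEpos : 0 < E := by linarith
  have hB : ((((⌊2 * (m : ℝ) / D⌋₊) ^ 2).choose m : ℕ) : ℝ) ≤
      Real.exp (m * (1 + Real.log (4 * E / D ^ 2))) := by
    refine (Nat.choose_le_pow_div m _).trans ?_
    have h3 := Real.pow_div_factorial_le_exp (m : ℝ) hm'.le m
    have h4 : (((⌊2 * (m : ℝ) / D⌋₊ ^ 2 : ℕ) : ℝ)) ^ m ≤ (4 * E / D ^ 2) ^ m * (m : ℝ) ^ m := by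
      rw [← mul_pow]
      push_cast
      gcongr
      calc _ ≤ (2 * (m : ℝ) / D) ^ 2 := by gcongr
        _ = 4 * m / D ^ 2 * m := by field_simp; ring
        _ ≤ 4 * E / D ^ 2 * m := by gcongr
    calc _ ≤ (4 * E / D ^ 2) ^ m * (m : ℝ) ^ m / (m.factorial : ℝ) := by gcongr
      _ = (4 * E / D ^ 2) ^ m * ((m : ℝ) ^ m / (m.factorial : ℝ)) := by ring
      _ ≤ (4 * E / D ^ 2) ^ m * Real.exp m := by gcongr
      _ = _ := by
        rw [mul_add, Real.exp_add, mul_one, mul_comm, Real.exp_nat_mul, Real.exp_log (by positivity)]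
  calc _ ≤ Real.exp (m * (2 * Real.log n / D)) * Real.exp (m * (1 + Real.log (4 * E / D ^ 2))) := by
        gcongr
    _ = _ := by rw [← Real.exp_add]; congr 1; ring

set_option maxHeartbeats 1000000 in
/-- stability -/
theorem stability {V : Type*} [Fintype V] (G : SimpleGraph V) (K y s : ℝ) (hK : 0 < K) (hy : 0 < y)
    (hs : 0 < s) (h1 : (4 * K + 1) * y < 1) (hsy : 4 ≤ y * s)
    (hT : (1 - K * y ^ 2) * s ^ 3 ≤ 6 * triangleCount G)
    (hE : 2 * (edgeCount G : ℝ) ≤ (1 + K * y ^ 2) * s ^ 2) :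
    ∃ H ≤ G, 0 < edgeCount H ∧ ∀ v, 0 < deg H v → (1 - (4 * K + 1) * y) * s ≤ deg H v := by
  -- normalized edge-triangle inequality
  have tri : ∀ H : SimpleGraph V, ∃ u : ℝ, 0 ≤ u ∧ 2 * (edgeCount H : ℝ) = u ^ 2 * s ^ 2 ∧
      6 * (triangleCount H : ℝ) ≤ u ^ 3 * s ^ 3 := by
    intro H
    have h := tri_le_edges H
    have h2 := Real.sq_sqrt (show (0 : ℝ) ≤ 2 * edgeCount H by positivity)
    have h3 := Real.sqrt_nonneg (2 * edgeCount H : ℝ)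
    set q := Real.sqrt (2 * edgeCount H : ℝ)
    refine ⟨q / s, by positivity, ?_, ?_⟩
    · rw [← h2]; field_simp
    · refine h.trans (le_of_eq ?_)
      rw [← h2]; field_simp
  have hKy : K * y < 1 := by nlinarith
  have hy1 : y < 1 := by nlinarith
  have hbar : (1 - y) * s ^ 2 / 2 ≤ edgeCount G := by
    by_contra hc
    push Not at hc
    obtain ⟨u, hu0, hu1, hu2⟩ := tri G
    have hs2 : 0 < s ^ 2 := by positivity
    have hs3 : 0 < s ^ 3 := by positivity
    have a1 : u ^ 2 < 1 - y := by
      have : u ^ 2 * s ^ 2 < (1 - y) * s ^ 2 := by linarith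
      exact lt_of_mul_lt_mul_right this hs2.le
    have a2 : 1 - K * y ^ 2 ≤ u ^ 3 := le_of_mul_le_mul_right (hT.trans hu2) hs3
    have a3 : u ≤ 1 := by nlinarith
    nlinarith [mul_le_mul_of_nonneg_left a3 (sq_nonneg u)]
  obtain ⟨H, hHG, hHb, hF, hdeg⟩ := exists_opt G ((1 - (4 * K + 1) * y) * s / 2) _ hbar
  have hpos : (0 : ℝ) < edgeCount H := lt_of_lt_of_le (by
    have : 0 < 1 - y := by linarith
    positivity) hHb
  refine ⟨H, hHG, by exact_mod_cast hpos, fun v hv => ?_⟩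
  by_contra hlt
  push Not at hlt
  rcases hdeg v hv with h | h
  · linarith
  obtain ⟨u, hu0, hu1, hu2⟩ := tri H
  have hs2 : 0 < s ^ 2 := by positivity
  have hs3 : 0 < s ^ 3 := by positivity
  have b1 : 1 - y ≤ u ^ 2 := by
    have : (1 - y) * s ^ 2 ≤ u ^ 2 * s ^ 2 := by linarith
    exact le_of_mul_le_mul_right this hs2
  have b2 : u ^ 2 ≤ 1 - y / 2 := by
    have hd : (deg H v : ℝ) ≤ s := by
      have : 0 < (4 * K + 1) * y * s := by positivity
      nlinarith
    have : u ^ 2 * s ^ 2 ≤ (1 - y / 2) * s ^ 2 := by nlinarith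
    exact le_of_mul_le_mul_right this hs2
  have b3 : 1 - K * y ^ 2 ≤ u ^ 3 + 3 / 2 * (1 - (4 * K + 1) * y) * (1 + K * y ^ 2 - u ^ 2) := by
    have hc : 0 ≤ (1 - (4 * K + 1) * y) := by linarith
    have : (1 - K * y ^ 2) * s ^ 3 ≤
        (u ^ 3 + 3 / 2 * (1 - (4 * K + 1) * y) * (1 + K * y ^ 2 - u ^ 2)) * s ^ 3 := by
      have h5 := mul_le_mul_of_nonneg_left (sub_le_sub_right hE (2 * (edgeCount H : ℝ)))
        (mul_nonneg hc hs.le)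
      rw [hu1] at h5
      have h6 : (1 - (4 * K + 1) * y) * s * (2 * (edgeCount G : ℝ) - u ^ 2 * s ^ 2) =
        4 * ((1 - (4 * K + 1) * y) * s / 2 * edgeCount G - (1 - (4 * K + 1) * y) * s / 2 * edgeCount H) := by
        rw [← hu1]; ring
      rw [h6] at h5
      have h7 : (1 - (4 * K + 1) * y) * s * ((1 + K * y ^ 2) * s ^ 2 - u ^ 2 * s ^ 2) =
        (1 - (4 * K + 1) * y) * (1 + K * y ^ 2 - u ^ 2) * s ^ 3 := by ring
      rw [h7] at h5
      linarith
    exact le_of_mul_le_mul_right this hs3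
  have b4 : u ^ 3 ≤ u ^ 2 / 2 + u ^ 4 / 2 := by nlinarith [mul_nonneg (sq_nonneg u) (sq_nonneg (u - 1))]
  -- with t = 1 - u^2 in [y/2, y]
  obtain ⟨t, ht⟩ : ∃ t, t = 1 - u ^ 2 := ⟨_, rfl⟩
  have hu4 : u ^ 4 = (1 - t) ^ 2 := by rw [ht]; ring
  have hu2' : u ^ 2 = 1 - t := by rw [ht]; ring
  rw [hu4, hu2'] at b4
  rw [hu2'] at b1 b2 b3
  have ht1 : y / 2 ≤ t := by linarith
  have ht2 : t ≤ y := by linarith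
  have c1 : t ^ 2 ≤ y ^ 2 := by nlinarith
  have c2 : (4 * K + 1) * y * (y / 2) ≤ (4 * K + 1) * y * t := by gcongr
  have c3 : 0 < K * y ^ 2 := by positivity
  have c4 : 0 < y ^ 2 := by positivity
  have c5 : 0 ≤ (4 * K + 1) * y * (K * y ^ 2) := by positivity
  linarith

theorem sum_exp_neg (E : ℕ) : ∑ m ∈ Finset.range (E + 1), Real.exp (-(m : ℝ)) ≤ 2 := by
  have h : ∀ m : ℕ, Real.exp (-(m : ℝ)) ≤ (1 / 2 : ℝ) ^ m := by
    intro m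
    have h1 : Real.exp (-1) ≤ 1 / 2 := by
      rw [Real.exp_neg, inv_le_comm₀ (Real.exp_pos 1) (by norm_num)]
      have := Real.add_one_le_exp (1 : ℝ)
      norm_num at this ⊢
      linarith
    calc Real.exp (-(m : ℝ)) = Real.exp (-1) ^ m := by rw [← Real.exp_nat_mul]; ring_nf
      _ ≤ _ := by gcongr
  refine (Finset.sum_le_sum fun m _ => h m).trans ?_
  have := geom_sum_eq (show (1 / 2 : ℝ) ≠ 1 by norm_num) (E + 1)
  rw [this]
  have h1 : (0 : ℝ) < (1 / 2) ^ (E + 1) := by positivity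
  have h2 : ((1 / 2 : ℝ) ^ (E + 1) - 1) / (1 / 2 - 1) = 2 - 2 * (1 / 2) ^ (E + 1) := by
    rw [div_eq_iff (by norm_num)]
    ring
  rw [h2]
  linarith

theorem core_bound {n : ℕ} (hn : 0 < n) (L D η m1 : ℝ) (E : ℕ) (hL : 0 ≤ L) (hD : 0 < D)
    (hη : η ≤ 1) (hm1 : 0 < m1)
    (h : 2 * Real.log n / D + 2 + Real.log (4 * E / D ^ 2) ≤ η * L) :
    prob n (Real.exp (-L)) {H | ∃ G ∈ (Finset.univ.filter (fun G : SimpleGraph (Fin n) =>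
      (m1 < edgeCount G ∧ edgeCount G ≤ E) ∧ ∀ x, 0 < deg G x → D ≤ deg G x)), G ≤ H} ≤
      2 * Real.exp (-(m1 * L * (1 - η))) := by
  refine (prob_exists_le (Real.exp_pos _).le (by simpa using hL) _).trans ?_
  set S := (Finset.univ.filter (fun G : SimpleGraph (Fin n) =>
      (m1 < edgeCount G ∧ edgeCount G ≤ E) ∧ ∀ x, 0 < deg G x → D ≤ deg G x)) with hS
  have hmaps : ∀ G ∈ S, edgeCount G ∈ Finset.range (E + 1) := by
    intro G hG
    rw [hS, Finset.mem_filter] at hG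
    rw [Finset.mem_range]
    omega
  rw [← Finset.sum_fiberwise_of_maps_to hmaps]
  have hterm : ∀ m ∈ Finset.range (E + 1),
      ∑ G ∈ S.filter (fun G => edgeCount G = m), Real.exp (-L) ^ edgeCount G ≤
        Real.exp (-(m1 * L * (1 - η))) * Real.exp (-(m : ℝ)) := by
    intro m hm
    have hmE : (m : ℝ) ≤ E := by
      have := Finset.mem_range.1 hm
      exact_mod_cast (by omega : m ≤ E)
    by_cases hmm : m1 < (m : ℝ)
    · have hm0 : 0 < m := by
        have : (0 : ℝ) < m := by linarith
        exact_mod_cast this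
      have h1 : ∑ G ∈ S.filter (fun G => edgeCount G = m), Real.exp (-L) ^ edgeCount G =
          (S.filter (fun G => edgeCount G = m)).card * Real.exp (-L) ^ m := by
        rw [← nsmul_eq_mul, ← Finset.sum_const]
        refine Finset.sum_congr rfl fun G hG => ?_
        rw [(Finset.mem_filter.1 hG).2]
      rw [h1]
      have h2 : ((S.filter (fun G => edgeCount G = m)).card : ℝ) ≤
          Real.exp (m * (2 * Real.log n / D + 1 + Real.log (4 * E / D ^ 2))) := by
        refine le_trans ?_ (count_real hn hm0 D E hD hmE)
        have : (S.filter (fun G => edgeCount G = m)) ⊆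
            (Finset.univ.filter (fun G : SimpleGraph (Fin n) => edgeCount G = m ∧
              ∀ x, 0 < deg G x → D ≤ deg G x)) := by
          intro G hG
          rw [hS] at hG
          simp only [Finset.mem_filter, Finset.mem_univ, true_and] at hG ⊢
          exact ⟨hG.2, hG.1.2⟩
        exact_mod_cast Finset.card_le_card this
      calc _ ≤ Real.exp (m * (2 * Real.log n / D + 1 + Real.log (4 * E / D ^ 2))) * Real.exp (-L) ^ m := by
            gcongr
        _ ≤ _ := by
          rw [← Real.exp_nat_mul, ← Real.exp_add, ← Real.exp_add, Real.exp_le_exp]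
          have h3 : (m : ℝ) * (2 * Real.log n / D + 2 + Real.log (4 * E / D ^ 2)) ≤ m * (η * L) := by
            gcongr
          have h4 : m1 * (L * (1 - η)) ≤ m * (L * (1 - η)) := by
            have : 0 ≤ 1 - η := by linarith
            gcongr
          linarith
    · have : S.filter (fun G => edgeCount G = m) = ∅ := by
        apply Finset.filter_eq_empty_iff.2
        intro G hG hGm
        rw [hS, Finset.mem_filter] at hG
        exact hmm (hGm ▸ hG.2.1.1)
      rw [this, Finset.sum_empty]
      positivity
  refine (Finset.sum_le_sum hterm).trans ?_
  rw [← Finset.mul_sum, mul_comm]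
  gcongr
  exact sum_exp_neg E

theorem lower_bound {n : ℕ} (L s t : ℝ) (hL : 0 ≤ L) (hs : 0 ≤ s) (hts : 6 * t = s ^ 3)
    (hne : ∃ H : SimpleGraph (Fin n), t ≤ triangleCount H) :
    Real.exp (-(L * ((s + 3) ^ 2 / 2))) ≤
      prob n (Real.exp (-L)) {H | t ≤ (triangleCount H : ℝ)} := by
  have h1 : Real.exp (-L) ≤ 1 := by simpa using hL
  have hch : t ≤ (((⌈s⌉₊ + 2).choose 3 : ℕ) : ℝ) := by
    have h2 : (((⌈s⌉₊ + 2).choose 3 : ℕ) : ℝ) * 6 = (⌈s⌉₊ + 2) * (⌈s⌉₊ + 1) * ⌈s⌉₊ := by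
      have h3 := Nat.descFactorial_eq_factorial_mul_choose (⌈s⌉₊ + 2) 3
      have h4 : (⌈s⌉₊ + 2).descFactorial 3 = ⌈s⌉₊ * ((⌈s⌉₊ + 1) * (⌈s⌉₊ + 2)) := by
        simp [Nat.descFactorial_succ]
      rw [h4] at h3
      have h5 : Nat.factorial 3 = 6 := rfl
      rw [h5] at h3
      have h6 : ((⌈s⌉₊ * ((⌈s⌉₊ + 1) * (⌈s⌉₊ + 2)) : ℕ) : ℝ) = ((6 * (⌈s⌉₊ + 2).choose 3 : ℕ) : ℝ) := by
        rw [h3]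
      push_cast at h6
      linarith
    have h3 := Nat.le_ceil s
    have h4 : s ^ 3 ≤ (⌈s⌉₊ + 2) * (⌈s⌉₊ + 1) * (⌈s⌉₊ : ℝ) := by
      calc s ^ 3 ≤ (⌈s⌉₊ : ℝ) ^ 3 := by gcongr
        _ ≤ _ := by
          have : (0 : ℝ) ≤ ⌈s⌉₊ := by positivity
          nlinarith [mul_nonneg this this]
    linarith
  have hn3 : t ≤ ((n.choose 3 : ℕ) : ℝ) := by
    obtain ⟨H, hH⟩ := hne
    exact hH.trans (by exact_mod_cast triangleCount_le_choose H)
  have hr : ∃ r : ℕ, r ≤ n ∧ r ≤ ⌈s⌉₊ + 2 ∧ t ≤ ((r.choose 3 : ℕ) : ℝ) := by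
    rcases le_total n (⌈s⌉₊ + 2) with h | h
    · exact ⟨n, le_rfl, h, hn3⟩
    · exact ⟨_, h, le_rfl, hch⟩
  obtain ⟨r, hr1, hr2, hr3⟩ := hr
  refine le_trans ?_ (prob_lower (Real.exp_pos _).le h1 r hr1 t hr3)
  rw [← Real.exp_nat_mul, Real.exp_le_exp]
  have h5 : ((r.choose 2 : ℕ) : ℝ) ≤ (s + 3) ^ 2 / 2 := by
    refine (choose_two_le r).trans ?_
    have h6 : (r : ℝ) ≤ s + 3 := by
      have h7 : (r : ℝ) ≤ ⌈s⌉₊ + 2 := by exact_mod_cast hr2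
      have h8 := Nat.ceil_lt_add_one hs
      linarith
    gcongr
  nlinarith

set_option maxHeartbeats 1000000 in
theorem finite_bound {n : ℕ} (hn : 0 < n) (l a α κ w L ε c1 c2 K : ℝ)
    (hl : 0 < l) (ha : 0 < a) (hα : 0 < α) (hα3 : α ^ 3 = 6 * a) (hκ : 0 < κ) (hw : 0 < w)
    (hp : l / n = Real.exp (-L)) (hL : 1 ≤ L) (hwa : 3 * w ≤ a)
    (hc1 : 0 < c1) (hc2 : 0 < c2) (hK : K = 2 * (c1 + c2 + 1) + 3 / a)
    (hwε : w ≤ ε) (hεL : 1 ≤ ε * L) (hεs : 15 ≤ c1 * (ε * (α * κ)))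
    (hys : 4 ≤ Real.sqrt ε * (α * κ)) (hy1 : (4 * K + 1) * Real.sqrt ε < 1)
    (hs1 : 1 ≤ α * κ) (hε1 : c1 * ε ≤ 1 / 2) (hε2 : c2 * ε ≤ 1 / 2)
    (hj : 1 ≤ a * (α * κ) ^ 2 * L / w)
    (hlow : l * (6 * a * (α * κ) ^ 2 * L / w) + l ^ 3 ≤ w * κ ^ 3)
    (hcount : 2 * Real.log n / (w ^ 2 * κ / (3 * a * α ^ 2 * L)) + 2 +
      Real.log (216 * a ^ 3 * α ^ 6 * (w ^ (-(5 : ℝ)) * L ^ 3)) ≤ c2 * ε * L)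
    (N : Set (SimpleGraph (Fin n)))
    (hN : ∀ H ∈ N, ¬ ∃ G ≤ H, 0 < edgeCount G ∧
      ∀ v, 0 < deg G v → (1 - (4 * K + 1) * Real.sqrt ε) * (α * κ) ≤ deg G v) :
    condProb n (l / n) N {H | a * κ ^ 3 ≤ (triangleCount H : ℝ)} ≤
      3 * Real.exp (-((α * κ) ^ 2 / 4)) := by
  have hs0 : 0 < α * κ := by positivity
  have hL0 : 0 < L := by linarith
  have hε0 : 0 < ε := by linarith
  have hnR : (0 : ℝ) < n := by exact_mod_cast hn
  have hpn : Real.exp (-L) * n = l := by rw [← hp]; field_simp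
  have hp1 : Real.exp (-L) ≤ 1 := by rw [Real.exp_le_one_iff]; linarith
  have hp0 : 0 ≤ Real.exp (-L) := (Real.exp_pos _).le
  rw [hp]
  obtain ⟨s, hs⟩ : ∃ s, s = α * κ := ⟨_, rfl⟩
  have hs3 : s ^ 3 = 6 * a * κ ^ 3 := by rw [hs, mul_pow, hα3]
  set B := {H : SimpleGraph (Fin n) | a * κ ^ 3 ≤ (triangleCount H : ℝ)} with hB
  by_cases hne : ∃ H : SimpleGraph (Fin n), a * κ ^ 3 ≤ triangleCount H
  swap
  · have : B = ∅ := by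
      ext H
      simp only [hB, Set.mem_ofPred_eq, Set.mem_empty_iff_false, iff_false]
      exact fun h => hne ⟨H, h⟩
    rw [this]
    unfold condProb prob
    simp
    positivity
  rw [← hs] at hs0 hεs hys hs1 hj hlow ⊢
  simp only [← hs] at hN
  have hlb := lower_bound L s (a * κ ^ 3) hL0.le hs0.le (by rw [hs3]; ring) hne
  -- parameters
  set j := ⌈a * s ^ 2 * L / w⌉₊ with hjdef
  have hj1 : a * s ^ 2 * L / w ≤ j := Nat.le_ceil _
  have hj2 : (j : ℝ) ≤ 2 * (a * s ^ 2 * L / w) := by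
    have := Nat.ceil_lt_add_one (show 0 ≤ a * s ^ 2 * L / w by linarith)
    linarith
  have hE : ((3 * j : ℕ) : ℝ) ≤ 6 * a * s ^ 2 * L / w := by
    push_cast
    calc 3 * (j : ℝ) ≤ 3 * (2 * (a * s ^ 2 * L / w)) := by linarith
      _ = _ := by ring
  have hEpos : (0 : ℝ) < ((3 * j : ℕ) : ℝ) := by push_cast; linarith
  obtain ⟨E, hEdef⟩ : ∃ E, E = 3 * j := ⟨_, rfl⟩
  rw [← hEdef] at hE hEpos
  obtain ⟨D, hD⟩ : ∃ D, D = w ^ 2 * κ / (3 * a * α ^ 2 * L) := ⟨_, rfl⟩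
  rw [← hD] at hcount
  have hD0 : 0 < D := by rw [hD]; positivity
  have hDE : D / 2 * E ≤ w * κ ^ 3 := by
    calc D / 2 * E ≤ D / 2 * (6 * a * s ^ 2 * L / w) := by gcongr
      _ = w * κ ^ 3 := by rw [hD, hs]; field_simp; ring
  have hED : 4 * (E : ℝ) / D ^ 2 ≤ 216 * a ^ 3 * α ^ 6 * (w ^ (-(5 : ℝ)) * L ^ 3) := by
    have hw5 : w ^ (-(5 : ℝ)) = (w ^ 5)⁻¹ := by
      rw [Real.rpow_neg hw.le]
      norm_cast
    calc 4 * (E : ℝ) / D ^ 2 ≤ 4 * (6 * a * s ^ 2 * L / w) / D ^ 2 := by gcongr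
      _ = _ := by rw [hD, hs, hw5]; field_simp; ring
  have hcount' : 2 * Real.log n / D + 2 + Real.log (4 * E / D ^ 2) ≤ c2 * ε * L := by
    have := Real.log_le_log (by positivity) hED
    linarith
  obtain ⟨m1, hm1⟩ : ∃ m1, m1 = (1 + K * ε) * s ^ 2 / 2 := ⟨_, rfl⟩
  have hK0 : 0 < K := by rw [hK]; positivity
  have hm10 : 0 < m1 := by rw [hm1]; positivity
  have hcore := core_bound hn L D (c2 * ε) m1 E hL0.le hD0 (by linarith) hm10 hcount'
  set A := {H : SimpleGraph (Fin n) | ∀ G ≤ H, edgeCount G ≤ E →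
    (triangleCount G : ℝ) < (a - 2 * w) * κ ^ 3} with hA
  have hak : 0 < a * κ ^ 3 := by positivity
  have hmark := prob_markov hp0 hp1 A j E ((a - 2 * w) * κ ^ 3) ((a - w) * κ ^ 3) (a * κ ^ 3)
    (by have : 0 ≤ a - w := by linarith
        positivity) hak (fun H hH => hH)
    (by
      have h1 : Real.exp (-L) * (E * n) = l * E := by rw [← hpn]; ring
      rw [h1, hpn]
      have : l * E ≤ l * (6 * a * s ^ 2 * L / w) := by gcongr
      linarith) (by omega)
  rw [← hB] at hmark
  have hmark2 : prob n (Real.exp (-L)) (A ∩ B) ≤ Real.exp (-(L * s ^ 2)) := by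
    refine hmark.trans ?_
    have h1 : (a - w) * κ ^ 3 / (a * κ ^ 3) = 1 - w / a := by field_simp
    rw [h1]
    have h2 : 1 - w / a ≤ Real.exp (-(w / a)) := Real.one_sub_le_exp_neg _
    have h3 : 0 ≤ 1 - w / a := by
      rw [sub_nonneg, div_le_one ha]; linarith
    calc (1 - w / a) ^ j ≤ Real.exp (-(w / a)) ^ j := by gcongr
      _ = Real.exp (j * (-(w / a))) := by rw [Real.exp_nat_mul]
      _ ≤ _ := by
        rw [Real.exp_le_exp]
        have h4 : w / a * (a * s ^ 2 * L / w) ≤ w / a * j := by gcongr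
        have h5 : w / a * (a * s ^ 2 * L / w) = L * s ^ 2 := by field_simp
        linarith
  -- inclusion
  have hincl : N ∩ B ⊆ (A ∩ B) ∪ {H | ∃ G ∈ (Finset.univ.filter (fun G : SimpleGraph (Fin n) =>
      (m1 < edgeCount G ∧ edgeCount G ≤ E) ∧ ∀ x, 0 < deg G x → D ≤ deg G x)), G ≤ H} := by
    rintro H ⟨hHN, hHB⟩
    by_cases hHA : H ∈ A
    · exact Or.inl ⟨hHA, hHB⟩
    right
    simp only [hA, Set.mem_ofPred_eq] at hHA
    push Not at hHA
    obtain ⟨G, hGH, hGE, hGT⟩ := hHA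
    obtain ⟨G', hG'G, hG'0, hF, hdeg⟩ := exists_opt G (D / 2) 0 (by positivity)
    have hdeg' : ∀ x, 0 < deg G' x → D ≤ deg G' x := by
      intro x hx
      rcases hdeg x hx with h | h
      · linarith
      · exfalso
        have : deg G' x ≤ edgeCount G' := by have := del_edge G' x; omega
        have : (deg G' x : ℝ) ≤ edgeCount G' := by exact_mod_cast this
        linarith
    refine ⟨G', ?_, hG'G.trans hGH⟩
    simp only [Finset.mem_filter, Finset.mem_univ, true_and]
    refine ⟨⟨?_, (edgeCount_mono hG'G).trans hGE⟩, hdeg'⟩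
    by_contra hle
    push Not at hle
    have hsq := Real.sq_sqrt hε0.le
    obtain ⟨H', hH'1, hH'2, hH'3⟩ := stability G' K (Real.sqrt ε) s hK0 (Real.sqrt_pos.2 hε0) hs0 hy1 hys
      (by
        rw [hsq]
        have h1 : (edgeCount G : ℝ) ≤ E := by exact_mod_cast hGE
        have h2 : D / 2 * edgeCount G ≤ D / 2 * E := by gcongr
        have h3 : 0 ≤ D / 2 * edgeCount G' := by positivity
        have h4 : (a - 3 * w) * κ ^ 3 ≤ triangleCount G' := by linarith
        have h5 : 3 / a * w ≤ K * ε := by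
          have : 3 / a ≤ K := by rw [hK]; linarith
          gcongr
        have h6 : (1 - K * ε) * s ^ 3 ≤ (1 - 3 / a * w) * s ^ 3 := by gcongr
        have h7 : (1 - 3 / a * w) * s ^ 3 = 6 * ((a - 3 * w) * κ ^ 3) := by
          rw [hs3]; field_simp
        linarith)
      (by rw [hsq]; rw [hm1] at hle; linarith)
    exact hN H hHN ⟨H', (hH'1.trans hG'G).trans hGH, hH'2, hH'3⟩
  have hnum : prob n (Real.exp (-L)) (N ∩ B) ≤ Real.exp (-(L * s ^ 2)) +
      2 * Real.exp (-(m1 * L * (1 - c2 * ε))) :=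
    (prob_mono hp0 hp1 hincl).trans ((prob_union hp0 hp1 _ _).trans (add_le_add hmark2 hcore))
  unfold condProb
  rw [div_le_iff₀ (lt_of_lt_of_le (Real.exp_pos _) hlb)]
  refine hnum.trans (le_trans ?_ (mul_le_mul_of_nonneg_left hlb (by positivity)))
  rw [mul_assoc 3 (Real.exp _) (Real.exp _), ← Real.exp_add]
  -- exponents
  have hsq9 : (s + 3) ^ 2 ≤ s ^ 2 * (1 + c1 * ε) := by
    have : 15 * s ≤ c1 * (ε * s) * s := by gcongr
    nlinarith
  have hs2 : 0 < s ^ 2 := by positivity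
  have hLs : L * (s + 3) ^ 2 ≤ L * (s ^ 2 * (1 + c1 * ε)) := by gcongr
  have e1 : Real.exp (-(L * s ^ 2)) ≤ Real.exp (-(s ^ 2 / 4) + -(L * ((s + 3) ^ 2 / 2))) := by
    rw [Real.exp_le_exp]
    have h1 : L * s ^ 2 * (c1 * ε) ≤ L * s ^ 2 * (1 / 2) := by gcongr
    have h2 : 1 * s ^ 2 ≤ L * s ^ 2 := by gcongr
    linarith
  have e2 : Real.exp (-(m1 * L * (1 - c2 * ε))) ≤
      Real.exp (-(s ^ 2 / 4) + -(L * ((s + 3) ^ 2 / 2))) := by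
    rw [Real.exp_le_exp]
    have h1 : 1 + c1 * ε + ε ≤ (1 + K * ε) * (1 - c2 * ε) := by
      have h3 : 2 * (c1 + c2 + 1) ≤ K := by rw [hK]; have : 0 < 3 / a := by positivity
                                            linarith
      have h4 : K * ε * (c2 * ε) ≤ K * ε * (1 / 2) := by gcongr
      have h5 : 2 * (c1 + c2 + 1) * ε ≤ K * ε := by gcongr
      linarith
    have h2 : L * s ^ 2 * (1 + c1 * ε + ε) ≤ L * s ^ 2 * ((1 + K * ε) * (1 - c2 * ε)) := by gcongr
    have h6 : s ^ 2 * 1 ≤ s ^ 2 * (ε * L) := by gcongr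
    rw [hm1]
    linarith
  linarith

theorem near_clique_of {n : ℕ} (H G : SimpleGraph (Fin n)) (a α κ k w ε Q C : ℝ)
    (hα : 0 < α) (hα3 : α ^ 3 = 6 * a) (hκ : 0 < κ) (hk : k = κ ^ 3)
    (hk' : k ^ (-(1 : ℝ) / 3) = κ⁻¹) (hw : 0 < w) (hwa : 3 * w ≤ a) (hε : 0 ≤ ε)
    (hQ : 0 < Q) (hC : C = Q ^ 2) (hCκ : C ≤ κ) (hQε : Q * Real.sqrt ε < 1)
    (hGH : G ≤ H) (hG0 : 0 < edgeCount G)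
    (hG : ∀ v, 0 < deg G v → (1 - Q * Real.sqrt ε) * (α * κ) ≤ deg G v) :
    containsNearClique H (C * ε)
      ((1 / 2) * (6 * (a - 2 * w) * k * (1 - C * k ^ (-(1 : ℝ) / 3))) ^ ((2 : ℝ) / 3)) := by
  refine ⟨G, hGH, hG0, fun v hv => ?_⟩
  obtain ⟨u, hu⟩ := hv
  refine le_trans ?_ (hG v (adj_deg_pos hu))
  have h1 : (C * ε) ^ ((1 : ℝ) / 2) = Q * Real.sqrt ε := by
    rw [← Real.sqrt_eq_rpow, hC, Real.sqrt_mul (by positivity), Real.sqrt_sq hQ.le]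
  rw [h1, hk']
  have hC0 : 0 < C := by rw [hC]; positivity
  have h2 : 0 ≤ 1 - C * κ⁻¹ := by
    rw [sub_nonneg, ← div_eq_mul_inv, div_le_one hκ]; exact hCκ
  have h3 : 1 - C * κ⁻¹ ≤ 1 := by
    have : 0 ≤ C * κ⁻¹ := by positivity
    linarith
  have h4 : 0 ≤ a - 2 * w := by linarith
  have hk0 : 0 < k := by rw [hk]; positivity
  set b := 6 * (a - 2 * w) * k * (1 - C * κ⁻¹) with hb
  have hb0 : 0 ≤ b := by positivity
  have hb1 : b ≤ (α * κ) ^ 3 := by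
    have e : (α * κ) ^ 3 = 6 * a * k * 1 := by rw [mul_pow, hα3, hk, mul_one]
    rw [e, hb]
    have : 6 * (a - 2 * w) ≤ 6 * a := by linarith
    have : 0 ≤ 6 * a := by linarith
    gcongr
  have h5 : (2 * (1 / 2 * b ^ ((2 : ℝ) / 3))) ^ ((1 : ℝ) / 2) = b ^ ((1 : ℝ) / 3) := by
    have : 2 * (1 / 2 * b ^ ((2 : ℝ) / 3)) = b ^ ((2 : ℝ) / 3) := by ring
    rw [this, ← Real.rpow_mul hb0]
    norm_num
  rw [h5]
  have h6 : b ^ ((1 : ℝ) / 3) ≤ α * κ := by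
    calc b ^ ((1 : ℝ) / 3) ≤ ((α * κ) ^ 3) ^ ((1 : ℝ) / 3) := by gcongr
      _ = α * κ := by
        rw [← Real.rpow_natCast, ← Real.rpow_mul (by positivity)]
        norm_num
  have h7 : 0 ≤ b ^ ((1 : ℝ) / 3) := by positivity
  have h8 : 0 ≤ Real.sqrt ε := Real.sqrt_nonneg _
  have h9 : 0 ≤ Q * Real.sqrt ε := by positivity
  calc (1 - 4 * (Q * Real.sqrt ε)) * b ^ ((1 : ℝ) / 3)
      ≤ (1 - Q * Real.sqrt ε) * b ^ ((1 : ℝ) / 3) := by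
        apply mul_le_mul_of_nonneg_right _ h7
        linarith
    _ ≤ _ := by
        apply mul_le_mul_of_nonneg_left h6
        linarith

set_option maxHeartbeats 1000000 in
theorem point_bound {n : ℕ} (hn : 0 < n) (l a α κ k w L ψ0 Λ ε c1 c2 K C δ : ℝ)
    (hl : 0 < l) (ha : 0 < a) (hα : 0 < α) (hα3 : α ^ 3 = 6 * a) (hκ : 0 < κ) (hw : 0 < w)
    (hk : k = κ ^ 3) (hk' : k ^ (-(1 : ℝ) / 3) = κ⁻¹)
    (hp : l / n = Real.exp (-L)) (hL : 1 ≤ L) (hLn : L ≤ 2 * Real.log n) (hn1 : 1 ≤ Real.log n)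
    (hwa : 3 * w ≤ a) (hw1 : w ≤ 1)
    (hψ : ψ0 = Real.log n / (w ^ 2 * κ)) (hψ1 : ψ0 ≤ 1) (hψ2 : 24 * a * l * α ^ 2 * ψ0 ≤ 1)
    (hΛ : Λ = Real.log (w ^ (-(5 : ℝ)) * L ^ 3)) (hΛ1 : 1 ≤ Λ)
    (hΛ2 : Real.log (216 * a ^ 3 * α ^ 6) + 2 ≤ Λ)
    (hε : ε = ψ0 + Λ / L + w)
    (hc1 : c1 = 15 / α) (hc2 : c2 = 6 * a * α ^ 2 + 2) (hK : K = 2 * (c1 + c2 + 1) + 3 / a)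
    (hC : C = (4 * K + 1) ^ 2)
    (hy1 : (4 * K + 1) * Real.sqrt ε < 1) (hε1 : c1 * ε ≤ 1 / 2) (hε2 : c2 * ε ≤ 1 / 2)
    (hκ1 : 16 / α ^ 2 ≤ κ) (hκ2 : 1 / α ≤ κ) (hκ3 : 1 / (a * α ^ 2) ≤ κ) (hκ4 : 1 ≤ κ)
    (hκ5 : 2 * l ^ 3 ≤ κ) (hκ6 : C ≤ κ) (hκδ : 3 * Real.exp (-((α * κ) ^ 2 / 4)) ≤ δ) :
    condProb n (l / n)
      {H | ¬ containsNearClique H (C * ε)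
        ((1 / 2) * (6 * (a - 2 * w) * k * (1 - C * k ^ (-(1 : ℝ) / 3))) ^ ((2 : ℝ) / 3))}
      {H | a * k ≤ (triangleCount H : ℝ)} ≤ δ := by
  have hL0 : 0 < L := by linarith
  have hlog0 : 0 < Real.log n := by linarith
  have hψ0 : 0 < ψ0 := by rw [hψ]; positivity
  have hΛL : 0 < Λ / L := by positivity
  have hε0 : 0 < ε := by rw [hε]; positivity
  have hc10 : 0 < c1 := by rw [hc1]; positivity
  have hc20 : 0 < c2 := by rw [hc2]; positivity
  have hK0 : 0 < K := by rw [hK]; positivity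
  have hψe : Real.log n = ψ0 * (w ^ 2 * κ) := by rw [hψ]; field_simp
  have hw2 : w ^ 2 ≤ 1 := pow_le_one₀ hw.le hw1
  have hψκ : 1 ≤ ψ0 * κ := by
    calc (1 : ℝ) ≤ ψ0 * (w ^ 2 * κ) := by linarith
      _ ≤ ψ0 * (1 * κ) := by gcongr
      _ = _ := by ring
  have hεψ : ψ0 ≤ ε := by rw [hε]; linarith
  have hεκ : 1 ≤ ε * κ := hψκ.trans (by gcongr)
  have hwκ : 1 ≤ w * κ := by
    calc (1 : ℝ) ≤ ψ0 * (w ^ 2 * κ) := by linarith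
      _ ≤ 1 * (w * κ) := by
        have : w ^ 2 ≤ w := pow_le_of_le_one hw.le hw1 two_ne_zero
        gcongr
      _ = _ := by ring
  rw [hk] at hk' ⊢
  refine le_trans (finite_bound hn l a α κ w L ε c1 c2 K hl ha hα hα3 hκ hw hp hL hwa hc10 hc20 hK
    (by rw [hε]; linarith) ?_ ?_ ?_ hy1 ?_ hε1 hε2 ?_ ?_ ?_ _ ?_) hκδ
  · calc 1 ≤ Λ := hΛ1
      _ = Λ / L * L := by field_simp
      _ ≤ ε * L := by
        have : Λ / L ≤ ε := by rw [hε]; linarith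
        gcongr
  · rw [hc1]
    have : 15 / α * (ε * (α * κ)) = 15 * (ε * κ) := by field_simp
    rw [this]; linarith
  · have h1 : 16 ≤ κ * α ^ 2 := by rwa [div_le_iff₀ (by positivity)] at hκ1
    have h2 : (4 : ℝ) ^ 2 ≤ (Real.sqrt ε * (α * κ)) ^ 2 := by
      rw [mul_pow, Real.sq_sqrt hε0.le]
      calc (4 : ℝ) ^ 2 ≤ 1 * (κ * α ^ 2) := by linarith
        _ ≤ (ε * κ) * (κ * α ^ 2) := by gcongr
        _ = _ := by ring
    exact le_of_sq_le_sq h2 (by positivity)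
  · rw [div_le_iff₀ hα] at hκ2; linarith
  · rw [div_le_iff₀ (by positivity)] at hκ3
    rw [le_div_iff₀ hw]
    calc 1 * w ≤ 1 := by linarith
      _ ≤ κ * (a * α ^ 2) := hκ3
      _ = a * (α ^ 2 * κ) * 1 := by ring
      _ ≤ a * (α ^ 2 * κ ^ 2) * L := by
        have : κ ≤ κ ^ 2 := le_self_pow₀ hκ4 two_ne_zero
        gcongr
      _ = _ := by ring
  · have h1 : l * (6 * a * (α * κ) ^ 2 * L / w) ≤ w * κ ^ 3 / 2 := by
      calc l * (6 * a * (α * κ) ^ 2 * L / w)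
          ≤ l * (6 * a * (α * κ) ^ 2 * (2 * (ψ0 * (w ^ 2 * κ))) / w) := by
            rw [← hψe]; gcongr
        _ = (24 * a * l * α ^ 2 * ψ0) * (w * κ ^ 3 / 2) := by field_simp; ring
        _ ≤ 1 * (w * κ ^ 3 / 2) := by gcongr
        _ = _ := by ring
    have h2 : l ^ 3 ≤ w * κ ^ 3 / 2 := by
      have : 1 * (κ * 1) ≤ (w * κ) * (κ * κ) := by gcongr
      linarith
    linarith
  · have h1 : 2 * Real.log n / (w ^ 2 * κ / (3 * a * α ^ 2 * L)) = 6 * a * α ^ 2 * L * ψ0 := by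
      rw [hψ]; field_simp; ring
    have h2 : Real.log (216 * a ^ 3 * α ^ 6 * (w ^ (-(5 : ℝ)) * L ^ 3)) =
        Real.log (216 * a ^ 3 * α ^ 6) + Λ := by
      rw [hΛ, Real.log_mul (by positivity) (by positivity)]
    rw [h1, h2, hc2]
    have h3 : Λ = L * (Λ / L) := by field_simp
    have h4 : ε * L = L * ψ0 + Λ + L * w := by
      rw [hε]; field_simp
    have h5 : 0 ≤ 6 * a * α ^ 2 := by positivity
    have h6 : 6 * a * α ^ 2 * (L * ψ0) ≤ 6 * a * α ^ 2 * (ε * L) := by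
      have : 0 < L * w := by positivity
      exact mul_le_mul_of_nonneg_left (by linarith) h5
    have h7 : 2 * Λ ≤ 2 * (ε * L) := by
      have : 0 < L * w := by positivity
      have : 0 < L * ψ0 := by positivity
      linarith
    linarith
  · rintro H hH ⟨G, hGH, hG0, hG⟩
    exact hH (near_clique_of H G a α κ (κ ^ 3) w ε (4 * K + 1) C hα hα3 hκ rfl hk' hw hwa hε0.le
      (by positivity) hC hκ6 hy1 hGH hG0 hG)

/-- **Existence of a near-clique conditionally on many triangles.** -/
theorem near_clique_conditional (l a : ℝ) (hl : 0 < l) (ha : 0 < a) :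
    ∃ C' : ℝ, 0 < C' ∧ ∀ δ : ℝ, 0 < δ →
      ∀ k w : ℕ → ℝ, (∀ n, 0 < k n) → (∀ n, 0 < w n) →
        Tendsto w atTop (nhds 0) →
        Tendsto (fun n : ℕ => Real.log n / ((w n) ^ 2 * (k n) ^ ((1 : ℝ) / 3))) atTop (nhds 0) →
        Tendsto (fun n : ℕ => Real.log (w n) / Real.log (1 / (l / n))) atTop (nhds 0) →
        ∃ C : ℝ, 0 < C ∧ ∃ n₀ : ℕ, ∀ n ≥ n₀,
          condProb n (l / n)
              {H | ¬ containsNearClique H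
                  (C * ((C' * Real.log n / ((w n) ^ 2 * (k n) ^ ((1 : ℝ) / 3)) +
                      Real.log (C' * (w n) ^ (-(5 : ℝ)) * (Real.log (1 / (l / n))) ^ 3) /
                        Real.log (1 / (l / n))) + w n))
                  ((1 / 2) * (6 * (a - 2 * w n) * k n *
                    (1 - C * (k n) ^ (-(1 : ℝ) / 3))) ^ ((2 : ℝ) / 3))}
              {H | a * k n ≤ (triangleCount H : ℝ)} ≤ δ := by
  refine ⟨1, one_pos, fun δ hδ k w hk hw hw0 hψ hlw => ?_⟩
  obtain ⟨α, hαdef⟩ : ∃ α : ℝ, α = (6 * a) ^ ((1 : ℝ) / 3) := ⟨_, rfl⟩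
  have hα : 0 < α := by rw [hαdef]; positivity
  have hα3 : α ^ 3 = 6 * a := by
    rw [hαdef, ← Real.rpow_natCast, ← Real.rpow_mul (by positivity)]
    norm_num
  obtain ⟨c1, hc1⟩ : ∃ c1 : ℝ, c1 = 15 / α := ⟨_, rfl⟩
  obtain ⟨c2, hc2⟩ : ∃ c2 : ℝ, c2 = 6 * a * α ^ 2 + 2 := ⟨_, rfl⟩
  obtain ⟨K, hK⟩ : ∃ K : ℝ, K = 2 * (c1 + c2 + 1) + 3 / a := ⟨_, rfl⟩
  obtain ⟨C, hC⟩ : ∃ C : ℝ, C = (4 * K + 1) ^ 2 := ⟨_, rfl⟩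
  have hc10 : 0 < c1 := by rw [hc1]; positivity
  have hc20 : 0 < c2 := by rw [hc2]; positivity
  have hK0 : 0 < K := by rw [hK]; positivity
  refine ⟨C, by rw [hC]; positivity, ?_⟩
  -- the auxiliary sequences
  have hκ0 : ∀ n, 0 < (k n) ^ ((1 : ℝ) / 3) := fun n => Real.rpow_pos_of_pos (hk n) _
  have hlogn : Tendsto (fun n : ℕ => Real.log n) atTop atTop :=
    Real.tendsto_log_atTop.comp tendsto_natCast_atTop_atTop
  have hLeq : ∀ᶠ n : ℕ in atTop, Real.log n - Real.log l = Real.log (1 / (l / n)) := by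
    filter_upwards [eventually_gt_atTop 0] with n hn
    have : (0 : ℝ) < n := by exact_mod_cast hn
    rw [one_div_div, Real.log_div this.ne' hl.ne']
  have hLtop : Tendsto (fun n : ℕ => Real.log (1 / (l / n))) atTop atTop := by
    refine Tendsto.congr' hLeq ?_
    simpa [sub_eq_add_neg] using tendsto_atTop_add_const_right atTop (-Real.log l) hlogn
  have hw1 : ∀ᶠ n in atTop, w n < 1 := hw0.eventually_lt_const one_pos
  have hκtop : Tendsto (fun n => (k n) ^ ((1 : ℝ) / 3)) atTop atTop := by
    have h1 : Tendsto (fun n => ((k n) ^ ((1 : ℝ) / 3))⁻¹) atTop (nhds 0) := by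
      refine squeeze_zero' (Eventually.of_forall fun n => (inv_pos.2 (hκ0 n)).le) ?_ hψ
      filter_upwards [hw1, hlogn.eventually_ge_atTop 1] with n h1 h2
      rw [inv_eq_one_div]
      have h3 : (w n) ^ 2 ≤ 1 := pow_le_one₀ (hw n).le h1.le
      have h4 := hκ0 n
      have h5 := hw n
      calc 1 / (k n) ^ ((1 : ℝ) / 3) ≤ 1 / ((w n) ^ 2 * (k n) ^ ((1 : ℝ) / 3)) := by
            apply one_div_le_one_div_of_le (by positivity)
            nlinarith
        _ ≤ _ := by gcongr
    have h2 := (tendsto_nhdsWithin_of_tendsto_nhds_of_eventually_within _ h1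
      (Eventually.of_forall fun n => inv_pos.2 (hκ0 n))).inv_tendsto_nhdsGT_zero
    simpa [Pi.inv_def] using h2
  -- the logarithmic term
  have hΛeq : ∀ᶠ n : ℕ in atTop, -5 * Real.log (w n) + 3 * Real.log (Real.log (1 / (l / n))) =
      Real.log (w n ^ (-(5 : ℝ)) * Real.log (1 / (l / n)) ^ 3) := by
    filter_upwards [hLtop.eventually_ge_atTop 1] with n hL
    have h1 := hw n
    rw [Real.log_mul (by positivity) (by positivity), Real.log_rpow h1, Real.log_pow]
    norm_num
  have hlogw : Tendsto (fun n => Real.log (w n)) atTop atBot :=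
    Real.tendsto_log_nhdsGT_zero.comp (tendsto_nhdsWithin_of_tendsto_nhds_of_eventually_within _ hw0
      (Eventually.of_forall fun n => hw n))
  have hΛbig : ∀ R : ℝ, ∀ᶠ n : ℕ in atTop,
      R ≤ Real.log (w n ^ (-(5 : ℝ)) * Real.log (1 / (l / n)) ^ 3) := by
    intro R
    filter_upwards [hΛeq, hLtop.eventually_ge_atTop 1, hlogw.eventually_le_atBot (-R),
      hlogw.eventually_le_atBot 0] with n h1 h2 h3 h4
    rw [← h1]
    have := Real.log_nonneg h2
    linarith
  have hψ1 : Tendsto (fun n : ℕ => Real.log (w n ^ (-(5 : ℝ)) * Real.log (1 / (l / n)) ^ 3) /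
      Real.log (1 / (l / n))) atTop (nhds 0) := by
    have h1 : Tendsto (fun n : ℕ => Real.log (Real.log (1 / (l / n))) / Real.log (1 / (l / n)))
        atTop (nhds 0) := (Real.isLittleO_log_id_atTop.tendsto_div_nhds_zero).comp hLtop
    have h2 := (hlw.const_mul (-5)).add (h1.const_mul 3)
    simp only [mul_zero, add_zero] at h2
    refine Tendsto.congr' ?_ h2
    filter_upwards [hΛeq] with n hn
    rw [← hn]
    ring
  have hε : Tendsto (fun n : ℕ => Real.log n / ((w n) ^ 2 * (k n) ^ ((1 : ℝ) / 3)) +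
      Real.log (w n ^ (-(5 : ℝ)) * Real.log (1 / (l / n)) ^ 3) / Real.log (1 / (l / n)) + w n)
      atTop (nhds 0) := by
    simpa using (hψ.add hψ1).add hw0
  have hsε : Tendsto (fun n : ℕ => (4 * K + 1) *
      Real.sqrt (Real.log n / ((w n) ^ 2 * (k n) ^ ((1 : ℝ) / 3)) +
      Real.log (w n ^ (-(5 : ℝ)) * Real.log (1 / (l / n)) ^ 3) / Real.log (1 / (l / n)) + w n))
      atTop (nhds 0) := by
    have := ((Real.continuous_sqrt.tendsto 0).comp hε).const_mul (4 * K + 1)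
    simpa using this
  have hexp : Tendsto (fun n => 3 * Real.exp (-((α * (k n) ^ ((1 : ℝ) / 3)) ^ 2 / 4)))
      atTop (nhds 0) := by
    have h1 : Tendsto (fun n => (α * (k n) ^ ((1 : ℝ) / 3)) ^ 2 / 4) atTop atTop :=
      ((tendsto_pow_atTop two_ne_zero).comp (hκtop.const_mul_atTop hα)).atTop_div_const (by norm_num)
    have := (Real.tendsto_exp_neg_atTop_nhds_zero.comp h1).const_mul 3
    simpa using this
  rw [← eventually_atTop]
  have hψ24 : Tendsto (fun n : ℕ => 24 * a * l * α ^ 2 *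
      (Real.log n / ((w n) ^ 2 * (k n) ^ ((1 : ℝ) / 3)))) atTop (nhds 0) := by
    simpa using hψ.const_mul (24 * a * l * α ^ 2)
  have hεc1 := hε.const_mul c1
  have hεc2 := hε.const_mul c2
  rw [mul_zero] at hεc1 hεc2
  filter_upwards [eventually_gt_atTop 0, hw1, hLeq, hlogn.eventually_ge_atTop 1,
    hlogn.eventually_ge_atTop (-Real.log l), hLtop.eventually_ge_atTop 1,
    hw0.eventually_lt_const (show (0 : ℝ) < a / 3 by positivity),
    hψ.eventually_lt_const one_pos, hψ24.eventually_lt_const one_pos,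
    hΛbig 1, hΛbig (Real.log (216 * a ^ 3 * α ^ 6) + 2),
    hsε.eventually_lt_const one_pos, hεc1.eventually_lt_const one_half_pos,
    hεc2.eventually_lt_const one_half_pos,
    hκtop.eventually_ge_atTop (16 / α ^ 2), hκtop.eventually_ge_atTop (1 / α),
    hκtop.eventually_ge_atTop (1 / (a * α ^ 2)), hκtop.eventually_ge_atTop 1,
    hκtop.eventually_ge_atTop (2 * l ^ 3), hκtop.eventually_ge_atTop C,
    hexp.eventually_lt_const hδ] with n h1 h2 h3 h4 h5 h6 h7 h8 h9 h10 h11 h12 h13 h14 h15 h16 h17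
      h18 h19 h20 h21
  have hnR : (0 : ℝ) < n := by exact_mod_cast h1
  have hp : l / n = Real.exp (-Real.log (1 / (l / n))) := by
    rw [one_div, Real.log_inv, neg_neg, Real.exp_log (by positivity)]
  have hk3 : k n = ((k n) ^ ((1 : ℝ) / 3)) ^ 3 := by
    rw [← Real.rpow_natCast, ← Real.rpow_mul (hk n).le]
    norm_num
  have hk' : (k n) ^ (-(1 : ℝ) / 3) = ((k n) ^ ((1 : ℝ) / 3))⁻¹ := by
    rw [← Real.rpow_neg (hk n).le]
    norm_num
  have := point_bound h1 l a α ((k n) ^ ((1 : ℝ) / 3)) (k n) (w n) (Real.log (1 / (l / n))) _ _ _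
    c1 c2 K C δ hl ha hα hα3 (hκ0 n) (hw n) hk3 hk' hp h6 (by linarith) h4 (by linarith) h2.le
    rfl h8.le h9.le rfl h10 h11 rfl hc1 hc2 hK hC h12 h13.le h14.le h15 h16 h17 h18 h19 h20 h21.le
  rw [one_mul, one_mul]
  exact this
end
end

section
/- Fix λ > 0, set p_n = λ/n, and fix a > 0 and δ > 0. There exist constants C, C' > 0 such that for all sequences (k_n), (w_n) of positive reals with w_n → 0, (log n)/(w_n² k_n^{1/3}) → 0 and (log w_n)/log(1/p_n) → 0, the following holds: setting ψ_n := C' (log n)/(w_n² k_n^{1/3}) + log(C' w_n^{−5} (log(1/p_n))³)/log(1/p_n), there exists n₀ such that for all n ≥ n₀: P( T ≥ a k_n and G_{n,p_n} contains no core G* (with parameters a, w_n, C, k_n) satisfying e_{G*} ≤ (1/2)(6a(1 + 2ψ_n)k_n)^{2/3} ) ≤ δ · P(T ≥ a k_n). -/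
open scoped BigOperators Classical
open Finset Filter

noncomputable section

namespace UMC

variable {n : ℕ}

def eF (G : SimpleGraph (Fin n)) : Finset (Sym2 (Fin n)) :=
  Finset.univ.filter (fun e : Sym2 (Fin n) => e ∈ G.edgeSet)

lemma mem_eF (G : SimpleGraph (Fin n)) (e : Sym2 (Fin n)) : e ∈ eF G ↔ e ∈ G.edgeSet := by
  simp [eF]

lemma edgeCount_eq (G : SimpleGraph (Fin n)) : edgeCount G = (eF G).card := rfl

lemma eF_top_card : (eF (⊤ : SimpleGraph (Fin n))).card = n.choose 2 := by
  have h := SimpleGraph.card_edgeFinset_top_eq_card_choose_two (V := Fin n)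
  rw [Fintype.card_fin] at h
  rw [← h]
  congr 1
  ext e
  simp [mem_eF]

lemma eF_subset {G H : SimpleGraph (Fin n)} : eF G ⊆ eF H ↔ G ≤ H := by
  rw [← SimpleGraph.edgeSet_subset_edgeSet]
  constructor
  · intro h e he
    exact (mem_eF _ _).1 (h ((mem_eF _ _).2 he))
  · intro h e he
    exact (mem_eF _ _).2 (h ((mem_eF _ _).1 he))

lemma edgeCount_mono {G H : SimpleGraph (Fin n)} (h : G ≤ H) : edgeCount G ≤ edgeCount H :=
  Finset.card_le_card (eF_subset.2 h)

lemma edgeCount_le (G : SimpleGraph (Fin n)) : edgeCount G ≤ n.choose 2 := by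
  rw [← eF_top_card]
  exact edgeCount_mono le_top

lemma eF_sup (G H : SimpleGraph (Fin n)) : eF (G ⊔ H) = eF G ∪ eF H := by
  ext e
  simp [mem_eF, SimpleGraph.edgeSet_sup]

lemma prob_ge (p : ℝ) (G : SimpleGraph (Fin n)) :
    prob n p {H | G ≤ H} = p ^ edgeCount G := by
  have h1 : prob n p {H | G ≤ H} =
      ∑ H ∈ Finset.univ.filter (fun H : SimpleGraph (Fin n) => G ≤ H), graphProb n p H := by
    rw [prob, Finset.sum_filter]
    rfl
  have hsub : ∀ G : SimpleGraph (Fin n), eF G ⊆ eF ⊤ := fun G => eF_subset.2 le_top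
  have h2 : ∑ H ∈ Finset.univ.filter (fun H : SimpleGraph (Fin n) => G ≤ H), graphProb n p H
      = ∑ S ∈ (eF ⊤ \ eF G).powerset,
        p ^ edgeCount G * (p ^ S.card * (1 - p) ^ ((eF ⊤ \ eF G).card - S.card)) := by
    refine Finset.sum_nbij' (fun H => eF H \ eF G)
      (fun S => SimpleGraph.fromEdgeSet ((S ∪ eF G : Finset (Sym2 (Fin n))) : Set (Sym2 (Fin n))))
      ?_ ?_ ?_ ?_ ?_
    · intro H hH
      rw [Finset.mem_powerset]
      exact Finset.sdiff_subset_sdiff (hsub H) le_rfl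
    · intro S hS
      simp only [Finset.mem_filter, Finset.mem_univ, true_and]
      rw [← eF_subset]
      intro e he
      have : e ∈ G.edgeSet := (mem_eF _ _).1 he
      rw [mem_eF, SimpleGraph.edgeSet_fromEdgeSet]
      refine ⟨by simp [he], ?_⟩
      exact G.not_isDiag_of_mem_edgeSet this
    · intro H hH
      simp only [Finset.mem_filter, Finset.mem_univ, true_and] at hH
      rw [← SimpleGraph.edgeSet_inj, SimpleGraph.edgeSet_fromEdgeSet]
      have : eF H \ eF G ∪ eF G = eF H := Finset.sdiff_union_of_subset (eF_subset.2 hH)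
      rw [this]
      ext e
      simp only [Set.mem_sdiff, Finset.mem_coe, mem_eF]
      exact ⟨fun h => h.1, fun h => ⟨h, H.not_isDiag_of_mem_edgeSet h⟩⟩
    · intro S hS
      rw [Finset.mem_powerset] at hS
      ext e
      rw [Finset.mem_sdiff, mem_eF, SimpleGraph.edgeSet_fromEdgeSet]
      constructor
      · rintro ⟨⟨h1, h2⟩, h3⟩
        simp only [Finset.coe_union, Set.mem_union, Finset.mem_coe] at h1
        tauto
      · intro h
        have h' := Finset.mem_sdiff.1 (hS h)
        refine ⟨⟨by simp [h], ?_⟩, h'.2⟩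
        exact SimpleGraph.not_isDiag_of_mem_edgeSet _ ((mem_eF _ _).1 h'.1)
    · intro H hH
      simp only [Finset.mem_filter, Finset.mem_univ, true_and] at hH
      have hc := Finset.card_sdiff_add_card_eq_card (eF_subset.2 hH)
      have hc2 := Finset.card_sdiff_add_card_eq_card (hsub G)
      rw [eF_top_card] at hc2
      rw [graphProb, edgeCount_eq, edgeCount_eq, ← mul_assoc, ← pow_add]
      congr 2
      · omega
      · omega
  rw [h1, h2, ← Finset.mul_sum, Finset.sum_pow_mul_eq_add_pow]
  simp

lemma graphProb_nonneg {p : ℝ} (h0 : 0 ≤ p) (h1 : p ≤ 1) (G : SimpleGraph (Fin n)) :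
    0 ≤ graphProb n p G := by
  have : 0 ≤ 1 - p := by linarith
  unfold graphProb; positivity

lemma prob_mono {p : ℝ} (h0 : 0 ≤ p) (h1 : p ≤ 1) {A B : Set (SimpleGraph (Fin n))}
    (h : A ⊆ B) : prob n p A ≤ prob n p B := by
  refine Finset.sum_le_sum fun G _ => ?_
  have := graphProb_nonneg h0 h1 G
  by_cases hA : G ∈ A
  · simp [hA, h hA]
  · simp only [hA, if_false]; split_ifs <;> simp [this]

lemma prob_union_le {p : ℝ} (h0 : 0 ≤ p) (h1 : p ≤ 1) (A B : Set (SimpleGraph (Fin n))) :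
    prob n p (A ∪ B) ≤ prob n p A + prob n p B := by
  rw [prob, prob, prob, ← Finset.sum_add_distrib]
  refine Finset.sum_le_sum fun G _ => ?_
  have := graphProb_nonneg h0 h1 G
  by_cases hA : G ∈ A <;> by_cases hB : G ∈ B <;> simp [hA, hB, this]

lemma prob_exists_le {p : ℝ} (h0 : 0 ≤ p) (h1 : p ≤ 1) (S : Finset (SimpleGraph (Fin n))) :
    prob n p {H | ∃ G ∈ S, G ≤ H} ≤ ∑ G ∈ S, p ^ edgeCount G := by
  simp_rw [← prob_ge]
  unfold prob
  rw [Finset.sum_comm]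
  refine Finset.sum_le_sum fun H _ => ?_
  have hg := graphProb_nonneg h0 h1 H
  have hn : ∀ G ∈ S, 0 ≤ (if H ∈ {H | G ≤ H} then graphProb n p H else 0) := by
    intro G _; split_ifs <;> simp [hg]
  split_ifs with h
  · obtain ⟨G, hG, hGH⟩ := h
    refine le_trans ?_ (Finset.single_le_sum hn hG)
    simp [hGH]
  · exact Finset.sum_nonneg hn

/-- complete graph on a vertex set -/
def KK (s : Finset (Fin n)) : SimpleGraph (Fin n) where
  Adj u v := u ∈ s ∧ v ∈ s ∧ u ≠ v
  symm := ⟨fun _ _ h => ⟨h.2.1, h.1, h.2.2.symm⟩⟩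
  loopless := ⟨fun _ h => h.2.2 rfl⟩

lemma KK_le_iff (s : Finset (Fin n)) (H : SimpleGraph (Fin n)) : KK s ≤ H ↔ H.IsClique s := by
  constructor
  · intro h u hu v hv huv
    exact h ⟨hu, hv, huv⟩
  · intro h u v huv
    exact h huv.1 huv.2.1 huv.2.2

lemma edgeCount_KK (s : Finset (Fin n)) : edgeCount (KK s) = s.card.choose 2 := by
  have : eF (KK s) = s.sym2.filter (fun e => ¬ e.IsDiag) := by
    ext e
    induction e with | _ u v =>
    simp [mem_eF, KK, and_assoc]
  rw [edgeCount_eq, this]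
  have h := Sym2.card_image_offDiag s
  rw [← h]
  congr 1
  ext e
  induction e with | _ u v =>
  simp only [Finset.mem_filter, Finset.mk_mem_sym2_iff, Sym2.mk_isDiag_iff, Finset.mem_image,
    Finset.mem_offDiag, Prod.exists, Function.uncurry_apply_pair, Sym2.eq_iff]
  constructor
  · rintro ⟨⟨h1, h2⟩, h3⟩
    exact ⟨u, v, ⟨h1, h2, h3⟩, Or.inl ⟨rfl, rfl⟩⟩
  · rintro ⟨x, y, ⟨h1, h2, h3⟩, ⟨rfl, rfl⟩ | ⟨rfl, rfl⟩⟩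
    · exact ⟨⟨h1, h2⟩, h3⟩
    · exact ⟨⟨h2, h1⟩, fun h => h3 h.symm⟩

def triples (n : ℕ) : Finset (Finset (Fin n)) := Finset.univ.powersetCard 3

lemma tri_eq (H : SimpleGraph (Fin n)) :
    (triangleCount H : ℝ) = ∑ s ∈ triples n, if KK s ≤ H then (1 : ℝ) else 0 := by
  rw [← Finset.sum_filter, Finset.sum_const, nsmul_eq_mul, mul_one]
  congr 1
  unfold triangleCount
  congr 1
  ext s
  simp [triples, KK_le_iff, SimpleGraph.isNClique_iff, Finset.mem_powersetCard, and_comm]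

lemma condTri_mul (p : ℝ) (hp : p ≠ 0) (G : SimpleGraph (Fin n)) :
    p ^ edgeCount G * condTri n p G = ∑ s ∈ triples n, p ^ edgeCount (G ⊔ KK s) := by
  unfold condTri condExpect
  rw [prob_ge, mul_div_cancel₀ _ (pow_ne_zero _ hp)]
  simp_rw [← prob_ge, prob]
  rw [Finset.sum_comm]
  refine Finset.sum_congr rfl fun H _ => ?_
  by_cases h : G ≤ H
  · rw [if_pos h, tri_eq, Finset.mul_sum]
    refine Finset.sum_congr rfl fun s _ => ?_
    by_cases hs : KK s ≤ H <;> simp [h, hs]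
  · simp [h]

lemma condTri_eq (p : ℝ) (hp : p ≠ 0) (G : SimpleGraph (Fin n)) :
    condTri n p G = ∑ s ∈ triples n, p ^ (eF (KK s) \ eF G).card := by
  have h := condTri_mul p hp G
  have h2 : ∀ s, p ^ edgeCount (G ⊔ KK s) = p ^ edgeCount G * p ^ (eF (KK s) \ eF G).card := by
    intro s
    rw [← pow_add, edgeCount_eq, edgeCount_eq, eF_sup, Finset.union_comm,
      ← Finset.card_sdiff_add_card, add_comm]
  simp_rw [h2] at h
  rw [← Finset.mul_sum] at h
  exact mul_left_cancel₀ (pow_ne_zero _ hp) h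

/-! ### Seeds -/

lemma seed_moment {p M B : ℝ} (hp : 0 < p) (hp1 : p ≤ 1) (hM : 0 ≤ M) (l : ℕ) :
    ∀ U : SimpleGraph (Fin n), (edgeCount U : ℝ) + 3 * l ≤ B →
    (∑ H : SimpleGraph (Fin n), if U ≤ H ∧ (∀ G ≤ H, (edgeCount G : ℝ) ≤ B → condTri n p G < M)
      then graphProb n p H * (triangleCount H : ℝ) ^ l else 0) ≤ p ^ edgeCount U * M ^ l := by
  induction l with
  | zero =>
    intro U _
    rw [← prob_ge, pow_zero, mul_one]
    refine Finset.sum_le_sum fun H _ => ?_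
    have hg := graphProb_nonneg hp.le hp1 H
    by_cases h : U ≤ H
    · simp only [h, true_and, Set.mem_ofPred_eq, if_true]
      split_ifs <;> simp [hg]
    · simp [h]
  | succ l ih =>
    intro U hU
    push_cast at hU
    by_cases hc : condTri n p U < M
    · have key : (∑ H : SimpleGraph (Fin n),
          if U ≤ H ∧ (∀ G ≤ H, (edgeCount G : ℝ) ≤ B → condTri n p G < M)
          then graphProb n p H * (triangleCount H : ℝ) ^ (l + 1) else 0) =
          ∑ s ∈ triples n, ∑ H : SimpleGraph (Fin n),
          if U ⊔ KK s ≤ H ∧ (∀ G ≤ H, (edgeCount G : ℝ) ≤ B → condTri n p G < M)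
          then graphProb n p H * (triangleCount H : ℝ) ^ l else 0 := by
        rw [Finset.sum_comm]
        refine Finset.sum_congr rfl fun H _ => ?_
        by_cases h : U ≤ H ∧ (∀ G ≤ H, (edgeCount G : ℝ) ≤ B → condTri n p G < M)
        · rw [if_pos h, pow_succ, ← mul_assoc]
          nth_rewrite 2 [tri_eq]
          rw [Finset.mul_sum]
          refine Finset.sum_congr rfl fun s _ => ?_
          by_cases hs : KK s ≤ H
          · rw [if_pos hs, if_pos ⟨sup_le h.1 hs, h.2⟩, mul_one]
          · rw [if_neg hs, if_neg (fun h' => hs (le_sup_right.trans h'.1)), mul_zero]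
        · rw [if_neg h]
          symm
          refine Finset.sum_eq_zero fun s _ => ?_
          rw [if_neg (fun h' => h ⟨le_sup_left.trans h'.1, h'.2⟩)]
      rw [key]
      calc _ ≤ ∑ s ∈ triples n, p ^ edgeCount (U ⊔ KK s) * M ^ l := by
            refine Finset.sum_le_sum fun s hs => ih _ ?_
            have h1 : edgeCount (U ⊔ KK s) ≤ edgeCount U + edgeCount (KK s) := by
              rw [edgeCount_eq, eF_sup]; exact Finset.card_union_le _ _
            rw [edgeCount_KK] at h1
            have h2 : s.card = 3 := (Finset.mem_powersetCard.1 hs).2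
            rw [h2] at h1
            have h3 : (edgeCount (U ⊔ KK s) : ℝ) ≤ edgeCount U + 3 := by
              exact_mod_cast h1
            linarith
        _ = p ^ edgeCount U * condTri n p U * M ^ l := by
            rw [← Finset.sum_mul, condTri_mul p hp.ne']
        _ ≤ p ^ edgeCount U * M * M ^ l := by gcongr
        _ = _ := by ring
    · refine le_trans (Finset.sum_nonpos fun H _ => ?_) (by positivity)
      rw [if_neg]
      rintro ⟨h1, h2⟩
      refine hc (h2 U h1 ?_)
      have : (0 : ℝ) ≤ l := Nat.cast_nonneg l
      linarith

lemma prob_no_seed {p a w k B : ℝ} (hp : 0 < p) (hp1 : p ≤ 1) (ha : 0 < a) (hk : 0 < k)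
    (hw : w ≤ a) (l : ℕ) (hl : 3 * (l : ℝ) ≤ B) :
    prob n p {H | a * k ≤ (triangleCount H : ℝ) ∧
      ∀ G ≤ H, (edgeCount G : ℝ) ≤ B → condTri n p G < (a - w) * k} ≤ (1 - w / a) ^ l := by
  have hM : 0 ≤ (a - w) * k := mul_nonneg (by linarith) hk.le
  have h := seed_moment (n := n) (B := B) hp hp1 hM l ⊥ (by simpa [edgeCount] using hl)
  have h0 : edgeCount (⊥ : SimpleGraph (Fin n)) = 0 := by simp [edgeCount]
  rw [h0, pow_zero, one_mul] at h
  have hak : 0 < a * k := by positivity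
  have h2 : prob n p {H | a * k ≤ (triangleCount H : ℝ) ∧
      ∀ G ≤ H, (edgeCount G : ℝ) ≤ B → condTri n p G < (a - w) * k} * (a * k) ^ l ≤
      ((a - w) * k) ^ l := by
    refine le_trans ?_ h
    rw [prob, Finset.sum_mul]
    refine Finset.sum_le_sum fun H _ => ?_
    have hg := graphProb_nonneg hp.le hp1 H
    split_ifs with h1 h2 h3
    · have := h1.1
      gcongr
    · exact absurd ⟨bot_le, h1.2⟩ h2
    · rw [zero_mul]; positivity
    · simp
  rw [← le_div_iff₀ (by positivity), ← div_pow] at h2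
  refine h2.trans_eq ?_
  congr 1
  field_simp

end UMC

namespace UMC

variable {n : ℕ}

lemma eF_delete (G : SimpleGraph (Fin n)) (e : Sym2 (Fin n)) :
    eF (G.deleteEdges {e}) = (eF G).erase e := by
  ext f
  simp [mem_eF, SimpleGraph.edgeSet_deleteEdges, and_comm]

lemma seed_core {p τ : ℝ} (hτ : 0 ≤ τ) (m : ℕ) : ∀ G : SimpleGraph (Fin n), edgeCount G = m →
    ∃ G' ≤ G, condTri n p G - τ * m ≤ condTri n p G' ∧
      ∀ e ∈ G'.edgeSet, τ ≤ condTri n p G' - condTri n p (G'.deleteEdges {e}) := by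
  induction m with
  | zero =>
    intro G hG
    refine ⟨G, le_rfl, by simp, fun e he => ?_⟩
    rw [edgeCount_eq, Finset.card_eq_zero] at hG
    have := (mem_eF _ _).2 he
    rw [hG] at this
    simp at this
  | succ m ih =>
    intro G hG
    by_cases h : ∀ e ∈ G.edgeSet, τ ≤ condTri n p G - condTri n p (G.deleteEdges {e})
    · refine ⟨G, le_rfl, ?_, h⟩
      have : 0 ≤ τ * ((m + 1 : ℕ) : ℝ) := by positivity
      linarith
    · push Not at h
      obtain ⟨e, he, h⟩ := h
      have hc : edgeCount (G.deleteEdges {e}) = m := by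
        rw [edgeCount_eq, eF_delete, Finset.card_erase_of_mem ((mem_eF _ _).2 he),
          ← edgeCount_eq, hG]
        simp
      obtain ⟨G', h1, h2, h3⟩ := ih _ hc
      refine ⟨G', h1.trans (SimpleGraph.deleteEdges_le _), ?_, h3⟩
      push_cast
      linarith

lemma mem_eF_KK {s : Finset (Fin n)} {u v : Fin n} :
    s(u, v) ∈ eF (KK s) ↔ u ∈ s ∧ v ∈ s ∧ u ≠ v := by
  rw [mem_eF]; rfl

lemma delta_le {p : ℝ} (hp : 0 < p) (hp1 : p ≤ 1) (G : SimpleGraph (Fin n)) (u v : Fin n)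
    (huv : G.Adj u v) :
    condTri n p G - condTri n p (G.deleteEdges {s(u, v)}) ≤ (deg G u : ℝ) + p * n := by
  rw [condTri_eq p hp.ne', condTri_eq p hp.ne', ← Finset.sum_sub_distrib]
  set D : Finset (Fin n) := Finset.univ.filter (fun x => x ≠ u ∧ x ≠ v) with hD
  have h1 : ∀ s ∈ triples n, p ^ (eF (KK s) \ eF G).card -
      p ^ (eF (KK s) \ eF (G.deleteEdges {s(u, v)})).card ≤
      if s ∈ D.image (fun x => ({u, v, x} : Finset (Fin n))) then
        p ^ (eF (KK s) \ eF G).card else 0 := by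
    intro s hs
    have h3 : s.card = 3 := (Finset.mem_powersetCard.1 hs).2
    split_ifs with h
    · have : 0 ≤ p ^ (eF (KK s) \ eF (G.deleteEdges {s(u, v)})).card := by positivity
      linarith
    · have : eF (KK s) \ eF (G.deleteEdges {s(u, v)}) = eF (KK s) \ eF G := by
        rw [eF_delete]
        have hno : s(u, v) ∉ eF (KK s) := by
          rw [mem_eF_KK]
          rintro ⟨hu, hv, hne⟩
          apply h
          rw [Finset.mem_image]
          have hsub : ({u, v} : Finset (Fin n)) ⊆ s := by
            intro x hx; simp at hx; rcases hx with rfl | rfl <;> assumption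
          have hc : (s \ {u, v}).card = 1 := by
            rw [Finset.card_sdiff_of_subset hsub, h3, Finset.card_pair hne]
          obtain ⟨x, hx⟩ := Finset.card_eq_one.1 hc
          have hxm : x ∈ s \ {u, v} := by rw [hx]; simp
          simp only [Finset.mem_sdiff, Finset.mem_insert, Finset.mem_singleton, not_or] at hxm
          refine ⟨x, by simp [hD, hxm.2], ?_⟩
          rw [← Finset.sdiff_union_of_subset hsub, hx]
          ext y; simp; tauto
        ext f
        simp only [Finset.mem_sdiff, Finset.mem_erase, not_and]
        constructor
        · rintro ⟨ha, hb⟩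
          exact ⟨ha, hb (fun h => hno (h ▸ ha))⟩
        · rintro ⟨ha, hb⟩
          exact ⟨ha, fun _ => hb⟩
      rw [this]; simp
  refine (Finset.sum_le_sum h1).trans ?_
  rw [← Finset.sum_filter]
  have h2 : ∑ s ∈ (triples n).filter (fun s => s ∈ D.image (fun x => ({u, v, x} : Finset (Fin n)))),
      p ^ (eF (KK s) \ eF G).card ≤ ∑ s ∈ D.image (fun x => ({u, v, x} : Finset (Fin n))),
      p ^ (eF (KK s) \ eF G).card := by
    refine Finset.sum_le_sum_of_subset_of_nonneg ?_ (fun _ _ _ => by positivity)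
    intro s hs; exact (Finset.mem_filter.1 hs).2
  refine h2.trans ?_
  have h3 : ∑ s ∈ D.image (fun x => ({u, v, x} : Finset (Fin n))),
      p ^ (eF (KK s) \ eF G).card ≤ ∑ x ∈ D, p ^ (eF (KK ({u, v, x} : Finset (Fin n))) \ eF G).card := by
    apply Finset.sum_image_le_of_nonneg
    intros; positivity
  refine h3.trans ?_
  have h4 : ∀ x ∈ D, p ^ (eF (KK ({u, v, x} : Finset (Fin n))) \ eF G).card ≤
      (if G.Adj u x then 1 else 0) + p := by
    intro x hx
    simp only [hD, Finset.mem_filter, Finset.mem_univ, true_and] at hx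
    split_ifs with hux
    · have := pow_le_one₀ hp.le hp1 (n := (eF (KK ({u, v, x} : Finset (Fin n))) \ eF G).card)
      linarith
    · rw [zero_add]
      apply pow_le_of_le_one hp.le hp1
      have : s(u, x) ∈ eF (KK ({u, v, x} : Finset (Fin n))) \ eF G := by
        rw [Finset.mem_sdiff, mem_eF_KK, mem_eF]
        refine ⟨by simp [hx.1.symm], hux⟩
      exact Finset.card_ne_zero_of_mem this
  refine (Finset.sum_le_sum h4).trans ?_
  rw [Finset.sum_add_distrib, Finset.sum_const, nsmul_eq_mul, mul_comm p]
  apply add_le_add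
  · rw [← Finset.sum_filter, Finset.sum_const, nsmul_eq_mul, mul_one]
    exact_mod_cast Finset.card_le_card (by
      intro x hx
      simp only [Finset.mem_filter, Finset.mem_univ, true_and] at hx ⊢
      exact hx.2)
  · have : D.card ≤ n := by simpa using Finset.card_le_univ D
    have : (D.card : ℝ) ≤ n := by exact_mod_cast this
    gcongr

lemma sum_deg (G : SimpleGraph (Fin n)) : ∑ v, deg G v = 2 * edgeCount G := by
  have h := G.sum_degrees_eq_twice_card_edges
  have h1 : ∀ v, deg G v = G.degree v := by
    intro v
    unfold deg
    rw [← SimpleGraph.card_neighborFinset_eq_degree]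
    congr 1
    ext; simp
  have h2 : edgeCount G = G.edgeFinset.card := by
    rw [edgeCount_eq]; congr 1; ext; simp [mem_eF]
  simp_rw [h1, h2, h]

def supp (G : SimpleGraph (Fin n)) : Finset (Fin n) :=
  Finset.univ.filter (fun v => ∃ u, G.Adj v u)

lemma supp_card {t : ℝ} (ht : 0 < t) (G : SimpleGraph (Fin n))
    (h : ∀ u v, G.Adj u v → t ≤ (deg G u : ℝ)) :
    ((supp G).card : ℝ) ≤ 2 * edgeCount G / t := by
  rw [le_div_iff₀ ht]
  have h1 : ∑ v ∈ supp G, t ≤ ∑ v ∈ supp G, (deg G v : ℝ) := by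
    refine Finset.sum_le_sum fun v hv => ?_
    obtain ⟨u, hu⟩ := (Finset.mem_filter.1 hv).2
    exact h v u hu
  have h2 : ∑ v ∈ supp G, (deg G v : ℝ) ≤ ∑ v, (deg G v : ℝ) :=
    Finset.sum_le_sum_of_subset_of_nonneg (Finset.subset_univ _) (fun _ _ _ => by positivity)
  have h3 : ∑ v, (deg G v : ℝ) = 2 * edgeCount G := by exact_mod_cast sum_deg G
  rw [Finset.sum_const, nsmul_eq_mul] at h1
  linarith

lemma count_supp (m v : ℕ) (hm : 0 < m) :
    (Finset.univ.filter (fun G : SimpleGraph (Fin n) => edgeCount G = m ∧ (supp G).card ≤ v)).card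
      ≤ n ^ v * (v ^ 2).choose m := by
  let P : (Fin v → Fin n) → Finset (Finset (Sym2 (Fin n))) := fun f =>
    ((Finset.univ : Finset (Fin v × Fin v)).image (fun x => s(f x.1, f x.2))).powersetCard m
  have hP : ∀ f, (P f).card ≤ (v ^ 2).choose m := by
    intro f
    rw [Finset.card_powersetCard]
    apply Nat.choose_le_choose
    refine Finset.card_image_le.trans ?_
    simp [sq]
  have h1 : ((Finset.univ : Finset (Fin v → Fin n)).biUnion P).card ≤ n ^ v * (v ^ 2).choose m := by
    refine (Finset.card_biUnion_le_card_mul _ _ _ (fun f _ => hP f)).trans ?_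
    simp
  refine le_trans ?_ h1
  refine Finset.card_le_card_of_injOn eF ?_ ?_
  · intro G hG
    simp only [Finset.coe_filter, Finset.mem_univ, true_and, Set.mem_ofPred_eq] at hG
    obtain ⟨hG1, hG2⟩ := hG
    rw [Finset.mem_coe, Finset.mem_biUnion]
    rw [edgeCount_eq] at hG1
    have hne : (eF G).Nonempty := by rw [← Finset.card_pos, hG1]; exact hm
    obtain ⟨e, he⟩ := hne
    obtain ⟨x0⟩ : Nonempty (Fin n) := by
      induction e with | _ x y => exact ⟨x⟩
    have hcard : Fintype.card (supp G) ≤ Fintype.card (Fin v) := by simpa using hG2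
    obtain ⟨g⟩ := Function.Embedding.nonempty_of_card_le hcard
    let f : Fin v → Fin n := Function.extend g Subtype.val (fun _ => x0)
    have hf : ∀ x (hx : x ∈ supp G), f (g ⟨x, hx⟩) = x := fun x hx =>
      g.injective.extend_apply _ _ _
    refine ⟨f, Finset.mem_univ _, ?_⟩
    rw [Finset.mem_powersetCard]
    refine ⟨?_, hG1⟩
    intro e he
    rw [mem_eF] at he
    induction e with | _ x y =>
    have hxy : G.Adj x y := he
    have hx : x ∈ supp G := by simp only [supp, Finset.mem_filter, Finset.mem_univ, true_and]; exact ⟨y, hxy⟩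
    have hy : y ∈ supp G := by simp only [supp, Finset.mem_filter, Finset.mem_univ, true_and]; exact ⟨x, hxy.symm⟩
    rw [Finset.mem_image]
    exact ⟨(g ⟨x, hx⟩, g ⟨y, hy⟩), Finset.mem_univ _, by rw [hf, hf]⟩
  · intro G _ H _ h
    exact le_antisymm (eF_subset.1 h.le) (eF_subset.1 h.ge)

lemma choose_le_exp (N m : ℕ) (hm : 0 < m) :
    ((N.choose m : ℕ) : ℝ) ≤ (Real.exp 1 * N / m) ^ m := by
  have h1 := Nat.choose_le_pow_div (α := ℝ) m N
  have h2 := Real.pow_div_factorial_le_exp (m : ℝ) (by positivity) m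
  have hm' : (0 : ℝ) < m := by exact_mod_cast hm
  have hf : (0 : ℝ) < (m.factorial : ℝ) := by exact_mod_cast m.factorial_pos
  refine h1.trans ?_
  rw [div_pow, mul_pow, ← Real.exp_nat_mul, mul_one, div_le_div_iff₀ hf (by positivity)]
  rw [div_le_iff₀ hf] at h2
  calc (N : ℝ) ^ m * (m : ℝ) ^ m ≤ N ^ m * (Real.exp m * m.factorial) := by gcongr
    _ = _ := by ring

/-! ### lower bound -/
lemma prob_tri_lower {p : ℝ} (hp : 0 < p) (hp1 : p ≤ 1) {K X : ℝ} (hK : 0 < K) (hX : 0 ≤ X)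
    (hXK : 6 * K ≤ X ^ 3) (hne : ∃ H : SimpleGraph (Fin n), K ≤ (triangleCount H : ℝ)) :
    p ^ (((X + 3) ^ 2 / 2 : ℝ) : ℝ) ≤ prob n p {H | K ≤ (triangleCount H : ℝ)} := by
  have htri : ∀ (s : Finset (Fin n)) (H : SimpleGraph (Fin n)), KK s ≤ H →
      s.card.choose 3 ≤ triangleCount H := by
    intro s H hs
    rw [← Finset.card_powersetCard]
    refine Finset.card_le_card fun t ht => ?_
    rw [Finset.mem_powersetCard] at ht
    simp only [Finset.mem_filter, Finset.mem_univ, true_and, SimpleGraph.isNClique_iff]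
    refine ⟨?_, ht.2⟩
    exact ((KK_le_iff _ _).1 hs).subset (by exact_mod_cast ht.1)
  have hn : K ≤ ((n.choose 3 : ℕ) : ℝ) := by
    obtain ⟨H, hH⟩ := hne
    refine hH.trans ?_
    have : triangleCount H ≤ n.choose 3 := by
      have h3 : (triples n).card = n.choose 3 := by simp [triples]
      rw [← h3]
      refine Finset.card_le_card fun t ht => ?_
      simp only [Finset.mem_filter, Finset.mem_univ, true_and, SimpleGraph.isNClique_iff] at ht
      simp [triples, Finset.mem_powersetCard, ht.2]
    exact_mod_cast this
  have hex : ∃ m : ℕ, K ≤ ((m.choose 3 : ℕ) : ℝ) := ⟨n, hn⟩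
  obtain ⟨m, hm, hmin⟩ : ∃ m : ℕ, K ≤ ((m.choose 3 : ℕ) : ℝ) ∧
      ∀ j < m, ¬ K ≤ ((j.choose 3 : ℕ) : ℝ) :=
    ⟨Nat.find hex, Nat.find_spec hex, fun j hj => Nat.find_min hex hj⟩
  have hmn : m ≤ n := by
    by_contra h
    exact hmin n (by omega) hn
  obtain ⟨s, -, hs⟩ := Finset.exists_subset_card_eq (s := (Finset.univ : Finset (Fin n))) (n := m)
    (by simpa using hmn)
  have hsub : {H : SimpleGraph (Fin n) | KK s ≤ H} ⊆ {H | K ≤ (triangleCount H : ℝ)} := by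
    intro H hH
    have := htri s H hH
    rw [hs] at this
    have h' : ((m.choose 3 : ℕ) : ℝ) ≤ triangleCount H := by exact_mod_cast this
    exact hm.trans h'
  refine le_trans ?_ (prob_mono hp.le hp1 hsub)
  rw [prob_ge, edgeCount_KK, hs, ← Real.rpow_natCast p (m.choose 2)]
  refine Real.rpow_le_rpow_of_exponent_ge hp hp1 ?_
  have hm3 : (m : ℝ) ≤ X + 3 := by
    rcases Nat.lt_or_ge m 3 with h | h
    · have : (m : ℝ) ≤ 3 := by exact_mod_cast h.le
      linarith
    · obtain ⟨j, rfl⟩ : ∃ j, m = j + 3 := ⟨m - 3, by omega⟩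
      have h1 := hmin (j + 2) (by omega)
      push Not at h1
      have h2 : (j : ℝ) ^ 3 ≤ 6 * (((j + 2).choose 3 : ℕ) : ℝ) := by
        have := Nat.pow_sub_le_descFactorial (j + 2) 3
        rw [Nat.descFactorial_eq_factorial_mul_choose] at this
        have h6 : (3).factorial = 6 := by decide
        rw [h6] at this
        simp only [show j + 2 + 1 - 3 = j by omega] at this
        exact_mod_cast this
      have h3 : (j : ℝ) ^ 3 ≤ X ^ 3 := by linarith
      have h4 : (j : ℝ) ≤ X := le_of_pow_le_pow_left₀ (by norm_num) hX h3
      push_cast; linarith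
  have hc : ((m.choose 2 : ℕ) : ℝ) ≤ (m : ℝ) ^ 2 / 2 := by
    have := Nat.choose_le_pow_div (α := ℝ) 2 m
    simpa using this
  refine hc.trans ?_
  gcongr

end UMC

namespace UMC

variable {n : ℕ}

lemma core_count {p a w C k C' x L : ℝ} (hp : 0 < p) (hp1 : p ≤ 1)
    (ha : 0 < a) (hw : 0 < w) (hC : 0 < C) (hx : 0 < x) (hL : 0 < L) (hL' : Real.log (1 / p) = L)
    (h13 : k ^ ((1 : ℝ) / 3) = x) (h23 : k ^ ((2 : ℝ) / 3) = x ^ 2)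
    (hτ : p * n ≤ w ^ 2 * x / (C * a * L) / 2) (hn : 1 ≤ n)
    (hC1 : 4 * C * a ≤ C') (hC2 : 16 * Real.exp 1 * C ^ 3 * a ^ 3 ≤ C') (m : ℕ) (hm : 0 < m) :
    ((Finset.univ.filter (fun G : SimpleGraph (Fin n) =>
      IsCore n p a w C k G ∧ edgeCount G = m)).card : ℝ) ≤
      Real.exp (m * (L * (C' * Real.log n / (w ^ 2 * x) +
        Real.log (C' * w ^ (-(5 : ℝ)) * L ^ 3) / L))) := by
  set τ := w ^ 2 * x / (C * a * L) with hτd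
  have hτ0 : 0 < τ := by positivity
  have hC'0 : 0 < C' := lt_of_lt_of_le (by positivity) hC1
  have hw5 : w ^ (-(5 : ℝ)) = (w ^ 5)⁻¹ := by
    rw [Real.rpow_neg hw.le]; norm_cast
  have hm' : (0 : ℝ) < m := by exact_mod_cast hm
  by_cases hmB : (m : ℝ) ≤ C * a * w⁻¹ * x ^ 2 * L
  swap
  · rw [Finset.filter_false_of_mem]
    · simp; positivity
    · rintro G - ⟨h1, h2⟩
      have := h1.2.1
      rw [h23, hL', h2] at this
      exact hmB this
  set v := ⌊4 * (m : ℝ) / τ⌋₊ with hv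
  have hvle : (v : ℝ) ≤ 4 * m / τ := Nat.floor_le (by positivity)
  have h1 : ((Finset.univ.filter (fun G : SimpleGraph (Fin n) =>
      IsCore n p a w C k G ∧ edgeCount G = m)).card : ℝ) ≤
      (n : ℝ) ^ v * (((v ^ 2).choose m : ℕ) : ℝ) := by
    have : (Finset.univ.filter (fun G : SimpleGraph (Fin n) =>
      IsCore n p a w C k G ∧ edgeCount G = m)).card ≤ n ^ v * (v ^ 2).choose m := by
      refine le_trans (Finset.card_le_card ?_) (count_supp m v hm)
      intro G hG
      simp only [Finset.mem_filter, Finset.mem_univ, true_and] at hG ⊢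
      obtain ⟨hG1, hG2⟩ := hG
      refine ⟨hG2, ?_⟩
      apply Nat.le_floor
      have := supp_card (t := τ / 2) (by positivity) G (by
        intro u y huy
        have h3 := hG1.2.2 s(u, y) huy
        have h4 := delta_le hp hp1 G u y huy
        rw [h13, hL', ← hτd] at h3
        linarith)
      rw [hG2] at this
      refine this.trans_eq ?_
      field_simp; norm_num
    exact_mod_cast this
  refine h1.trans ?_
  have hn0 : (0 : ℝ) < n := by exact_mod_cast hn
  have hlogn : 0 ≤ Real.log n := Real.log_nonneg (by exact_mod_cast hn)
  have hA : 0 < C' * w ^ (-(5 : ℝ)) * L ^ 3 := by positivity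
  have h2 : (n : ℝ) ^ v ≤ Real.exp (m * (L * (C' * Real.log n / (w ^ 2 * x)))) := by
    rw [← Real.rpow_natCast, Real.rpow_def_of_pos hn0, Real.exp_le_exp]
    calc Real.log n * v ≤ Real.log n * (4 * m / τ) := by gcongr
      _ = m * (L * ((4 * C * a) * Real.log n / (w ^ 2 * x))) := by
        rw [hτd]; field_simp
      _ ≤ _ := by gcongr
  have h3 : (((v ^ 2).choose m : ℕ) : ℝ) ≤
      Real.exp (m * Real.log (C' * w ^ (-(5 : ℝ)) * L ^ 3)) := by
    rw [Real.exp_nat_mul, Real.exp_log hA]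
    refine (choose_le_exp _ _ hm).trans ?_
    gcongr
    push_cast
    calc Real.exp 1 * (v : ℝ) ^ 2 / m ≤ Real.exp 1 * (4 * m / τ) ^ 2 / m := by gcongr
      _ = 16 * Real.exp 1 * m / τ ^ 2 := by field_simp; norm_num
      _ ≤ 16 * Real.exp 1 * (C * a * w⁻¹ * x ^ 2 * L) / τ ^ 2 := by gcongr
      _ = (16 * Real.exp 1 * C ^ 3 * a ^ 3) * w ^ (-(5 : ℝ)) * L ^ 3 := by
        rw [hτd, hw5]; field_simp
      _ ≤ _ := by gcongr
  calc (n : ℝ) ^ v * (((v ^ 2).choose m : ℕ) : ℝ) ≤ _ :=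
        mul_le_mul h2 h3 (by positivity) (by positivity)
    _ = _ := by
      rw [← Real.exp_add]; congr 1; field_simp

lemma core_prob {p a w C k L ψ M : ℝ} (hp : 0 < p) (hp1 : p ≤ 1)
    (hL : 0 < L) (hpL : p = Real.exp (-L))
    (hn : 1 ≤ n) (hM : 0 ≤ M) (hψ : ψ ≤ 1)
    (hcount : ∀ m : ℕ, 0 < m → ((Finset.univ.filter (fun G : SimpleGraph (Fin n) =>
      IsCore n p a w C k G ∧ edgeCount G = m)).card : ℝ) ≤ Real.exp (m * (L * ψ))) :
    prob n p {H | ∃ G, G ≤ H ∧ IsCore n p a w C k G ∧ M < (edgeCount G : ℝ)} ≤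
      (n : ℝ) ^ 2 * Real.exp (-(L * (M * (1 - ψ)))) := by
  set S : Finset (SimpleGraph (Fin n)) := Finset.univ.filter (fun G : SimpleGraph (Fin n) =>
      IsCore n p a w C k G ∧ M < (edgeCount G : ℝ)) with hS
  have h1 : prob n p {H | ∃ G, G ≤ H ∧ IsCore n p a w C k G ∧ M < (edgeCount G : ℝ)} ≤
      prob n p {H | ∃ G ∈ S, G ≤ H} := by
    refine prob_mono hp.le hp1 ?_
    rintro H ⟨G, h1, h2⟩
    exact ⟨G, by simp [hS, h2], h1⟩
  refine (h1.trans (prob_exists_le hp.le hp1 S)).trans ?_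
  have hmaps : ∀ G ∈ S, edgeCount G ∈ Finset.range (n.choose 2 + 1) := fun G _ => by
    rw [Finset.mem_range]; have := edgeCount_le G; omega
  rw [← Finset.sum_fiberwise_of_maps_to hmaps]
  have h2 : ∀ m ∈ Finset.range (n.choose 2 + 1),
      ∑ G ∈ S.filter (fun G => edgeCount G = m), p ^ edgeCount G ≤
      Real.exp (-(L * (M * (1 - ψ)))) := by
    intro m _
    have h3 : ∑ G ∈ S.filter (fun G => edgeCount G = m), p ^ edgeCount G =
        ((S.filter (fun G => edgeCount G = m)).card : ℝ) * p ^ m := by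
      rw [← nsmul_eq_mul, ← Finset.sum_const]
      refine Finset.sum_congr rfl fun G hG => ?_
      rw [(Finset.mem_filter.1 hG).2]
    rw [h3]
    by_cases hmM : M < m
    · have hm : 0 < m := by
        have : (0 : ℝ) < m := by linarith
        exact_mod_cast this
      have h4 : ((S.filter (fun G => edgeCount G = m)).card : ℝ) ≤ Real.exp (m * (L * ψ)) := by
        refine le_trans ?_ (hcount m hm)
        norm_cast
        refine Finset.card_le_card fun G hG => ?_
        simp only [hS, Finset.mem_filter, Finset.mem_univ, true_and] at hG ⊢
        exact ⟨hG.1.1, hG.2⟩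
      calc _ ≤ Real.exp (m * (L * ψ)) * p ^ m := by gcongr
        _ = Real.exp (-(L * (m * (1 - ψ)))) := by
          rw [hpL, ← Real.exp_nat_mul, ← Real.exp_add]; congr 1; ring
        _ ≤ _ := by
          rw [Real.exp_le_exp]
          have : 0 ≤ 1 - ψ := by linarith
          have : M * (1 - ψ) ≤ m * (1 - ψ) := by gcongr
          have := mul_le_mul_of_nonneg_left this hL.le
          linarith
    · have : S.filter (fun G => edgeCount G = m) = ∅ := by
        rw [Finset.filter_eq_empty_iff]
        intro G hG h
        simp only [hS, Finset.mem_filter, Finset.mem_univ, true_and] at hG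
        rw [h] at hG
        exact hmM hG.2
      rw [this]; simp; positivity
  refine (Finset.sum_le_sum h2).trans ?_
  rw [Finset.sum_const, nsmul_eq_mul, Finset.card_range]
  gcongr
  have : n.choose 2 + 1 ≤ n ^ 2 := by
    have h5 := Nat.choose_two_right n
    have h6 : n * (n - 1) / 2 * 2 ≤ n * (n - 1) := Nat.div_mul_le_self _ _
    obtain ⟨j, rfl⟩ : ∃ j, n = j + 1 := ⟨n - 1, by omega⟩
    simp only [Nat.add_sub_cancel] at *
    nlinarith
  exact_mod_cast this

set_option maxHeartbeats 1000000 in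
lemma det {p a w C k C' x L δ X ψ b : ℝ} (hp : 0 < p) (hp1 : p ≤ 1)
    (ha : 0 < a) (hw : 0 < w) (hx : 1 ≤ x) (hL : 0 < L)
    (hL' : Real.log (1 / p) = L) (hk : 0 < k)
    (h13 : k ^ ((1 : ℝ) / 3) = x) (h23 : k ^ ((2 : ℝ) / 3) = x ^ 2)
    (hτ : p * n ≤ w ^ 2 * x / (C * a * L) / 2) (hn : 1 ≤ n)
    (hC1 : 4 * C * a ≤ C') (hC2 : 16 * Real.exp 1 * C ^ 3 * a ^ 3 ≤ C')
    (hwa : w ≤ a) (hC : C = 3 * (b ^ 2 + 1)) (hX : X = b * x) (hX10 : 10 ≤ X)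
    (hb3 : 6 * a * k = X ^ 3)
    (hψ : ψ = C' * Real.log n / (w ^ 2 * x) + Real.log (C' * w ^ (-(5 : ℝ)) * L ^ 3) / L)
    (hψ0 : 0 ≤ ψ) (hψ1 : ψ ≤ 1 / 20) (hXψ : 50 ≤ X * ψ) (hpδ : p ≤ δ / 6)
    (hnL : 2 * Real.log n ≤ 3 * L) :
    prob n p ({H | a * k ≤ (triangleCount H : ℝ)} ∩
      {H | ¬ ∃ G', G' ≤ H ∧ IsCore n p a w C k G' ∧
        (edgeCount G' : ℝ) ≤ (1 / 2) * (6 * a * (1 + 2 * ψ) * k) ^ ((2 : ℝ) / 3)}) ≤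
      δ * prob n p {H | a * k ≤ (triangleCount H : ℝ)} := by
  have hC0 : 0 < C := by rw [hC]; positivity
  have hpL : p = Real.exp (-L) := by
    rw [← hL', one_div, Real.log_inv, neg_neg, Real.exp_log hp]
  by_cases hne : ∃ H : SimpleGraph (Fin n), a * k ≤ (triangleCount H : ℝ)
  swap
  · push Not at hne
    have h1 : {H : SimpleGraph (Fin n) | a * k ≤ (triangleCount H : ℝ)} = ∅ := by
      ext H; simp [hne H]
    rw [h1]; simp [prob]
  have hlow := prob_tri_lower (X := X) hp hp1 (by positivity : 0 < a * k) (by linarith)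
    (by linarith) hne
  have hlow' : Real.exp (-(L * ((X + 3) ^ 2 / 2))) ≤ prob n p {H | a * k ≤ (triangleCount H : ℝ)} := by
    refine le_trans (le_of_eq ?_) hlow
    conv_rhs => rw [hpL]
    rw [← Real.exp_mul]; congr 1; ring
  set M : ℝ := (1 / 2) * (6 * a * (1 + 2 * ψ) * k) ^ ((2 : ℝ) / 3) with hMd
  set B : ℝ := C * a * w⁻¹ * x ^ 2 * L with hB
  have hB0 : 0 < B := by positivity
  have hM : 1 / 2 * X ^ 2 * (1 + 13 / 10 * ψ) ≤ M := by
    rw [hMd, mul_assoc]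
    gcongr
    have hX0 : 0 < X := by linarith
    have h1 : ((X * X * (1 + 13 / 10 * ψ)) ^ (3 : ℕ)) ≤ (6 * a * (1 + 2 * ψ) * k) ^ (2 : ℕ) := by
      have : 6 * a * (1 + 2 * ψ) * k = X ^ 3 * (1 + 2 * ψ) := by rw [← hb3]; ring
      rw [this]
      have h2 : (1 + 13 / 10 * ψ) ^ 3 ≤ (1 + 2 * ψ) ^ 2 := by
        nlinarith only [hψ0, hψ1, mul_nonneg hψ0 (sub_nonneg.2 hψ1), mul_nonneg (mul_nonneg hψ0 hψ0) (sub_nonneg.2 hψ1)]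
      calc (X * X * (1 + 13 / 10 * ψ)) ^ (3 : ℕ) = X ^ 6 * (1 + 13 / 10 * ψ) ^ 3 := by ring
        _ ≤ X ^ 6 * (1 + 2 * ψ) ^ 2 := by gcongr
        _ = _ := by ring
    have h3 : (6 * a * (1 + 2 * ψ) * k) ^ ((2 : ℝ) / 3) =
        ((6 * a * (1 + 2 * ψ) * k) ^ (2 : ℕ)) ^ ((1 : ℝ) / 3) := by
      rw [← Real.rpow_natCast, ← Real.rpow_mul (by positivity)]; norm_num
    have h4 : X ^ 2 * (1 + 13 / 10 * ψ) = ((X * X * (1 + 13 / 10 * ψ)) ^ (3 : ℕ)) ^ ((1 : ℝ) / 3) := by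
      have e : X ^ 2 * (1 + 13 / 10 * ψ) = X * X * (1 + 13 / 10 * ψ) := by ring
      rw [e, ← Real.rpow_natCast (X * X * (1 + 13 / 10 * ψ)), ← Real.rpow_mul (by positivity)]
      norm_num
    rw [h3, h4]
    exact Real.rpow_le_rpow (by positivity) h1 (by norm_num)
  have hM0 : 0 ≤ M := le_trans (by positivity) hM
  -- core part
  have hcore := core_prob (M := M) (ψ := ψ) (n := n) hp hp1 hL hpL hn hM0 (by linarith)
    (fun m hm => by
      have := core_count (n := n) hp hp1 ha hw hC0 (by linarith) hL hL' h13 h23 hτ hn hC1 hC2 m hm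
      rwa [← hψ] at this)
  have hδ2 : Real.exp (-L) ≤ δ / 6 := hpL ▸ hpδ
  have hδ0 : 0 < δ := by linarith
  have hcore2 : (n : ℝ) ^ 2 * Real.exp (-(L * (M * (1 - ψ)))) ≤
      δ / 2 * Real.exp (-(L * ((X + 3) ^ 2 / 2))) := by
    have hn0 : (0 : ℝ) < n := by exact_mod_cast hn
    have h1 : (n : ℝ) ^ 2 ≤ Real.exp (3 * L) := by
      rw [← Real.exp_log hn0, ← Real.exp_nat_mul, Real.exp_le_exp]
      simpa using hnL
    have h2 : (X + 3) ^ 2 / 2 + 4 ≤ M * (1 - ψ) := by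
      have h3 : 1 / 2 * X ^ 2 * (1 + 13 / 10 * ψ) * (1 - ψ) ≤ M * (1 - ψ) := by
        have : 0 ≤ 1 - ψ := by linarith
        gcongr
      have h4 : 1 + 1 / 5 * ψ ≤ (1 + 13 / 10 * ψ) * (1 - ψ) := by
        have := mul_nonneg hψ0 (sub_nonneg.2 hψ1)
        linarith
      have h5 : 1 / 2 * X ^ 2 * (1 + 1 / 5 * ψ) ≤ 1 / 2 * X ^ 2 * ((1 + 13 / 10 * ψ) * (1 - ψ)) := by
        gcongr
      have h6 : X * 50 ≤ X * (X * ψ) := mul_le_mul_of_nonneg_left hXψ (by linarith)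
      linarith
    calc (n : ℝ) ^ 2 * Real.exp (-(L * (M * (1 - ψ))))
        ≤ Real.exp (3 * L) * Real.exp (-(L * ((X + 3) ^ 2 / 2 + 4))) := by gcongr
      _ = Real.exp (-L) * Real.exp (-(L * ((X + 3) ^ 2 / 2))) := by
        rw [← Real.exp_add, ← Real.exp_add]; congr 1; ring
      _ ≤ _ := by gcongr; linarith
  -- seed part
  have hseed := prob_no_seed (n := n) (B := B) hp hp1 ha hk hwa ⌊B / 3⌋₊ (by
    have := Nat.floor_le (by positivity : 0 ≤ B / 3)
    linarith)
  have hseed2 : (1 - w / a) ^ ⌊B / 3⌋₊ ≤ δ / 2 * Real.exp (-(L * ((X + 3) ^ 2 / 2))) := by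
    have h0 : 0 ≤ 1 - w / a := by
      rw [sub_nonneg, div_le_one ha]; exact hwa
    have h1 : 1 - w / a ≤ Real.exp (-(w / a)) := by
      have := Real.add_one_le_exp (-(w / a)); linarith
    have h2 : B / 3 - 1 ≤ (⌊B / 3⌋₊ : ℝ) := (Nat.sub_one_lt_floor _).le
    have h3 : (w / a) * (B / 3 - 1) = (b ^ 2 + 1) * x ^ 2 * L - w / a := by
      rw [hB, hC]; field_simp
    have h4 : w / a ≤ 1 := by linarith
    have h5 : (w / a) * (B / 3 - 1) ≤ (w / a) * (⌊B / 3⌋₊ : ℝ) := by gcongr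
    have h6 : L * ((X + 3) ^ 2 / 2) ≤ L * X ^ 2 := by
      gcongr; nlinarith only [hX10]
    have h7 : L * 1 ≤ L * x ^ 2 := by
      gcongr; exact one_le_pow₀ hx
    have h8 : (b ^ 2 + 1) * x ^ 2 * L = L * X ^ 2 + L * x ^ 2 := by rw [hX]; ring
    calc (1 - w / a) ^ ⌊B / 3⌋₊ ≤ Real.exp (-(w / a)) ^ ⌊B / 3⌋₊ := by gcongr
      _ = Real.exp (-((w / a) * (⌊B / 3⌋₊ : ℝ))) := by
        rw [← Real.exp_nat_mul]; congr 1; ring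
      _ ≤ Real.exp (1 + -L + -(L * ((X + 3) ^ 2 / 2))) := by
        rw [Real.exp_le_exp]; linarith
      _ = Real.exp 1 * Real.exp (-L) * Real.exp (-(L * ((X + 3) ^ 2 / 2))) := by
        rw [Real.exp_add, Real.exp_add]
      _ ≤ _ := by
        gcongr
        have : Real.exp 1 ≤ 3 := Real.exp_one_lt_three.le
        calc Real.exp 1 * Real.exp (-L) ≤ 3 * (δ / 6) := by gcongr
          _ = δ / 2 := by ring
  -- inclusion
  have hincl : ({H | a * k ≤ (triangleCount H : ℝ)} ∩
      {H | ¬ ∃ G', G' ≤ H ∧ IsCore n p a w C k G' ∧ (edgeCount G' : ℝ) ≤ M}) ⊆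
      {H | a * k ≤ (triangleCount H : ℝ) ∧
        ∀ G ≤ H, (edgeCount G : ℝ) ≤ B → condTri n p G < (a - w) * k} ∪
      {H | ∃ G, G ≤ H ∧ IsCore n p a w C k G ∧ M < (edgeCount G : ℝ)} := by
    rintro H ⟨h1, h2⟩
    by_cases h3 : ∀ G ≤ H, (edgeCount G : ℝ) ≤ B → condTri n p G < (a - w) * k
    · exact Or.inl ⟨h1, h3⟩
    · right
      push Not at h3
      obtain ⟨G, hG1, hG2, hG3⟩ := h3
      have hτ0 : 0 ≤ w ^ 2 * x / (C * a * L) := by positivity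
      obtain ⟨G', hle, hc1, hc2⟩ := seed_core (p := p) hτ0 (edgeCount G) G rfl
      have hcr : IsCore n p a w C k G' := by
        refine ⟨?_, ?_, ?_⟩
        · have h4 : w ^ 2 * x / (C * a * L) * (edgeCount G : ℝ) ≤ w ^ 2 * x / (C * a * L) * B := by
            gcongr
          have hk3 : k = x ^ 3 := by
            rw [← h13, ← Real.rpow_natCast, ← Real.rpow_mul hk.le]; norm_num
          have h5 : w ^ 2 * x / (C * a * L) * B = w * k := by
            rw [hB, hk3]; field_simp
          linarith
        · rw [h23, hL']
          have : (edgeCount G' : ℝ) ≤ edgeCount G := by exact_mod_cast edgeCount_mono hle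
          linarith
        · rw [h13, hL']; exact hc2
      refine ⟨G', hle.trans hG1, hcr, ?_⟩
      by_contra h
      exact h2 ⟨G', hle.trans hG1, hcr, not_lt.1 h⟩
  calc _ ≤ _ := prob_mono hp.le hp1 hincl
    _ ≤ _ := prob_union_le hp.le hp1 _ _
    _ ≤ δ / 2 * Real.exp (-(L * ((X + 3) ^ 2 / 2))) + δ / 2 * Real.exp (-(L * ((X + 3) ^ 2 / 2))) :=
      add_le_add (hseed.trans hseed2) (hcore.trans hcore2)
    _ = δ * Real.exp (-(L * ((X + 3) ^ 2 / 2))) := by ring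
    _ ≤ _ := by gcongr

end UMC

/-- **Unlikely not to have a `2ψ_n`-minimal core.** -/
theorem unlikely_no_minimal_core (l a δ : ℝ) (hl : 0 < l) (ha : 0 < a) (hδ : 0 < δ) :
    ∃ C C' : ℝ, 0 < C ∧ 0 < C' ∧
      ∀ k w : ℕ → ℝ, (∀ n, 0 < k n) → (∀ n, 0 < w n) →
        Tendsto w atTop (nhds 0) →
        Tendsto (fun n : ℕ => Real.log n / ((w n) ^ 2 * (k n) ^ ((1 : ℝ) / 3))) atTop (nhds 0) →
        Tendsto (fun n : ℕ => Real.log (w n) / Real.log (1 / (l / n))) atTop (nhds 0) →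
        ∃ n₀ : ℕ, ∀ n ≥ n₀,
          prob n (l / n)
              ({H | a * k n ≤ (triangleCount H : ℝ)} ∩
                {H | ¬ ∃ G', G' ≤ H ∧ IsCore n (l / n) a (w n) C (k n) G' ∧
                    (edgeCount G' : ℝ) ≤
                      (1 / 2) * (6 * a * (1 + 2 *
                        (C' * Real.log n / ((w n) ^ 2 * (k n) ^ ((1 : ℝ) / 3)) +
                          Real.log (C' * (w n) ^ (-(5 : ℝ)) * (Real.log (1 / (l / n))) ^ 3) /
                            Real.log (1 / (l / n)))) * k n) ^ ((2 : ℝ) / 3)}) ≤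
            δ * prob n (l / n) {H | a * k n ≤ (triangleCount H : ℝ)} := by

  obtain ⟨b, hb0, hb3⟩ : ∃ b : ℝ, 0 < b ∧ b ^ 3 = 6 * a := by
    refine ⟨(6 * a) ^ ((1 : ℝ) / 3), by positivity, ?_⟩
    rw [← Real.rpow_natCast, ← Real.rpow_mul (by positivity)]; norm_num
  obtain ⟨C, hC⟩ : ∃ C : ℝ, C = 3 * (b ^ 2 + 1) := ⟨_, rfl⟩
  have hC0 : 0 < C := by rw [hC]; positivity
  obtain ⟨C', hC'1, hC1, hC2⟩ : ∃ C' : ℝ, 1 ≤ C' ∧ 4 * C * a ≤ C' ∧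
      16 * Real.exp 1 * C ^ 3 * a ^ 3 ≤ C' := by
    refine ⟨1 + 4 * C * a + 16 * Real.exp 1 * C ^ 3 * a ^ 3, ?_, ?_, ?_⟩
    · have : 0 ≤ 4 * C * a + 16 * Real.exp 1 * C ^ 3 * a ^ 3 := by positivity
      linarith
    · have : 0 ≤ 16 * Real.exp 1 * C ^ 3 * a ^ 3 := by positivity
      linarith
    · have : 0 ≤ 4 * C * a := by positivity
      linarith
  refine ⟨C, C', hC0, by linarith, ?_⟩
  intro k w hk hw hw0 ht1 ht2
  have hlog : Tendsto (fun n : ℕ => Real.log n) atTop atTop :=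
    Real.tendsto_log_atTop.comp tendsto_natCast_atTop_atTop
  have hLeq : ∀ n : ℕ, 1 ≤ n → Real.log (1 / (l / n)) = Real.log n - Real.log l := by
    intro n hn
    have : (0 : ℝ) < n := by exact_mod_cast hn
    rw [one_div_div, Real.log_div this.ne' hl.ne']
  have hLt : Tendsto (fun n : ℕ => Real.log (1 / (l / n))) atTop atTop := by
    have h1 : Tendsto (fun n : ℕ => Real.log n - Real.log l) atTop atTop :=
      tendsto_atTop_add_const_right _ _ hlog
    refine h1.congr' ?_
    filter_upwards [eventually_ge_atTop 1] with n hn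
    exact (hLeq n hn).symm
  have ht3 : Tendsto (fun n : ℕ => Real.log C' / Real.log (1 / (l / n))
      - 5 * (Real.log (w n) / Real.log (1 / (l / n)))
      + 3 * (Real.log (Real.log (1 / (l / n))) / Real.log (1 / (l / n)))) atTop (nhds 0) := by
    have h1 : Tendsto (fun n : ℕ => Real.log C' / Real.log (1 / (l / n))) atTop (nhds 0) :=
      hLt.const_div_atTop _
    have h2 : Tendsto (fun x : ℝ => Real.log x / x) atTop (nhds 0) :=
      Real.isLittleO_log_id_atTop.tendsto_div_nhds_zero
    have h3 := h2.comp hLt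
    have := (h1.sub (ht2.const_mul 5)).add (h3.const_mul 3)
    simpa using this
  have hp0 : Tendsto (fun n : ℕ => l / (n : ℝ)) atTop (nhds 0) :=
    tendsto_const_div_atTop_nhds_zero_nat l
  have hε : 0 < 1 / (4 * C * a * l) := by positivity
  have hC'0 : 0 < C' := by linarith
  have hε2 : 0 < 1 / (40 * C') := by positivity
  have key : ∀ᶠ n : ℕ in atTop, prob n (l / n)
              ({H | a * k n ≤ (triangleCount H : ℝ)} ∩
                {H | ¬ ∃ G', G' ≤ H ∧ IsCore n (l / n) a (w n) C (k n) G' ∧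
                    (edgeCount G' : ℝ) ≤
                      (1 / 2) * (6 * a * (1 + 2 *
                        (C' * Real.log n / ((w n) ^ 2 * (k n) ^ ((1 : ℝ) / 3)) +
                          Real.log (C' * (w n) ^ (-(5 : ℝ)) * (Real.log (1 / (l / n))) ^ 3) /
                            Real.log (1 / (l / n)))) * k n) ^ ((2 : ℝ) / 3)}) ≤
            δ * prob n (l / n) {H | a * k n ≤ (triangleCount H : ℝ)} := by
    filter_upwards [eventually_ge_atTop 1, hLt.eventually_ge_atTop 1,
      hlog.eventually_ge_atTop 1, hlog.eventually_ge_atTop (10 / b),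
      hlog.eventually_ge_atTop (50 / (b * C')), hlog.eventually_ge_atTop (3 * Real.log l),
      hlog.eventually_ge_atTop (-Real.log l),
      hp0.eventually_le_const one_pos, hp0.eventually_le_const (by positivity : 0 < δ / 6),
      hw0.eventually_le_const ha, hw0.eventually_le_const one_pos,
      ht1.eventually_le_const one_pos, ht1.eventually_le_const hε, ht1.eventually_le_const hε2,
      ht3.eventually_le_const (by norm_num : (0 : ℝ) < 1 / 40)]
      with n hn hL1 hlog1 hlogb hlogC hlogl hlogl2 hp1 hpδ hwa hw1 ht1a ht1b ht1c ht3a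
    have hLe := hLeq n hn
    obtain ⟨L, hLd⟩ : ∃ L, Real.log (1 / (l / (n : ℝ))) = L := ⟨_, rfl⟩
    obtain ⟨x, hxd⟩ : ∃ x, (k n) ^ ((1 : ℝ) / 3) = x := ⟨_, rfl⟩
    rw [hLd] at hL1 hLe ht3a
    rw [hxd] at ht1a ht1b ht1c
    rw [hLd, hxd]
    have hkn := hk n
    have hwn := hw n
    have hn0 : (0 : ℝ) < n := by exact_mod_cast hn
    have hx0 : 0 < x := by rw [← hxd]; positivity
    have hk3 : k n = x ^ 3 := by
      rw [← hxd, ← Real.rpow_natCast, ← Real.rpow_mul hkn.le]; norm_num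
    have h23 : (k n) ^ ((2 : ℝ) / 3) = x ^ 2 := by
      rw [← hxd, ← Real.rpow_natCast, ← Real.rpow_mul hkn.le]; norm_num
    have hw2 : (w n) ^ 2 ≤ 1 := pow_le_one₀ hwn.le hw1
    have hw2p : 0 < (w n) ^ 2 := by positivity
    have hxlog : Real.log n ≤ x := by
      rw [div_le_one (by positivity)] at ht1a
      have h1 : (w n) ^ 2 * x ≤ 1 * x := by gcongr
      linarith
    have hx1 : 1 ≤ x := by linarith
    have hw5 : (w n) ^ (-(5 : ℝ)) = ((w n) ^ 5)⁻¹ := by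
      rw [Real.rpow_neg hwn.le]; norm_cast
    have hlog2 : Real.log (C' * (w n) ^ (-(5 : ℝ)) * L ^ 3) =
        Real.log C' - 5 * Real.log (w n) + 3 * Real.log L := by
      have : L ≠ 0 := by linarith
      rw [hw5, Real.log_mul (by positivity) (by positivity), Real.log_mul (by positivity) (by positivity),
        Real.log_inv, Real.log_pow, Real.log_pow]
      push_cast; ring
    have hlog2n : 0 ≤ Real.log (C' * (w n) ^ (-(5 : ℝ)) * L ^ 3) / L := by
      apply div_nonneg _ (by linarith)
      apply Real.log_nonneg
      have h1 : 1 ≤ (w n) ^ (-(5 : ℝ)) := by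
        rw [hw5]
        exact (one_le_inv₀ (by positivity)).2 (pow_le_one₀ hwn.le hw1)
      have h2 : 1 ≤ L ^ 3 := one_le_pow₀ hL1
      exact one_le_mul_of_one_le_of_one_le (one_le_mul_of_one_le_of_one_le hC'1 h1) h2
    have hlog2u : Real.log (C' * (w n) ^ (-(5 : ℝ)) * L ^ 3) / L ≤ 1 / 40 := by
      refine le_trans (le_of_eq ?_) ht3a
      rw [hlog2]; ring
    have hfirst : 0 ≤ C' * Real.log n / ((w n) ^ 2 * x) := by
      have : 0 ≤ Real.log n := by linarith
      positivity
    refine UMC.det (x := x) (L := L) (C' := C') (b := b) (X := b * x) (by positivity) hp1 ha hwn hx1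
      (by linarith) hLd hkn hxd h23 ?_ hn hC1 hC2 hwa hC rfl ?_ ?_ rfl ?_ ?_ ?_ hpδ ?_
    · -- tau bound
      have h1 : l / (n : ℝ) * n = l := by field_simp
      have hLpos : 0 < L := by linarith
      rw [h1, le_div_iff₀ (by norm_num), le_div_iff₀ (by positivity)]
      rw [div_le_div_iff₀ (by positivity) (by positivity)] at ht1b
      have h2 : L ≤ 2 * Real.log n := by linarith
      have h3 : l * 2 * (C * a * L) ≤ l * 2 * (C * a * (2 * Real.log n)) := by gcongr
      linarith
    · rw [div_le_iff₀ hb0] at hlogb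
      have h1 : Real.log n * b ≤ x * b := by gcongr
      linarith
    · rw [← hb3, hk3]; ring
    · linarith
    · have h1 : C' * Real.log n / ((w n) ^ 2 * x) ≤ 1 / 40 := by
        rw [mul_div_assoc]
        calc C' * (Real.log n / ((w n) ^ 2 * x)) ≤ C' * (1 / (40 * C')) := by gcongr
          _ = 1 / 40 := by field_simp
      linarith
    · have h1 : b * x * (C' * Real.log n / ((w n) ^ 2 * x)) = b * C' * Real.log n / (w n) ^ 2 := by
        field_simp
      have h2 : 50 ≤ b * C' * Real.log n / (w n) ^ 2 := by
        rw [div_le_iff₀ (by positivity)] at hlogC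
        rw [le_div_iff₀ hw2p]
        linarith
      have h3 : 0 ≤ b * x * (Real.log (C' * (w n) ^ (-(5 : ℝ)) * L ^ 3) / L) := by positivity
      rw [mul_add]; linarith
    · linarith
  exact eventually_atTop.1 key
end
end

section
/- Fix λ > 0 and set p_n = λ/n. There exists n₀ (depending only on λ) such that for all n ≥ n₀, every integer k ≥ 0 divisible by 3, and every set S ⊆ [n] with |S| = k: P(𝒯_S) ≥ [ k! / ( (3!)^{k/3} · (k/3)! ) ] · p_n^k · (1 − p_n)^{ binom(k,2) − k + (n−k)k } · (9/10) · e^{−λ³/6}, where 𝒯_S is the event that the induced subgraph of G_{n,p_n} on S has edge set equal to a union of k/3 pairwise vertex-disjoint triangles covering S (and no other edges inside S), and the graph obtained from G_{n,p_n} by deleting all edges with both endpoints in S contains no triangle. -/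
open scoped BigOperators Classical
open Finset Filter

noncomputable section

/-- Weight of a subset `A` of `U` under independent `p`-percolation. -/
def wt {α : Type*} (U : Finset α) (p : ℝ) (A : Finset α) : ℝ :=
  if A ⊆ U then p ^ A.card * (1 - p) ^ (U.card - A.card) else 0

lemma wt_nonneg {α : Type*} (U : Finset α) {p : ℝ} (h0 : 0 ≤ p) (h1 : p ≤ 1) (A : Finset α) :
    0 ≤ wt U p A := by
  have : 0 ≤ 1 - p := by linarith
  unfold wt
  split_ifs <;> positivity

lemma sum_wt {α : Type*} [Fintype α] [DecidableEq α] (U : Finset α) (p : ℝ) (f : Finset α → ℝ) :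
    ∑ A, wt U p A * f A = ∑ A ∈ U.powerset, p ^ A.card * (1 - p) ^ (U.card - A.card) * f A := by
  rw [← Finset.sum_subset (Finset.subset_univ U.powerset)]
  · refine Finset.sum_congr rfl fun A hA => ?_
    rw [wt, if_pos (Finset.mem_powerset.1 hA)]
  · intro A _ hA
    rw [wt, if_neg (fun h => hA (Finset.mem_powerset.2 h)), zero_mul]

lemma sum_wt_one {α : Type*} [Fintype α] [DecidableEq α] (U : Finset α) (p : ℝ) :
    ∑ A, wt U p A = 1 := by
  have := sum_wt U p (fun _ => 1)
  simp only [mul_one] at this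
  rw [this, Finset.sum_pow_mul_eq_add_pow]
  simp

lemma sum_wt_contains {α : Type*} [Fintype α] [DecidableEq α] (U T : Finset α) (hT : T ⊆ U)
    (p : ℝ) : ∑ A, wt U p A * (if T ⊆ A then 1 else 0) = p ^ T.card := by
  rw [sum_wt]
  simp only [mul_ite, mul_one, mul_zero]
  rw [← Finset.sum_filter]
  have h1 : p ^ T.card = p ^ T.card * ∑ A ∈ (U \ T).powerset,
      p ^ A.card * (1 - p) ^ ((U \ T).card - A.card) := by
    rw [Finset.sum_pow_mul_eq_add_pow]; simp
  rw [h1, Finset.mul_sum]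
  symm
  refine Finset.sum_bij' (fun A _ => T ∪ A) (fun A _ => A \ T) ?_ ?_ ?_ ?_ ?_
  · intro A hA
    rw [Finset.mem_powerset] at hA
    simp only [Finset.mem_filter, Finset.mem_powerset]
    refine ⟨Finset.union_subset hT (hA.trans Finset.sdiff_subset), Finset.subset_union_left⟩
  · intro A hA
    simp only [Finset.mem_filter, Finset.mem_powerset] at hA
    rw [Finset.mem_powerset]
    exact Finset.sdiff_subset_sdiff hA.1 le_rfl
  · intro A hA
    rw [Finset.mem_powerset] at hA
    ext x
    have := @hA x
    simp only [Finset.mem_sdiff, Finset.mem_union] at *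
    tauto
  · intro A hA
    simp only [Finset.mem_filter, Finset.mem_powerset] at hA
    exact Finset.union_sdiff_of_subset hA.2
  · intro A hA
    rw [Finset.mem_powerset] at hA
    have hd : Disjoint T A := by
      rw [Finset.disjoint_right]
      intro x hx
      exact (Finset.mem_sdiff.1 (hA hx)).2
    rw [Finset.card_union_of_disjoint hd, Finset.card_sdiff_of_subset hT, pow_add, Nat.sub_sub]
    ring

lemma wt_logmod {α : Type*} [DecidableEq α] (U : Finset α) {p : ℝ} (h0 : 0 ≤ p) (h1 : p ≤ 1)
    (A B : Finset α) : wt U p A * wt U p B ≤ wt U p (A ∪ B) * wt U p (A ∩ B) := by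
  by_cases hA : A ⊆ U
  · by_cases hB : B ⊆ U
    · have hu : A ∪ B ⊆ U := Finset.union_subset hA hB
      have hi : A ∩ B ⊆ U := Finset.inter_subset_left.trans hA
      unfold wt
      rw [if_pos hA, if_pos hB, if_pos hu, if_pos hi]
      have e := Finset.card_union_add_card_inter A B
      have a1 := Finset.card_le_card hA
      have a2 := Finset.card_le_card hB
      have a3 := Finset.card_le_card hu
      have a4 := Finset.card_le_card hi
      rw [mul_mul_mul_comm, mul_mul_mul_comm (p ^ (A ∪ B).card), ← pow_add, ← pow_add, ← pow_add,
        ← pow_add, e]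
      have : U.card - A.card + (U.card - B.card)
          = U.card - (A ∪ B).card + (U.card - (A ∩ B).card) := by omega
      rw [this]
    · have : wt U p B = 0 := by rw [wt, if_neg hB]
      rw [this, mul_zero]
      exact mul_nonneg (wt_nonneg U h0 h1 _) (wt_nonneg U h0 h1 _)
  · have : wt U p A = 0 := by rw [wt, if_neg hA]
    rw [this, zero_mul]
    exact mul_nonneg (wt_nonneg U h0 h1 _) (wt_nonneg U h0 h1 _)

/-- Harris' inequality for two decreasing functions. -/
lemma harris_two {α : Type*} [Fintype α] [DecidableEq α] (U : Finset α) {p : ℝ} (h0 : 0 ≤ p)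
    (h1 : p ≤ 1) (f g : Finset α → ℝ) (hf : Antitone f) (hg : Antitone g) (hf0 : 0 ≤ f)
    (hg0 : 0 ≤ g) :
    (∑ A, wt U p A * f A) * (∑ A, wt U p A * g A) ≤ ∑ A, wt U p A * (f A * g A) := by
  have key := fkg (α := (Finset α)ᵒᵈ) (β := ℝ) (μ := fun A => wt U p (OrderDual.ofDual A))
    (f := fun A => f (OrderDual.ofDual A)) (g := fun A => g (OrderDual.ofDual A))
    (fun A => wt_nonneg U h0 h1 _) (fun A => hf0 _) (fun A => hg0 _)
    (fun A B h => hf h) (fun A B h => hg h)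
    (fun A B => wt_logmod U h0 h1 _ _)
  have e : ∀ F : Finset α → ℝ, ∑ A : (Finset α)ᵒᵈ, F (OrderDual.ofDual A) = ∑ A, F A :=
    fun F => Equiv.sum_comp OrderDual.ofDual F
  rw [e (fun A => wt U p A * f A), e (fun A => wt U p A * g A), e (fun A => wt U p A),
    e (fun A => wt U p A * (f A * g A)), sum_wt_one, one_mul] at key
  exact key

lemma harris_many {α ι : Type*} [Fintype α] [DecidableEq α] [DecidableEq ι] (U : Finset α) {p : ℝ}
    (h0 : 0 ≤ p) (h1 : p ≤ 1) (I : Finset ι) (T : ι → Finset α)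
    (hT : ∀ i ∈ I, T i ⊆ U ∧ (T i).card = 3) :
    (1 - p ^ 3) ^ I.card ≤ ∑ A, wt U p A * ∏ i ∈ I, (if T i ⊆ A then (0 : ℝ) else 1) := by
  have anti : ∀ i, Antitone (fun A => if T i ⊆ A then (0 : ℝ) else 1) := by
    intro i A B h
    dsimp only
    by_cases hA : T i ⊆ A
    · rw [if_pos hA, if_pos (hA.trans h)]
    · rw [if_neg hA]; split_ifs <;> norm_num
  have nn : ∀ i A, 0 ≤ (if T i ⊆ A then (0 : ℝ) else 1) := by
    intro i A; split_ifs <;> norm_num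
  induction I using Finset.induction_on with
  | empty => simp [sum_wt_one]
  | insert a I ha ih =>
    rw [Finset.card_insert_of_notMem ha, pow_succ']
    have hI := ih (fun i hi => hT i (Finset.mem_insert_of_mem hi))
    obtain ⟨hU, h3⟩ := hT a (Finset.mem_insert_self _ _)
    have e1 : ∑ A, wt U p A * (if T a ⊆ A then (0 : ℝ) else 1) = 1 - p ^ 3 := by
      have c := sum_wt_contains U (T a) hU p
      rw [h3] at c
      rw [← c, eq_sub_iff_add_eq, ← Finset.sum_add_distrib]
      conv_rhs => rw [← sum_wt_one U p]
      refine Finset.sum_congr rfl fun A _ => ?_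
      split_ifs <;> ring
    have hp3 : 0 ≤ 1 - p ^ 3 := by
      have := pow_le_one₀ (n := 3) h0 h1
      linarith
    have := harris_two U h0 h1 (fun A => if T a ⊆ A then (0 : ℝ) else 1)
      (fun A => ∏ i ∈ I, (if T i ⊆ A then (0 : ℝ) else 1)) (anti a)
      (fun A B h => Finset.prod_le_prod (fun i _ => nn i B) (fun i _ => anti i h))
      (fun A => nn a A) (fun A => Finset.prod_nonneg fun i _ => nn i A)
    simp only [Finset.prod_insert ha]
    refine le_trans ?_ this
    rw [e1]
    exact mul_le_mul_of_nonneg_left hI hp3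

lemma harris_final {α ι : Type*} [Fintype α] [DecidableEq α] [DecidableEq ι] (U : Finset α) {p : ℝ}
    (h0 : 0 ≤ p) (h1 : p ≤ 1) (I : Finset ι) (T : ι → Finset α)
    (hT : ∀ i ∈ I, T i ⊆ U ∧ (T i).card = 3) :
    (1 - p ^ 3) ^ I.card ≤ ∑ A ∈ U.powerset.filter (fun A => ∀ i ∈ I, ¬ T i ⊆ A),
      p ^ A.card * (1 - p) ^ (U.card - A.card) := by
  refine (harris_many U h0 h1 I T hT).trans (le_of_eq ?_)
  rw [sum_wt, Finset.sum_filter]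
  refine Finset.sum_congr rfl fun A _ => ?_
  by_cases h : ∀ i ∈ I, ¬ T i ⊆ A
  · rw [if_pos h, Finset.prod_eq_one, mul_one]
    intro i hi
    rw [if_neg (h i hi)]
  · rw [if_neg h]
    push Not at h
    obtain ⟨i, hi, hi'⟩ := h
    rw [Finset.prod_eq_zero hi (by rw [if_pos hi']), mul_zero]

/-- The partitions of `S` into triples. -/
def triParts {V : Type*} [Fintype V] [DecidableEq V] (S : Finset V) : Finset (Finset (Finset V)) :=
  Finset.univ.filter (fun P => (∀ t ∈ P, t.card = 3) ∧
    (P : Set (Finset V)).PairwiseDisjoint id ∧ P.biUnion id = S)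

lemma mem_triParts {V : Type*} [Fintype V] [DecidableEq V] {S : Finset V} {P : Finset (Finset V)} :
    P ∈ triParts S ↔ (∀ t ∈ P, t.card = 3) ∧
    (P : Set (Finset V)).PairwiseDisjoint id ∧ P.biUnion id = S := by
  simp [triParts]

lemma triParts_card {V : Type*} [Fintype V] [DecidableEq V] (m : ℕ) : ∀ S : Finset V, S.card = 3 * m →
    Nat.factorial (3 * m) ≤ (triParts S).card * (6 ^ m * Nat.factorial m) := by
  induction m with
  | zero =>
    intro S hS
    have hS : S = ∅ := Finset.card_eq_zero.1 (by simpa using hS)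
    have : (∅ : Finset (Finset V)) ∈ triParts S := by
      rw [mem_triParts]; simp [hS]
    have := Finset.card_pos.2 ⟨_, this⟩
    simp only [Nat.mul_zero, Nat.factorial_zero, pow_zero, mul_one]
    exact this
  | succ m ih =>
    intro S hS
    obtain ⟨a, ha⟩ : S.Nonempty := Finset.card_pos.1 (by omega)
    have hE : (S.erase a).card = 3 * m + 2 := by rw [Finset.card_erase_of_mem ha]; omega
    have hcard : (((S.erase a).powersetCard 2).sigma
        (fun q => triParts ((S.erase a) \ q))).card ≤ (triParts S).card := by
      have hmem : ∀ x ∈ ((S.erase a).powersetCard 2).sigma (fun q => triParts ((S.erase a) \ q)),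
          x.1 ⊆ S.erase a ∧ x.1.card = 2 ∧ (∀ t ∈ x.2, t.card = 3) ∧
          (x.2 : Set (Finset V)).PairwiseDisjoint id ∧ x.2.biUnion id = (S.erase a) \ x.1 ∧
          (∀ t ∈ x.2, a ∉ t) ∧ a ∉ x.1 ∧ insert a x.1 ∉ x.2 := by
        intro x hx
        rw [Finset.mem_sigma, Finset.mem_powersetCard, mem_triParts] at hx
        obtain ⟨⟨h1, h2⟩, h3, h4, h5⟩ := hx
        have h6 : ∀ t ∈ x.2, a ∉ t := by
          intro t ht hat
          have : a ∈ x.2.biUnion id := Finset.mem_biUnion.2 ⟨t, ht, hat⟩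
          rw [h5] at this
          simp at this
        refine ⟨h1, h2, h3, h4, h5, h6, fun h => by simpa using h1 h, fun h => ?_⟩
        exact h6 _ h (Finset.mem_insert_self _ _)
      refine Finset.card_le_card_of_injOn (fun x => insert (insert a x.1) x.2) ?_ ?_
      · intro x hx
        obtain ⟨h1, h2, h3, h4, h5, h6, h7, h8⟩ := hmem x hx
        rw [Finset.mem_coe, mem_triParts]
        refine ⟨?_, ?_, ?_⟩
        · intro t ht
          rcases Finset.mem_insert.1 ht with rfl | ht
          · rw [Finset.card_insert_of_notMem h7, h2]
          · exact h3 t ht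
        · rw [Finset.coe_insert, Set.pairwiseDisjoint_insert]
          refine ⟨h4, fun t ht _ => ?_⟩
          simp only [id]
          rw [Finset.disjoint_insert_left]
          refine ⟨h6 t ht, ?_⟩
          rw [Finset.disjoint_right]
          intro v hv hv'
          have : v ∈ x.2.biUnion id := Finset.mem_biUnion.2 ⟨t, ht, hv⟩
          rw [h5] at this
          exact (Finset.mem_sdiff.1 this).2 hv'
        · rw [Finset.biUnion_insert, h5]
          simp only [id]
          rw [Finset.insert_union, Finset.union_sdiff_of_subset h1, Finset.insert_erase ha]
      · intro x hx y hy hxy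
        obtain ⟨h1, h2, h3, h4, h5, h6, h7, h8⟩ := hmem x hx
        obtain ⟨g1, g2, g3, g4, g5, g6, g7, g8⟩ := hmem y hy
        dsimp only at hxy
        have e1 : insert a x.1 = insert a y.1 := by
          have : insert a x.1 ∈ insert (insert a y.1) y.2 := by
            rw [← hxy]; exact Finset.mem_insert_self _ _
          rcases Finset.mem_insert.1 this with h | h
          · exact h
          · exact absurd (Finset.mem_insert_self _ _) (g6 _ h)
        have e2 : x.1 = y.1 := by
          rw [← Finset.erase_insert h7, e1, Finset.erase_insert g7]
        have e3 : x.2 = y.2 := by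
          rw [← Finset.erase_insert h8, hxy, e1, Finset.erase_insert g8]
        exact Sigma.ext e2 (heq_of_eq e3)
    rw [Finset.card_sigma] at hcard
    have hsum : ((3 * m + 2).choose 2) * Nat.factorial (3 * m) ≤
        (triParts S).card * (6 ^ m * Nat.factorial m) := by
      refine le_trans ?_ (Nat.mul_le_mul_right _ hcard)
      rw [Finset.sum_mul, ← hE, ← Finset.card_powersetCard, ← smul_eq_mul]
      refine Finset.card_nsmul_le_sum _ _ _ fun q hq => ?_
      rw [Finset.mem_powersetCard] at hq
      refine ih _ ?_
      rw [Finset.card_sdiff_of_subset hq.1]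
      omega
    have hch : 2 * (3 * m + 2).choose 2 = (3 * m + 2) * (3 * m + 1) := by
      rw [Nat.choose_two_right]
      have : Even ((3 * m + 2) * (3 * m + 2 - 1)) := Nat.even_mul_pred_self _
      exact Nat.two_mul_div_two_of_even this
    have e : 3 * (m + 1) = 3 * m + 1 + 1 + 1 := by ring
    rw [e, Nat.factorial_succ, Nat.factorial_succ, Nat.factorial_succ, Nat.factorial_succ, pow_succ]
    calc (3 * m + 1 + 1 + 1) * ((3 * m + 1 + 1) * ((3 * m + 1) * Nat.factorial (3 * m)))
        = 3 * (m + 1) * ((3 * m + 2) * (3 * m + 1)) * Nat.factorial (3 * m) := by ring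
      _ = 6 * (m + 1) * ((3 * m + 2).choose 2 * Nat.factorial (3 * m)) := by rw [← hch]; ring
      _ ≤ 6 * (m + 1) * ((triParts S).card * (6 ^ m * Nat.factorial m)) :=
          Nat.mul_le_mul_left _ hsum
      _ = _ := by ring

lemma analytic_bound (l : ℝ) (hl : 0 < l) : ∃ n₀ : ℕ, ∀ n ≥ n₀, 0 < n ∧ l / n ≤ 1 ∧
    ∀ m ≤ n, (9 / 10) * Real.exp (-(l ^ 3 / 6)) ≤ (1 - (l / n) ^ 3) ^ (m.choose 3) := by
  have t0 : Tendsto (fun n : ℕ => l / (n : ℝ)) atTop (nhds 0) :=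
    tendsto_const_div_atTop_nhds_zero_nat l
  have t1 : Tendsto (fun n : ℕ => Real.exp (-(l ^ 3 / 6) / (1 - (l / (n : ℝ)) ^ 3))) atTop
      (nhds (Real.exp (-(l ^ 3 / 6) / (1 - 0 ^ 3)))) := by
    refine (Real.continuous_exp.tendsto _).comp ?_
    refine Tendsto.div tendsto_const_nhds (tendsto_const_nhds.sub (t0.pow 3)) (by norm_num)
  have hlt : (9 / 10) * Real.exp (-(l ^ 3 / 6)) < Real.exp (-(l ^ 3 / 6) / (1 - 0 ^ 3)) := by
    have : -(l ^ 3 / 6) / (1 - 0 ^ 3) = -(l ^ 3 / 6) := by norm_num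
    rw [this]
    have := Real.exp_pos (-(l ^ 3 / 6))
    linarith
  have ev := ((t1.eventually (lt_mem_nhds hlt)).and
    (t0.eventually (gt_mem_nhds one_pos))).and (eventually_gt_atTop 0)
  obtain ⟨n₀, h⟩ := eventually_atTop.1 ev
  refine ⟨n₀, fun n hn => ?_⟩
  obtain ⟨⟨h1, h2⟩, h3⟩ := h n hn
  refine ⟨h3, h2.le, fun m hm => ?_⟩
  have hn0 : (0 : ℝ) < n := by exact_mod_cast h3
  have hp : 0 < l / n := by positivity
  have hx1 : (l / (n : ℝ)) ^ 3 < 1 := pow_lt_one₀ hp.le h2 (by norm_num)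
  set x := (l / (n : ℝ)) ^ 3 with hx
  have hx0 : 0 < x := by positivity
  have hpos : 0 < 1 - x := by linarith
  refine h1.le.trans ?_
  have hlog : -(x / (1 - x)) ≤ Real.log (1 - x) := by
    refine le_trans (le_of_eq ?_) (Real.one_sub_inv_le_log_of_pos hpos)
    field_simp
    ring
  have hch : (m.choose 3 : ℝ) ≤ (n : ℝ) ^ 3 / 6 := by
    have := Nat.choose_le_pow_div (α := ℝ) 3 m
    have h6 : ((Nat.factorial 3 : ℕ) : ℝ) = 6 := by norm_num [Nat.factorial]
    rw [h6] at this
    refine this.trans ?_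
    have : (m : ℝ) ≤ n := by exact_mod_cast hm
    gcongr
  have : (1 - x) ^ (m.choose 3) = Real.exp (m.choose 3 * Real.log (1 - x)) := by
    rw [Real.exp_nat_mul, Real.exp_log hpos]
  rw [this, Real.exp_le_exp]
  have hc0 : (0 : ℝ) ≤ m.choose 3 := Nat.cast_nonneg _
  have q : 0 ≤ x / (1 - x) := by positivity
  calc -(l ^ 3 / 6) / (1 - x) = (n : ℝ) ^ 3 / 6 * -(x / (1 - x)) := by
        have : l ^ 3 = n ^ 3 * x := by rw [hx]; field_simp
        rw [this]; ring
    _ ≤ m.choose 3 * -(x / (1 - x)) := by nlinarith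
    _ ≤ _ := mul_le_mul_of_nonneg_left hlog hc0

lemma mem_filter_any {α : Type*} {q : α → Prop} {i : DecidablePred q} {s : Finset α} {a : α} :
    a ∈ @Finset.filter α q i s ↔ a ∈ s ∧ q a := Finset.mem_filter

/-- The non-loop pairs inside `s`. -/
def pairsIn {n : ℕ} (s : Finset (Fin n)) : Finset (Sym2 (Fin n)) :=
  s.offDiag.image Sym2.mk.uncurry

lemma mem_pairsIn {n : ℕ} (s : Finset (Fin n)) (u v : Fin n) :
    s(u, v) ∈ pairsIn s ↔ u ∈ s ∧ v ∈ s ∧ u ≠ v := by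
  unfold pairsIn
  rw [Finset.mem_image]
  constructor
  · rintro ⟨⟨a, b⟩, h, h'⟩
    rw [Finset.mem_offDiag] at h
    simp only [Function.uncurry_apply_pair, Sym2.eq_iff] at h'
    obtain ⟨h1, h2, h3⟩ := h
    rcases h' with ⟨rfl, rfl⟩ | ⟨rfl, rfl⟩
    · exact ⟨h1, h2, h3⟩
    · exact ⟨h2, h1, fun e => h3 e.symm⟩
  · intro h
    exact ⟨(u, v), Finset.mem_offDiag.2 h, rfl⟩

lemma pairsIn_card {n : ℕ} (s : Finset (Fin n)) : (pairsIn s).card = s.card.choose 2 :=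
  Sym2.card_image_offDiag s

lemma pairsIn_mono {n : ℕ} {s t : Finset (Fin n)} (h : s ⊆ t) : pairsIn s ⊆ pairsIn t :=
  Finset.image_subset_image (Finset.offDiag_mono h)

/-- The edges of a family of triples. -/
def partEdges {n : ℕ} (P : Finset (Finset (Fin n))) : Finset (Sym2 (Fin n)) :=
  P.biUnion pairsIn

lemma mem_partEdges {n : ℕ} (P : Finset (Finset (Fin n))) (u v : Fin n) :
    s(u, v) ∈ partEdges P ↔ ∃ t ∈ P, u ∈ t ∧ v ∈ t ∧ u ≠ v := by
  simp only [partEdges, Finset.mem_biUnion, mem_pairsIn]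

lemma partEdges_subset {n : ℕ} {S : Finset (Fin n)} {P : Finset (Finset (Fin n))}
    (hP : P ∈ triParts S) : partEdges P ⊆ pairsIn S := by
  obtain ⟨_, _, h3⟩ := mem_triParts.1 hP
  refine Finset.biUnion_subset.2 fun t ht => pairsIn_mono ?_
  rw [← h3]
  exact fun v hv => Finset.mem_biUnion.2 ⟨t, ht, hv⟩

lemma pairsIn_disjoint {n : ℕ} {s t : Finset (Fin n)} (h : Disjoint s t) :
    Disjoint (pairsIn s) (pairsIn t) := by
  rw [Finset.disjoint_left]
  intro e
  induction e using Sym2.ind with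
  | _ u v =>
    rw [mem_pairsIn, mem_pairsIn]
    intro h1 h2
    exact Finset.disjoint_left.1 h h1.1 h2.1

lemma partEdges_card {n : ℕ} {S : Finset (Fin n)} {P : Finset (Finset (Fin n))}
    (hP : P ∈ triParts S) : (partEdges P).card = S.card := by
  obtain ⟨h1, h2, h3⟩ := mem_triParts.1 hP
  rw [← h3, partEdges, Finset.card_biUnion, Finset.card_biUnion]
  · refine Finset.sum_congr rfl fun t ht => ?_
    rw [pairsIn_card, id, h1 t ht]
    rfl
  · exact fun s hs t ht hst => h2 hs ht hst
  · exact fun s hs t ht hst => pairsIn_disjoint (h2 hs ht hst)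

lemma partEdges_inj {n : ℕ} {S : Finset (Fin n)} {P Q : Finset (Finset (Fin n))}
    (hP : P ∈ triParts S) (hQ : Q ∈ triParts S) (h : partEdges P = partEdges Q) : P ⊆ Q := by
  obtain ⟨h1, h2, h3⟩ := mem_triParts.1 hP
  obtain ⟨g1, g2, g3⟩ := mem_triParts.1 hQ
  intro t ht
  obtain ⟨v, hv⟩ : t.Nonempty := Finset.card_pos.1 (by rw [h1 t ht]; norm_num)
  have hvS : v ∈ Q.biUnion id := by
    rw [g3, ← h3]
    exact Finset.mem_biUnion.2 ⟨t, ht, hv⟩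
  obtain ⟨t', ht', hv'⟩ := Finset.mem_biUnion.1 hvS
  have hsub : t ⊆ t' := by
    intro u hu
    by_cases huv : u = v
    · rw [huv]; exact hv'
    · have : s(u, v) ∈ partEdges Q := by
        rw [← h, mem_partEdges]
        exact ⟨t, ht, hu, hv, huv⟩
      obtain ⟨r, hr, hur, hvr, _⟩ := (mem_partEdges _ _ _).1 this
      have : r = t' := by
        by_contra hne
        exact Finset.disjoint_left.1 (g2 hr ht' hne) hvr hv'
      rw [← this]; exact hur
  rw [Finset.eq_of_subset_of_card_le hsub (by rw [h1 t ht, g1 t' ht'])]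
  exact ht'

/-- The graph with edge set `partEdges P ∪ B`. -/
def gr {n : ℕ} (P : Finset (Finset (Fin n))) (B : Finset (Sym2 (Fin n))) :
    SimpleGraph (Fin n) :=
  SimpleGraph.fromEdgeSet ((partEdges P ∪ B : Finset (Sym2 (Fin n))) : Set (Sym2 (Fin n)))

lemma gr_edges {n : ℕ} {S : Finset (Fin n)} {P : Finset (Finset (Fin n))}
    {B : Finset (Sym2 (Fin n))} (hP : P ∈ triParts S) (hB : B ⊆ pairsIn Sᶜ) :
    Finset.univ.filter (fun e => e ∈ (gr P B).edgeSet) = partEdges P ∪ B := by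
  ext e
  induction e using Sym2.ind with
  | _ u v =>
    rw [Finset.mem_filter, SimpleGraph.mem_edgeSet, gr, SimpleGraph.fromEdgeSet_adj,
      Finset.mem_coe]
    refine ⟨fun h => h.2.1, fun h => ⟨Finset.mem_univ _, h, ?_⟩⟩
    rcases Finset.mem_union.1 h with h | h
    · exact ((mem_pairsIn _ _ _).1 (partEdges_subset hP h)).2.2
    · exact ((mem_pairsIn _ _ _).1 (hB h)).2.2

lemma disj_edges {n : ℕ} {S : Finset (Fin n)} {P : Finset (Finset (Fin n))}
    {B : Finset (Sym2 (Fin n))} (hP : P ∈ triParts S) (hB : B ⊆ pairsIn Sᶜ) :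
    Disjoint (partEdges P) B :=
  Disjoint.mono (partEdges_subset hP) hB (pairsIn_disjoint disjoint_compl_right)

lemma choose_split (k r : ℕ) : (k + r).choose 2 = k.choose 2 + r.choose 2 + r * k := by
  have h1 := Nat.add_choose_eq k r 2
  rw [h1, Finset.Nat.sum_antidiagonal_eq_sum_range_succ_mk]
  simp [Finset.sum_range_succ]
  ring

lemma le_choose_two {k : ℕ} (h : 3 ∣ k) : k ≤ k.choose 2 := by
  rcases Nat.eq_zero_or_pos k with rfl | hk
  · simp
  · have : 3 ≤ k := Nat.le_of_dvd hk h
    rw [Nat.choose_two_right, Nat.le_div_iff_mul_le (by norm_num)]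
    exact Nat.mul_le_mul_left _ (by omega)

lemma gr_prob {n : ℕ} {S : Finset (Fin n)} {P : Finset (Finset (Fin n))}
    {B : Finset (Sym2 (Fin n))} (hP : P ∈ triParts S) (hB : B ⊆ pairsIn Sᶜ) (h3 : 3 ∣ S.card)
    (p : ℝ) :
    graphProb n p (gr P B) = p ^ S.card *
      (1 - p) ^ (S.card.choose 2 - S.card + (n - S.card) * S.card) *
      (p ^ B.card * (1 - p) ^ ((pairsIn Sᶜ).card - B.card)) := by
  have he : edgeCount (gr P B) = S.card + B.card := by
    rw [edgeCount, gr_edges hP hB, Finset.card_union_of_disjoint (disj_edges hP hB),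
      partEdges_card hP]
  have hc : (pairsIn Sᶜ).card = (n - S.card).choose 2 := by
    rw [pairsIn_card, Finset.card_compl, Fintype.card_fin]
  have hSn : S.card ≤ n := by simpa using Finset.card_le_univ S
  have hs := choose_split S.card (n - S.card)
  rw [Nat.add_sub_cancel' hSn] at hs
  have hb := Finset.card_le_card hB
  have hk := le_choose_two h3
  rw [graphProb, he]
  have : n.choose 2 - (S.card + B.card) = (S.card.choose 2 - S.card + (n - S.card) * S.card) +
      ((pairsIn Sᶜ).card - B.card) := by
    rw [hc] at hb ⊢
    omega
  rw [this, pow_add, pow_add]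
  ring

/-- Triangle-free edge sets on the complement of `S`. -/
def triFreeSets {n : ℕ} (S : Finset (Fin n)) : Finset (Finset (Sym2 (Fin n))) :=
  (pairsIn Sᶜ).powerset.filter (fun A => ∀ t ∈ Sᶜ.powersetCard 3, ¬ pairsIn t ⊆ A)

lemma split_union {α : Type*} [DecidableEq α] {X Y B C s t : Finset α} (e : X ∪ B = Y ∪ C)
    (hX : X ⊆ s) (hY : Y ⊆ s) (hB : B ⊆ t) (hC : C ⊆ t) (hd : Disjoint s t) : X = Y ∧ B = C := by
  have dis := Finset.disjoint_left.1 hd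
  have key : ∀ x, (x ∈ X ↔ x ∈ Y) ∧ (x ∈ B ↔ x ∈ C) := by
    intro x
    have hx := Finset.ext_iff.1 e x
    rw [Finset.mem_union, Finset.mem_union] at hx
    have a1 := @hX x
    have a2 := @hY x
    have a3 := @hB x
    have a4 := @hC x
    have a5 := @dis x
    clear e hX hY hB hC hd dis
    tauto
  exact ⟨Finset.ext fun x => (key x).1, Finset.ext fun x => (key x).2⟩

lemma prob_ge {n : ℕ} {p : ℝ} (hp0 : 0 ≤ p) (hq0 : 0 ≤ 1 - p) (A : Set (SimpleGraph (Fin n)))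
    (F : Finset (SimpleGraph (Fin n))) (hF : ∀ G ∈ F, G ∈ A) :
    ∑ G ∈ F, graphProb n p G ≤ prob n p A := by
  have hnn : ∀ G, 0 ≤ graphProb n p G := by
    intro G
    unfold graphProb
    positivity
  unfold prob
  have : ∑ G ∈ F, graphProb n p G = ∑ G ∈ F, if G ∈ A then graphProb n p G else 0 := by
    refine Finset.sum_congr rfl fun G hG => ?_
    rw [if_pos (hF G hG)]
  rw [this]
  refine Finset.sum_le_sum_of_subset_of_nonneg (Finset.subset_univ _) fun G _ _ => ?_
  split_ifs
  · exact hnn G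
  · exact le_rfl

lemma gr_injOn {n : ℕ} (S : Finset (Fin n)) :
    Set.InjOn (fun x : Finset (Finset (Fin n)) × Finset (Sym2 (Fin n)) =>
        gr x.1 x.2) ((triParts S ×ˢ triFreeSets S : Finset _) : Set _) := by
      have hBsub : ∀ B ∈ triFreeSets S, B ⊆ pairsIn Sᶜ := fun B hB =>
        Finset.mem_powerset.1 (Finset.mem_filter.1 hB).1
      rintro ⟨P, B⟩ hx ⟨Q, C⟩ hy hxy
      rw [Finset.mem_coe, Finset.mem_product] at hx hy
      obtain ⟨hP, hB⟩ := hx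
      obtain ⟨hQ, hC⟩ := hy
      dsimp only at hP hB hQ hC hxy
      replace hB := hBsub _ hB
      replace hC := hBsub _ hC
      have e : partEdges P ∪ B = partEdges Q ∪ C := by
        rw [← gr_edges hP hB, ← gr_edges hQ hC, hxy]
      obtain ⟨e1, e2⟩ := split_union e (partEdges_subset hP) (partEdges_subset hQ) hB hC
        (pairsIn_disjoint (disjoint_compl_right : Disjoint S Sᶜ))
      have e3 : P = Q := Finset.Subset.antisymm (partEdges_inj hP hQ e1)
        (partEdges_inj hQ hP e1.symm)
      rw [e2, e3]

lemma prob_lower_s13 {n : ℕ} (S : Finset (Fin n)) (p : ℝ) (hp0 : 0 ≤ p) (hq0 : 0 ≤ 1 - p) :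
    ∑ x ∈ triParts S ×ˢ triFreeSets S, graphProb n p (gr x.1 x.2) ≤ prob n p
          {H | (∃ P : Finset (Finset (Fin n)),
                  (∀ t ∈ P, t.card = 3) ∧
                  (P : Set (Finset (Fin n))).PairwiseDisjoint id ∧
                  P.biUnion id = S ∧
                  (∀ u v : Fin n, u ∈ S → v ∈ S →
                    (H.Adj u v ↔ ∃ t ∈ P, u ∈ t ∧ v ∈ t ∧ u ≠ v))) ∧
               triangleCount (H.deleteEdges {e : Sym2 (Fin n) | ∀ v ∈ e, v ∈ S}) = 0} := by
    have hBsub : ∀ B ∈ triFreeSets S, B ⊆ pairsIn Sᶜ := fun B hB =>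
      Finset.mem_powerset.1 (Finset.mem_filter.1 hB).1
    rw [← Finset.sum_image (f := fun G => graphProb n p G) (gr_injOn S)]
    refine prob_ge hp0 hq0 _ _ ?_
    · intro G hG
      obtain ⟨⟨P, B⟩, hx, rfl⟩ := Finset.mem_image.1 hG
      rw [Finset.mem_product] at hx
      obtain ⟨hP, hB⟩ := hx
      dsimp only at hP hB ⊢
      have hBs := hBsub _ hB
      obtain ⟨h1, h2, h3⟩ := mem_triParts.1 hP
      refine ⟨⟨P, h1, h2, h3, ?_⟩, ?_⟩
      · intro u v hu hv
        rw [← mem_partEdges, gr, SimpleGraph.fromEdgeSet_adj, Finset.mem_coe, Finset.mem_union]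
        constructor
        · rintro ⟨h | h, _⟩
          · exact h
          · have := ((mem_pairsIn _ _ _).1 (hBs h)).1
            exact absurd hu (Finset.mem_compl.1 this)
        · intro h
          exact ⟨Or.inl h, ((mem_pairsIn _ _ _).1 (partEdges_subset hP h)).2.2⟩
      · rw [triangleCount, Finset.card_eq_zero]
        refine Finset.eq_empty_of_forall_notMem fun t ht' => ?_
        have ht := (mem_filter_any.1 ht').2
        have hadj : ∀ u ∈ t, ∀ v ∈ t, u ≠ v → s(u, v) ∈ B := by
          intro u hu v hv huv
          have := ht.isClique hu hv huv
          rw [SimpleGraph.deleteEdges_adj, gr, SimpleGraph.fromEdgeSet_adj, Finset.mem_coe,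
            Finset.mem_union] at this
          obtain ⟨⟨h | h, _⟩, h'⟩ := this
          · exfalso
            apply h'
            have := (mem_pairsIn _ _ _).1 (partEdges_subset hP h)
            intro w hw
            rcases Sym2.mem_iff.1 hw with rfl | rfl
            · exact this.1
            · exact this.2.1
          · exact h
        have hsub : pairsIn t ⊆ B := by
          intro e
          induction e using Sym2.ind with
          | _ u v =>
            rw [mem_pairsIn]
            rintro ⟨hu, hv, huv⟩
            exact hadj u hu v hv huv
        refine (Finset.mem_filter.1 hB).2 t ?_ hsub
        rw [Finset.mem_powersetCard]
        refine ⟨fun u hu => ?_, ht.card_eq⟩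
        obtain ⟨v, hv, hvu⟩ := Finset.exists_mem_ne (by rw [ht.card_eq]; norm_num) u
        exact ((mem_pairsIn _ _ _).1 (hBs (hadj u hu v hv hvu.symm))).1

/-- **Only vertex-disjoint triangles: lower bound on `P(𝒯_S)`.** -/
theorem disjoint_triangles_event_bound (l : ℝ) (hl : 0 < l) :
    ∃ n₀ : ℕ, ∀ n ≥ n₀, ∀ k : ℕ, 3 ∣ k → ∀ S : Finset (Fin n), S.card = k →
      (Nat.factorial k : ℝ) / (6 ^ (k / 3) * Nat.factorial (k / 3)) *
            (l / n) ^ k * (1 - l / n) ^ (k.choose 2 - k + (n - k) * k) *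
            (9 / 10) * Real.exp (-(l ^ 3 / 6)) ≤
        prob n (l / n)
          {H | (∃ P : Finset (Finset (Fin n)),
                  (∀ t ∈ P, t.card = 3) ∧
                  (P : Set (Finset (Fin n))).PairwiseDisjoint id ∧
                  P.biUnion id = S ∧
                  (∀ u v : Fin n, u ∈ S → v ∈ S →
                    (H.Adj u v ↔ ∃ t ∈ P, u ∈ t ∧ v ∈ t ∧ u ≠ v))) ∧
               triangleCount (H.deleteEdges {e : Sym2 (Fin n) | ∀ v ∈ e, v ∈ S}) = 0} := by
  obtain ⟨n₀, hn₀⟩ := analytic_bound l hl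
  refine ⟨n₀, fun n hn k hk S hS => ?_⟩
  subst hS
  obtain ⟨hn0, hp1, han⟩ := hn₀ n hn
  have hp0 : 0 ≤ l / (n : ℝ) := by positivity
  set p : ℝ := l / (n : ℝ) with hp
  have hq0 : 0 ≤ 1 - p := by linarith
  have hBsub : ∀ B ∈ triFreeSets S, B ⊆ pairsIn Sᶜ := fun B hB =>
    Finset.mem_powerset.1 (Finset.mem_filter.1 hB).1
  -- Harris
  have hH : (9 / 10) * Real.exp (-(l ^ 3 / 6)) ≤
      ∑ B ∈ (triFreeSets S), p ^ B.card * (1 - p) ^ ((pairsIn Sᶜ).card - B.card) := by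
    refine (han (n - S.card) (Nat.sub_le _ _)).trans ?_
    have := harris_final (pairsIn Sᶜ) hp0 hp1 (Sᶜ.powersetCard 3) pairsIn (by
      intro t ht
      rw [Finset.mem_powersetCard] at ht
      exact ⟨pairsIn_mono ht.1, by rw [pairsIn_card, ht.2]; rfl⟩)
    rw [Finset.card_powersetCard, Finset.card_compl, Fintype.card_fin] at this
    refine this.trans (le_of_eq (Finset.sum_congr ?_ fun _ _ => rfl))
    ext A
    exact ⟨fun h => mem_filter_any.2 (mem_filter_any.1 h),
      fun h => mem_filter_any.2 (mem_filter_any.1 h)⟩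
  -- counting
  obtain ⟨m, hm⟩ := hk
  have hC : (Nat.factorial S.card : ℝ) / (6 ^ (S.card / 3) * Nat.factorial (S.card / 3)) ≤
      (triParts S).card := by
    have h := triParts_card m S hm
    have hdiv : S.card / 3 = m := by omega
    rw [hdiv, div_le_iff₀ (by positivity), hm]
    exact_mod_cast h
  -- the graphs
  have hmain := prob_lower_s13 S p hp0 hq0
  refine le_trans ?_ hmain
  have hsum : ∑ x ∈ triParts S ×ˢ (triFreeSets S), graphProb n p (gr x.1 x.2) =
      (triParts S).card * (p ^ S.card *
      (1 - p) ^ (S.card.choose 2 - S.card + (n - S.card) * S.card) *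
      ∑ B ∈ (triFreeSets S), p ^ B.card * (1 - p) ^ ((pairsIn Sᶜ).card - B.card)) := by
    rw [Finset.sum_product, ← nsmul_eq_mul]
    refine Finset.sum_eq_card_nsmul fun P hP => ?_
    rw [Finset.mul_sum]
    refine Finset.sum_congr rfl fun B hB => ?_
    exact gr_prob hP (hBsub B hB) ⟨m, hm⟩ p
  rw [hsum]
  have hw : 0 ≤ p ^ S.card * (1 - p) ^ (S.card.choose 2 - S.card + (n - S.card) * S.card) := by
    positivity
  calc _ = (Nat.factorial S.card : ℝ) / (6 ^ (S.card / 3) * Nat.factorial (S.card / 3)) *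
        (p ^ S.card * (1 - p) ^ (S.card.choose 2 - S.card + (n - S.card) * S.card) *
        ((9 / 10) * Real.exp (-(l ^ 3 / 6)))) := by ring
    _ ≤ _ := by
      refine mul_le_mul hC (mul_le_mul_of_nonneg_left hH hw) ?_ (Nat.cast_nonneg _)
      exact mul_nonneg hw (by positivity)
end
end

section
/- Every q-basic subgraph of the complete graph K_n has at most 3q edges. -/
open scoped BigOperators Classical
open Finset Filter

noncomputable section

/-- **Upper bound on edges in `q`-basic graphs.** -/
theorem qBasic_edge_bound {n q : ℕ} (G : SimpleGraph (Fin n)) (h : qBasic q G) :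
    edgeCount G ≤ 3 * q := by
  obtain ⟨hq, hdel⟩ := h
  set S := Finset.univ.filter
    (fun v : Fin n => ∃ u w : Fin n, G.Adj v u ∧ G.Adj v w ∧ G.Adj u w) with hS
  have hc : ∀ v : Fin n, ∃ p : Fin n × Fin n,
      v ∈ S → G.Adj v p.1 ∧ G.Adj v p.2 ∧ G.Adj p.1 p.2 := by
    intro v
    by_cases hv : v ∈ S
    · obtain ⟨u, w, h1⟩ := (Finset.mem_filter.mp hv).2
      exact ⟨(u, w), fun _ => h1⟩
    · exact ⟨(v, v), fun h1 => absurd h1 hv⟩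
  choose f hf using hc
  have hcard : S.card = q := by
    rw [← hq, hS, vT]
    congr!
  have hsub : (Finset.univ.filter (fun e : Sym2 (Fin n) => e ∈ G.edgeSet)) ⊆
      S.biUnion (fun v => {s(v, (f v).1), s(v, (f v).2), s((f v).1, (f v).2)}) := by
    intro e he
    have he' : e ∈ G.edgeSet := (Finset.mem_filter.mp he).2
    by_contra hne
    have hlt := hdel e he'
    have hle : S.card ≤ vT (G.deleteEdges {e}) := by
      unfold vT
      apply Finset.card_le_card
      intro v hv
      have hn : ¬ (e = s(v, (f v).1) ∨ e = s(v, (f v).2) ∨ e = s((f v).1, (f v).2)) := by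
        intro h1
        apply hne
        rw [Finset.mem_biUnion]
        exact ⟨v, hv, by simpa using h1⟩
      push Not at hn
      obtain ⟨h1, h2, h3⟩ := hf v hv
      simp only [Finset.mem_filter, Finset.mem_univ, true_and]
      refine ⟨(f v).1, (f v).2, ?_, ?_, ?_⟩ <;>
        rw [SimpleGraph.deleteEdges_adj, Set.mem_singleton_iff]
      · exact ⟨h1, fun h => hn.1 h.symm⟩
      · exact ⟨h2, fun h => hn.2.1 h.symm⟩
      · exact ⟨h3, fun h => hn.2.2 h.symm⟩
    omega
  calc edgeCount G ≤ _ := Finset.card_le_card hsub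
    _ ≤ S.card * 3 := Finset.card_biUnion_le_card_mul _ _ _ (fun v _ => Finset.card_le_three)
    _ = 3 * q := by rw [hcard, mul_comm]
end
end
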